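/- The only rational points on the smooth projective plane quartic curve C₄ : 7x³z + 3x²y² − 3xyz² + y³z − z⁴ = 0 are (1 : 0 : 0), (0 : 1 : 0), and (0 : 1 : 1). Equivalently, every triple of coprime integers (x, y, z), not all zero, satisfying 7x³z + 3x²y² − 3xyz² + y³z − z⁴ = 0 equals ±(1,0,0), ±(0,1,0), or ±(0,1,1). -/

import Mathlib

/-!
Let `K = ℚ(α)` with `α ^ 3 = 7`. A rational point of `C₄` gives a `K`-point of the elliptic curve
`E : η² = ξ (4 ξ² - 3 α² ξ + 4 α)`. The class group of `K` has odd order, its units are generated by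
`-1`, `2 - α` and squares, and `E` has good enough reduction away from `α` that the `ξ`-coordinate
of a `K`-point lies, up to squares, in `⟨α, 2 - α⟩`; the point is twice another one when `ξ` is a
square. On points coming from `C₄` the norm of `ξ` is a rational square, which leaves the classes of
`1` and `2 - α`; translation by the image of `(0 : 1 : 1)` exchanges these two.

Now localize at the prime of degree two above `2`. Halving repeatedly shows that a `K`-point near
the origin whose `ξ`-coordinate is a square leaves the origin along a single direction modulo that
prime. Sorting the triples `(x, y, z)` by parity, each point of `C₄` other than the three known ones
would produce a point of `E`, near the origin or near the image of `(0 : 1 : 1)`, in another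
direction or in a wrong square class modulo `4`.
-/

open NumberField

section Discriminant

open Polynomial Module

variable {K ι : Type*} [Field K] [NumberField K] [Fintype ι] [DecidableEq ι]

lemma discr_dvd_discr_of_card_eq_finrank (hι : Fintype.card ι = finrank ℚ K) (w : ι → 𝓞 K) :
    discr K ∣ Algebra.discr ℤ w := by
  let e : Free.ChooseBasisIndex ℤ (𝓞 K) ≃ ι := Fintype.equivOfCardEq <| by
    rw [hι, ← RingOfIntegers.rank, finrank_eq_card_chooseBasisIndex]
  let B := (RingOfIntegers.basis K).reindex e
  rw [← discr_eq_discr K B, ← B.toMatrix_map_vecMul w, Algebra.discr_of_matrix_vecMul]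
  exact dvd_mul_left _ _

lemma coe_discr_int (w : ι → 𝓞 K) :
    ((Algebra.discr ℤ w : ℤ) : ℚ) = Algebra.discr ℚ (fun i ↦ (w i : K)) := by
  rw [Algebra.discr_def, Algebra.discr_def, ← eq_intCast (algebraMap ℤ ℚ), RingHom.map_det]
  congr 1
  ext i j
  simp [Algebra.traceMatrix_apply, Algebra.traceForm_apply, Algebra.coe_trace_int]

end Discriminant

section PureCubic

open Polynomial Module

variable {K : Type*} [Field K] [NumberField K]

/-- `K = ℚ(α)` is the pure cubic field generated by the cube root `α` of the integer `m`. -/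
structure IsPureCubic (m : ℤ) (α : 𝓞 K) : Prop where
  minpoly_eq : minpoly ℚ (α : K) = X ^ 3 - C (m : ℚ)
  adjoin_eq_top : Algebra.adjoin ℚ {(α : K)} = ⊤

namespace IsPureCubic

variable {m : ℤ} {α : 𝓞 K}

lemma natDegree_minpoly (hα : IsPureCubic m α) : (minpoly ℚ (α : K)).natDegree = 3 := by
  rw [hα.minpoly_eq, natDegree_X_pow_sub_C]

lemma coe_pow_three (hα : IsPureCubic m α) : (α : K) ^ 3 = m := by
  have h := minpoly.aeval ℚ (α : K)
  rw [hα.minpoly_eq] at h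
  simpa [sub_eq_zero] using h

lemma pow_three (hα : IsPureCubic m α) : α ^ 3 = m :=
  RingOfIntegers.ext (by simpa using hα.coe_pow_three)

/-- The power basis `1, α, α²` of a pure cubic field. -/
noncomputable def powerBasis (hα : IsPureCubic m α) : PowerBasis ℚ K :=
  PowerBasis.ofAdjoinEqTop (Algebra.IsIntegral.isIntegral (α : K)) hα.adjoin_eq_top

lemma powerBasis_gen (hα : IsPureCubic m α) : hα.powerBasis.gen = α :=
  PowerBasis.ofAdjoinEqTop_gen _ _

lemma powerBasis_dim (hα : IsPureCubic m α) : hα.powerBasis.dim = 3 :=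
  (PowerBasis.ofAdjoinEqTop_dim _ _).trans hα.natDegree_minpoly

lemma finrank_eq (hα : IsPureCubic m α) : finrank ℚ K = 3 :=
  hα.powerBasis.finrank.trans hα.powerBasis_dim

lemma coe_norm (hα : IsPureCubic m α) (a b c : ℚ) :
    Algebra.norm ℚ ((a : K) + b * α + c * (α : K) ^ 2) =
      a ^ 3 + m * b ^ 3 + m ^ 2 * c ^ 3 - 3 * m * a * b * c := by
  have hα3 := hα.coe_pow_three
  let B : Basis (Fin 3) ℚ K := hα.powerBasis.basis.reindex (finCongr hα.powerBasis_dim)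
  have hB (i) : B i = (α : K) ^ (i : ℕ) := by simp [B, hα.powerBasis_gen]
  let M : Matrix (Fin 3) (Fin 3) ℚ := !![a, m * c, m * b; b, a, m * c; c, b, a]
  have hM : Matrix.toLin B B M = Algebra.lmul ℚ K ((a : K) + b * α + c * (α : K) ^ 2) := by
    refine B.ext fun j ↦ ?_
    rw [Matrix.toLin_self]
    fin_cases j <;> simp [Fin.sum_univ_three, hB, M, Algebra.smul_def]
    · linear_combination (-c : K) * hα3
    · linear_combination (-b - c * α : K) * hα3
  rw [Algebra.norm_apply, ← hM, LinearMap.det_toLin, Matrix.det_fin_three]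
  simp [M]
  ring

lemma norm_eq (hα : IsPureCubic m α) (a b c : ℤ) :
    Algebra.norm ℤ ((a : 𝓞 K) + b * α + c * α ^ 2) =
      a ^ 3 + m * b ^ 3 + m ^ 2 * c ^ 3 - 3 * m * a * b * c := by
  have h : ((Algebra.norm ℤ ((a : 𝓞 K) + b * α + c * α ^ 2) : ℤ) : ℚ) =
      a ^ 3 + m * b ^ 3 + m ^ 2 * c ^ 3 - 3 * m * a * b * c := by
    rw [Algebra.coe_norm_int, ← hα.coe_norm a b c]
    simp
  exact_mod_cast h

lemma discr_powerBasis (hα : IsPureCubic m α) :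
    Algebra.discr ℚ hα.powerBasis.basis = -27 * m ^ 2 := by
  have hnorm := hα.coe_norm 0 0 3
  rw [Algebra.discr_powerBasis_eq_norm, hα.powerBasis_gen, hα.minpoly_eq, hα.finrank_eq]
  simp only [Rat.cast_zero, zero_mul, add_zero, zero_add, Rat.cast_ofNat] at hnorm
  simp only [derivative_sub, derivative_X_pow, derivative_C, sub_zero, map_mul,
    aeval_X_pow, Nat.cast_ofNat, Nat.reduceSub, map_ofNat] at hnorm ⊢
  rw [hnorm]
  norm_num [mul_comm]

lemma discr_dvd (hα : IsPureCubic m α) : discr K ∣ -27 * m ^ 2 := by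
  let w : Fin hα.powerBasis.dim → 𝓞 K := fun i ↦ α ^ (i : ℕ)
  have hw : (fun i ↦ (w i : K)) = hα.powerBasis.basis := by
    ext i
    simp [w, hα.powerBasis_gen]
  have hdiscr : Algebra.discr ℤ w = -27 * m ^ 2 := by
    have := coe_discr_int w
    rw [hw, hα.discr_powerBasis] at this
    exact_mod_cast this
  exact hdiscr ▸ discr_dvd_discr_of_card_eq_finrank
    (by rw [Fintype.card_fin, hα.powerBasis.finrank]) w

lemma ringHom_ext (hα : IsPureCubic m α) {L : Type*} [Field L] [CharZero L] {φ ψ : K →+* L}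
    (h : φ α = ψ α) : φ = ψ := by
  have := hα.powerBasis.algHom_ext (f := φ.toRatAlgHom) (g := ψ.toRatAlgHom)
    (by simpa [hα.powerBasis_gen] using h)
  ext x
  simpa using DFunLike.congr_fun this x

lemma nrRealPlaces_eq_one (hα : IsPureCubic m α) : InfinitePlace.nrRealPlaces K = 1 := by
  classical
  refine le_antisymm ?_ <| InfinitePlace.nrRealPlaces_pos_of_odd_finrank <| by
    rw [hα.finrank_eq]; decide
  rw [← InfinitePlace.card_real_embeddings, Fintype.card_le_one_iff]
  rintro ⟨φ, hφ⟩ ⟨ψ, hψ⟩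
  have cube {χ : K →+* ℂ} (hχ : ComplexEmbedding.IsReal χ) : hχ.embedding α ^ 3 = m := by
    rw [← map_pow, hα.coe_pow_three, map_intCast]
  have heq : hφ.embedding α = hψ.embedding α :=
    (Odd.strictMono_pow (by decide : Odd 3)).injective ((cube hφ).trans (cube hψ).symm)
  refine Subtype.ext (hα.ringHom_ext ?_)
  rw [← hφ.coe_embedding_apply, ← hψ.coe_embedding_apply, heq]

lemma nrComplexPlaces_eq_one (hα : IsPureCubic m α) : InfinitePlace.nrComplexPlaces K = 1 := by
  have := InfinitePlace.card_add_two_mul_card_eq_rank K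
  rw [hα.nrRealPlaces_eq_one, hα.finrank_eq] at this
  lia

lemma rank_units (hα : IsPureCubic m α) : Units.rank K = 1 := by
  rw [Units.rank, InfinitePlace.card_eq_nrRealPlaces_add_nrComplexPlaces,
    hα.nrRealPlaces_eq_one, hα.nrComplexPlaces_eq_one]

lemma absNorm_span (hα : IsPureCubic m α) (a b c : ℤ) {x : 𝓞 K} (hx : x = a + b * α + c * α ^ 2) :
    Ideal.absNorm (Ideal.span {x}) =
      (a ^ 3 + m * b ^ 3 + m ^ 2 * c ^ 3 - 3 * m * a * b * c).natAbs := by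
  rw [Ideal.absNorm_span_singleton, hx, hα.norm_eq]

end IsPureCubic

end PureCubic

section IdealPowers

open Polynomial Module

lemma span_pair_pow_three_eq_span_singleton {R : Type*} [CommRing R] {a b g : R}
    (haaa : g ∣ a ^ 3) (haab : g ∣ a ^ 2 * b) (habb : g ∣ a * b ^ 2) (hbbb : g ∣ b ^ 3)
    {c₀ c₁ c₂ c₃ : R}
    (hg : g = c₀ * a ^ 3 + c₁ * (a ^ 2 * b) + c₂ * (a * b ^ 2) + c₃ * b ^ 3) :
    Ideal.span {a, b} ^ 3 = Ideal.span {g} := by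
  have hpow : Ideal.span {a, b} ^ 3 = Ideal.span {a ^ 3, a ^ 2 * b, a * b ^ 2, b ^ 3} := by
    rw [pow_succ, pow_two, Ideal.span_mul_span', Ideal.span_mul_span']
    congr 1
    ext x
    simp only [Set.mem_mul, Set.mem_insert_iff, Set.mem_singleton_iff, exists_eq_left,
      or_and_right, exists_or, exists_eq_left']
    ring_nf
    simp only [@eq_comm _ x]
    tauto
  rw [hpow]
  refine le_antisymm (Ideal.span_le.2 ?_) ?_
  · rintro x (rfl | rfl | rfl | rfl) <;> simpa [Ideal.mem_span_singleton]
  · rw [Ideal.span_singleton_le_iff_mem, hg]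
    refine add_mem (add_mem (add_mem ?_ ?_) ?_) ?_ <;>
      exact Ideal.mul_mem_left _ _ (Ideal.subset_span (by simp))

variable {K : Type*} [Field K] [NumberField K]

lemma absNorm_eq_of_pow_eq {I J : Ideal (𝓞 K)} {n k : ℕ} (hn : n ≠ 0) (hIJ : I ^ n = J)
    (hJ : Ideal.absNorm J = k ^ n) : Ideal.absNorm I = k :=
  Nat.pow_left_injective hn (by simp only [← hJ, ← hIJ, map_pow])

lemma isMaximal_of_prime_absNorm {I : Ideal (𝓞 K)} (hI : (Ideal.absNorm I).Prime) :
    I.IsMaximal :=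
  (Ideal.isPrime_of_irreducible_absNorm hI).isMaximal fun h ↦ by simp [h, Nat.not_prime_zero] at hI

lemma span_pair_pow_eq_of_mem {a b g : 𝓞 K} {n p : ℕ} (hn : n ≠ 0) (hp : p.Prime)
    (hpow : Ideal.span {a, b} ^ n = Ideal.span {g}) (hg : Ideal.absNorm (Ideal.span {g}) = p ^ n)
    {Q : Ideal (𝓞 K)} [hQ : Q.IsPrime] (ha : a ∈ Q) (hb : b ∈ Q) : Q ^ n = Ideal.span {g} := by
  have hmax : (Ideal.span {a, b}).IsMaximal :=
    isMaximal_of_prime_absNorm ((absNorm_eq_of_pow_eq hn hpow hg).symm ▸ hp)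
  rw [← hpow, hmax.eq_of_le hQ.ne_top]
  rw [Ideal.span_le]
  rintro x (rfl | rfl) <;> assumption

lemma sub_natCast_mem_of_absNorm_eq {Q : Ideal (𝓞 K)} {p : ℕ} [hp : Fact p.Prime]
    (hQ : Ideal.absNorm Q = p) {f : ℤ[X]} {α : 𝓞 K} (hα : aeval α f = 0) {r : ℕ}
    (hr : ∀ x : ZMod p, aeval x f = 0 → x = r) : α - r ∈ Q := by
  have hcard : Nat.card (𝓞 K ⧸ Q) = p := hQ
  have : Finite (𝓞 K ⧸ Q) := Nat.finite_of_card_ne_zero (hcard ▸ hp.1.ne_zero)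
  let := Fintype.ofFinite (𝓞 K ⧸ Q)
  let e := ZMod.ringEquivOfPrime (𝓞 K ⧸ Q) hp.1 (by rw [← Nat.card_eq_fintype_card, hcard])
  let φ : 𝓞 K →ₐ[ℤ] ZMod p := (e.symm.toRingHom.comp (Ideal.Quotient.mk Q)).toIntAlgHom
  have hroot : φ α = r := hr _ (by rw [aeval_algHom_apply, hα, map_zero])
  rw [← Ideal.Quotient.eq_zero_iff_mem, ← e.symm.map_eq_zero_iff]
  change φ (α - r) = 0
  rw [map_sub, hroot, map_natCast, sub_self]

lemma classGroup_pow_eq_one_of_isPrincipal_pow (n : ℕ) {M : ℕ}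
    (hM : ∀ C : ClassGroup (𝓞 K), ∃ I : nonZeroDivisors (Ideal (𝓞 K)),
      ClassGroup.mk0 I = C ∧ Ideal.absNorm (I : Ideal (𝓞 K)) ≤ M)
    (h : ∀ Q : Ideal (𝓞 K), Q.IsPrime → Q ≠ ⊥ → Ideal.absNorm Q ≤ M → (Q ^ n).IsPrincipal)
    (C : ClassGroup (𝓞 K)) : C ^ n = 1 := by
  obtain ⟨I, rfl, hI⟩ := hM C
  have hI0 : (I : Ideal (𝓞 K)) ≠ 0 := nonZeroDivisors.coe_ne_zero I
  rw [← map_pow, ← Subtype.coe_eta (I ^ n) (I ^ n).2, ClassGroup.mk0_eq_one_iff,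
    SubmonoidClass.coe_pow, ← Ideal.prod_normalizedFactors_eq_self hI0,
    ← Multiset.map_id' (UniqueFactorizationMonoid.normalizedFactors _), ← Multiset.prod_map_pow,
    ← Ideal.mem_isPrincipalSubmonoid_iff]
  refine Submonoid.multiset_prod_mem _ _ fun J hJ ↦ Ideal.mem_isPrincipalSubmonoid_iff.2 ?_
  obtain ⟨Q, hQ, rfl⟩ := Multiset.mem_map.1 hJ
  refine h Q (Ideal.isPrime_of_prime (UniqueFactorizationMonoid.prime_of_normalized_factor Q hQ))
    (UniqueFactorizationMonoid.prime_of_normalized_factor Q hQ).ne_zero (le_trans ?_ hI)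
  exact Nat.le_of_dvd (Ideal.absNorm_pos_of_nonZeroDivisors I) <| Ideal.absNorm_dvd_absNorm_of_le <|
    Ideal.le_of_dvd (UniqueFactorizationMonoid.dvd_of_mem_normalizedFactors hQ)

lemma isPrincipal_of_isPrincipal_pow_of_coprime {n k : ℕ} (hnk : n.Coprime k)
    (hn : ∀ C : ClassGroup (𝓞 K), C ^ n = 1) {I : Ideal (𝓞 K)} (hI0 : I ≠ ⊥)
    (hI : (I ^ k).IsPrincipal) : I.IsPrincipal := by
  have hI' := mem_nonZeroDivisors_of_ne_zero hI0
  rw [← ClassGroup.mk0_eq_one_iff (pow_mem hI' k)] at hI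
  rw [← ClassGroup.mk0_eq_one_iff hI', ← orderOf_eq_one_iff, ← Nat.dvd_one, ← hnk]
  exact Nat.dvd_gcd (orderOf_dvd_of_pow_eq_one (hn _))
    (orderOf_dvd_of_pow_eq_one (by rw [← map_pow, SubmonoidClass.mk_pow, hI]))

end IdealPowers

section CubeRootSeven

open Polynomial Module

namespace IsPureCubic

variable {K : Type*} [Field K]

/-- The prime of degree two above `2` in `ℚ(∛7)`: modulo `2`, `X³ - 7 = (X + 1) (X² - X + 1)`. -/
def primeTwo (α : 𝓞 K) : Ideal (𝓞 K) := Ideal.span {2, α ^ 2 - α + 1}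

lemma two_mem_primeTwo (α : 𝓞 K) : 2 ∈ primeTwo α := Ideal.subset_span (by simp)

lemma sq_sub_add_one_mem_primeTwo (α : 𝓞 K) : α ^ 2 - α + 1 ∈ primeTwo α :=
  Ideal.subset_span (by simp)

lemma sq_add_add_one_mem_primeTwo (α : 𝓞 K) : α ^ 2 + α + 1 ∈ primeTwo α := by
  rw [show α ^ 2 + α + 1 = (α ^ 2 - α + 1) + 2 * α by ring]
  exact add_mem (sq_sub_add_one_mem_primeTwo α) (Ideal.mul_mem_right _ _ (two_mem_primeTwo α))

variable [NumberField K] {α : 𝓞 K}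

lemma pow_three_eq_seven (hα : IsPureCubic 7 α) : α ^ 3 = 7 := by
  simpa using hα.pow_three

lemma exists_absNorm_le_ten (hα : IsPureCubic 7 α) (C : ClassGroup (𝓞 K)) :
    ∃ I : nonZeroDivisors (Ideal (𝓞 K)), ClassGroup.mk0 I = C ∧
      Ideal.absNorm (I : Ideal (𝓞 K)) ≤ 10 := by
  obtain ⟨I, hI, hle⟩ := exists_ideal_in_class_of_norm_le C
  refine ⟨I, hI, Nat.lt_succ_iff.1 ?_⟩
  have hdiscr : |(discr K : ℝ)| ≤ 1323 := by
    exact_mod_cast Int.le_of_dvd (by norm_num) (by simpa using hα.discr_dvd)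
  have hsqrt : √|(discr K : ℝ)| ≤ 36.4 :=
    (Real.sqrt_le_left (by norm_num)).2 (hdiscr.trans (by norm_num))
  have hπ : 4 / Real.pi ≤ 4 / 3.14 := by
    gcongr
    exact Real.pi_gt_d2.le
  have hfact : ((Nat.factorial 3 : ℕ) : ℝ) / ((3 : ℕ) : ℝ) ^ 3 = 6 / 27 := by
    norm_num [Nat.factorial]
  rw [hα.nrComplexPlaces_eq_one, hα.finrank_eq, pow_one, hfact] at hle
  have : (Ideal.absNorm (I : Ideal (𝓞 K)) : ℝ) < 11 := calc
    _ ≤ 4 / Real.pi * (6 / 27 * √|(discr K : ℝ)|) := hle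
    _ ≤ 4 / 3.14 * (6 / 27 * 36.4) := by gcongr
    _ < 11 := by norm_num
  exact_mod_cast this

lemma sub_natCast_mem (hα : IsPureCubic 7 α) {Q : Ideal (𝓞 K)} {p : ℕ} [Fact p.Prime]
    (hQ : Ideal.absNorm Q = p) {r : ℕ} (hr : ∀ x : ZMod p, x ^ 3 = 7 → x = r) : α - r ∈ Q :=
  sub_natCast_mem_of_absNorm_eq hQ (f := X ^ 3 - C 7)
    (by simp only [map_sub, map_pow, aeval_X, map_ofNat, hα.pow_three_eq_seven, sub_self])
    fun x hx ↦ hr x <| by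
      simpa only [map_sub, map_pow, aeval_X, aeval_C, map_ofNat, sub_eq_zero] using hx

lemma primeTwo_pow_three (hα : IsPureCubic 7 α) :
    primeTwo α ^ 3 = Ideal.span {α ^ 2 - α + 1} := by
  have hα3 := hα.pow_three_eq_seven
  refine span_pair_pow_three_eq_span_singleton ⟨α + 1, by linear_combination -hα3⟩
    ⟨4, by ring⟩ ⟨2 * (α ^ 2 - α + 1), by ring⟩ ⟨(α ^ 2 - α + 1) ^ 2, by ring⟩
    (c₀ := -(α - 2) * (α ^ 2 - α + 4)) (c₁ := -2) (c₂ := 0) (c₃ := 1) ?_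
  linear_combination (-(α - 2) * (α ^ 2 - α + 4)) * hα3

lemma absNorm_primeTwo (hα : IsPureCubic 7 α) : Ideal.absNorm (primeTwo α) = 4 :=
  absNorm_eq_of_pow_eq three_ne_zero hα.primeTwo_pow_three <| by
    rw [hα.absNorm_span 1 (-1) 1 (by push_cast; ring)]
    norm_num

lemma isMaximal_primeTwo (hα : IsPureCubic 7 α) : (primeTwo α).IsMaximal := by
  have hne : primeTwo α ≠ ⊤ := fun h ↦ by simpa [h] using hα.absNorm_primeTwo
  obtain ⟨Q, hQ, hle⟩ := Ideal.exists_le_maximal _ hne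
  obtain ⟨I, hI⟩ := Ideal.dvd_iff_le.2 hle
  have hmul : Ideal.absNorm Q * Ideal.absNorm I = 4 := by
    rw [← map_mul, ← hI, hα.absNorm_primeTwo]
  have hQ1 : Ideal.absNorm Q ≠ 1 := fun h ↦ hQ.ne_top (Ideal.absNorm_eq_one_iff.1 h)
  -- `7` has the single cube root `1` modulo `2`, which is not a root of `X² - X + 1`.
  have hQ2 : Ideal.absNorm Q ≠ 2 := fun h2 ↦ by
    have hα1 := hα.sub_natCast_mem h2 (r := 1) (by decide)
    refine hQ.ne_top (Q.eq_top_iff_one.2 ?_)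
    convert Q.sub_mem (hle (sq_sub_add_one_mem_primeTwo α)) (Q.mul_mem_left α hα1) using 1
    push_cast
    ring
  have hI1 : Ideal.absNorm I = 1 := by
    have : Ideal.absNorm Q ≤ 4 := Nat.le_of_dvd (by norm_num) ⟨_, hmul.symm⟩
    interval_cases Ideal.absNorm Q <;> lia
  rw [hI, Ideal.absNorm_eq_one_iff.1 hI1, Ideal.mul_top]
  exact hQ

lemma isPrincipal_pow_three_of_two_mem (hα : IsPureCubic 7 α) {Q : Ideal (𝓞 K)} [hQ : Q.IsPrime]
    (h2 : 2 ∈ Q) : (Q ^ 3).IsPrincipal := by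
  have hα3 := hα.pow_three_eq_seven
  have hmem : (α + 1) * (α ^ 2 - α + 1) ∈ Q := by
    convert Q.mul_mem_left 4 h2 using 1
    linear_combination hα3
  rcases hQ.mem_or_mem hmem with h | h
  · have hpow : Ideal.span {2, α + 1} ^ 3 = Ideal.span {α + 1} := by
      refine span_pair_pow_three_eq_span_singleton ⟨α ^ 2 - α + 1, by linear_combination -hα3⟩
        ⟨4, by ring⟩ ⟨2 * (α + 1), by ring⟩ ⟨(α + 1) ^ 2, by ring⟩
        (c₀ := 6 - (α ^ 2 - α + 1)) (c₁ := -2) (c₂ := 0) (c₃ := (α - 2) ^ 2) ?_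
      linear_combination (6 - (α ^ 2 - α + 1)) * hα3
    exact ⟨_, span_pair_pow_eq_of_mem three_ne_zero Nat.prime_two hpow
      (by rw [hα.absNorm_span 1 1 0 (by push_cast; ring)]; norm_num) h2 h⟩
  · have hle : primeTwo α ≤ Q := Ideal.span_le.2 (by rintro x (rfl | rfl) <;> assumption)
    exact ⟨_, hα.isMaximal_primeTwo.eq_of_le hQ.ne_top hle ▸ hα.primeTwo_pow_three⟩

lemma isPrincipal_pow_three_of_three_mem (hα : IsPureCubic 7 α) {Q : Ideal (𝓞 K)}
    [hQ : Q.IsPrime] (h3 : 3 ∈ Q) : (Q ^ 3).IsPrincipal := by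
  have hα3 := hα.pow_three_eq_seven
  have hcube : (α - 1) ^ 3 = 3 * (2 + α - α ^ 2) := by linear_combination hα3
  have hmem : α - 1 ∈ Q := hQ.mem_of_pow_mem 3 (hcube ▸ Q.mul_mem_right _ h3)
  have hpow : Ideal.span {3, α - 1} ^ 3 = Ideal.span {3} := by
    refine span_pair_pow_three_eq_span_singleton ⟨9, by norm_num⟩ ⟨3 * (α - 1), by ring⟩
      ⟨(α - 1) ^ 2, by ring⟩ ⟨_, hcube⟩
      (c₀ := 1) (c₁ := 0) (c₂ := -2 * (α + 2)) (c₃ := -2 * (α + 1)) ?_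
    linear_combination (2 * (α + 1)) * hα3
  exact ⟨_, span_pair_pow_eq_of_mem three_ne_zero Nat.prime_three hpow
    (by rw [hα.absNorm_span 3 0 0 (by push_cast; ring)]; norm_num) h3 hmem⟩

lemma isPrincipal_pow_three_of_five_mem (hα : IsPureCubic 7 α) {Q : Ideal (𝓞 K)}
    [hQ : Q.IsPrime] (h5 : 5 ∈ Q) (hle : Ideal.absNorm Q ≤ 10) : (Q ^ 3).IsPrincipal := by
  have hα3 := hα.pow_three_eq_seven
  have hnorm : Ideal.absNorm Q = 5 := by
    have hdvd : Ideal.absNorm Q ∣ 5 ^ 3 := by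
      convert Ideal.absNorm_dvd_absNorm_of_le ((Ideal.span_singleton_le_iff_mem _).2 h5)
      rw [hα.absNorm_span 5 0 0 (by push_cast; ring)]
      norm_num
    have hne : Ideal.absNorm Q ≠ 1 := fun h ↦ hQ.ne_top (Ideal.absNorm_eq_one_iff.1 h)
    interval_cases Ideal.absNorm Q <;> lia
  have hmem : α - 3 ∈ Q := by
    have hroot : ∀ x : ZMod 5, x ^ 3 = 7 → x = (3 : ℕ) := by decide
    have : Fact (Nat.Prime 5) := ⟨Nat.prime_five⟩
    exact_mod_cast hα.sub_natCast_mem hnorm hroot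
  have hpow : Ideal.span {5, α - 3} ^ 3 = Ideal.span {8 - 10 * α + 3 * α ^ 2} := by
    refine span_pair_pow_three_eq_span_singleton
      ⟨-(274 + 143 * α + 76 * α ^ 2), by linear_combination (-331 + 228 * α) * hα3⟩
      ⟨58 + 31 * α + 17 * α ^ 2, by linear_combination (77 - 51 * α) * hα3⟩
      ⟨-11 - 7 * α - 4 * α ^ 2, by linear_combination (-19 + 12 * α) * hα3⟩
      ⟨1 + 2 * α + α ^ 2, by linear_combination (5 - 3 * α) * hα3⟩
      (c₀ := 21 * (8 - 10 * α + 3 * α ^ 2)) (c₁ := 0) (c₂ := 0)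
      (c₃ := -41 * (α ^ 2 - α + 1) ^ 2) ?_
    linear_combination
      (41 * (α ^ 4 - 11 * α ^ 3 + 48 * α ^ 2 - 93 * α + 73) + 164 - 410 * α) * hα3
  exact ⟨_, span_pair_pow_eq_of_mem three_ne_zero Nat.prime_five hpow
    (by rw [hα.absNorm_span 8 (-10) 3 (by push_cast; ring)]; norm_num) h5 hmem⟩

lemma isMaximal_span_self (hα : IsPureCubic 7 α) : (Ideal.span {α}).IsMaximal := by
  refine isMaximal_of_prime_absNorm ?_
  rw [hα.absNorm_span 0 1 0 (by push_cast; ring)]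
  norm_num

lemma isPrincipal_pow_three_of_seven_mem (hα : IsPureCubic 7 α) {Q : Ideal (𝓞 K)}
    [hQ : Q.IsPrime] (h7 : 7 ∈ Q) : (Q ^ 3).IsPrincipal := by
  have hmem : α ∈ Q := hQ.mem_of_pow_mem 3 (hα.pow_three_eq_seven ▸ h7)
  have hQα : Ideal.span {α} = Q :=
    hα.isMaximal_span_self.eq_of_le hQ.ne_top ((Ideal.span_singleton_le_iff_mem Q).2 hmem)
  exact ⟨α ^ 3, by rw [← hQα, Ideal.span_singleton_pow]⟩

lemma isPrincipal_pow_three_of_absNorm_le (hα : IsPureCubic 7 α) {Q : Ideal (𝓞 K)}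
    (hQ : Q.IsPrime) (hQ0 : Q ≠ ⊥) (hle : Ideal.absNorm Q ≤ 10) : (Q ^ 3).IsPrincipal := by
  have : NeZero Q := ⟨hQ0⟩
  have hp := Nat.absNorm_under_prime Q
  have hmem := Int.absNorm_under_mem Q
  have hp10 : Ideal.absNorm (Q.under ℤ) ≤ 10 :=
    (Nat.le_of_dvd (Nat.pos_of_ne_zero (Ideal.absNorm_eq_zero_iff.not.2 hQ0))
      (Int.absNorm_under_dvd_absNorm Q)).trans hle
  generalize Ideal.absNorm (Q.under ℤ) = p at hp hmem hp10
  obtain rfl | rfl | rfl | rfl : p = 2 ∨ p = 3 ∨ p = 5 ∨ p = 7 := by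
    interval_cases p <;> first | (norm_num at hp; done) | simp
  · exact hα.isPrincipal_pow_three_of_two_mem (by simpa using hmem)
  · exact hα.isPrincipal_pow_three_of_three_mem (by simpa using hmem)
  · exact hα.isPrincipal_pow_three_of_five_mem (by simpa using hmem) hle
  · exact hα.isPrincipal_pow_three_of_seven_mem (by simpa using hmem)

lemma classGroup_pow_three (hα : IsPureCubic 7 α) (C : ClassGroup (𝓞 K)) : C ^ 3 = 1 :=
  classGroup_pow_eq_one_of_isPrincipal_pow 3 hα.exists_absNorm_le_ten
    (fun _ ↦ hα.isPrincipal_pow_three_of_absNorm_le) C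

lemma isPrincipal_of_isPrincipal_sq (hα : IsPureCubic 7 α) {I : Ideal (𝓞 K)} (hI0 : I ≠ ⊥)
    (hI : (I ^ 2).IsPrincipal) : I.IsPrincipal :=
  isPrincipal_of_isPrincipal_pow_of_coprime (n := 3) (by norm_num) hα.classGroup_pow_three hI0 hI

end IsPureCubic

end CubeRootSeven

section Valuation

open Polynomial IsDedekindDomain

variable {K Γ : Type*} [Field K] [LinearOrderedCommGroupWithZero Γ] {w : Valuation K Γ} {b c x : K}

lemma valuation_quadratic_of_lt_one (hb : w b ≤ 1) (hc : w c = 1) (hx : w x < 1) :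
    w (x ^ 2 + b * x + c) = 1 := by
  rw [← hc]
  refine w.map_add_eq_of_lt_right ?_
  rw [hc]
  refine w.map_add_lt ?_ ?_
  · exact map_pow w x 2 ▸ pow_lt_one₀ zero_le hx two_ne_zero
  · exact map_mul w b x ▸ (mul_le_of_le_one_left zero_le hb).trans_lt hx

lemma valuation_quadratic_of_one_lt (hb : w b ≤ 1) (hc : w c = 1) (hx : 1 < w x) :
    w (x ^ 2 + b * x + c) = w x ^ 2 := by
  have hlt : w x < w x ^ 2 := lt_self_pow₀ hx one_lt_two
  have hbx : w (b * x) ≤ w x := map_mul w b x ▸ mul_le_of_le_one_left zero_le hb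
  have hlead : w (x ^ 2 + b * x) = w x ^ 2 := by
    rw [w.map_add_eq_of_lt_left (by rw [map_pow]; exact hbx.trans_lt hlt), map_pow]
  rw [w.map_add_eq_of_lt_left (by rw [hlead, hc]; exact hx.trans hlt), hlead]

lemma isSquare_valuation_of_mul_sq_eq_quadratic {t : K} (hb : w b ≤ 1) (hc : w c = 1)
    (hx0 : x ≠ 0) (h : x * t ^ 2 = x ^ 2 + b * x + c) : IsSquare (w x) := by
  have hw : w x * w t ^ 2 = w (x ^ 2 + b * x + c) := by rw [← h, map_mul, map_pow]
  have hwx : w x ≠ 0 := w.ne_zero_iff.2 hx0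
  rcases lt_trichotomy (w x) 1 with hx | hx | hx
  · rw [valuation_quadratic_of_lt_one hb hc hx] at hw
    exact ⟨(w t)⁻¹, by rw [← mul_inv, ← sq, eq_inv_of_mul_eq_one_left hw]⟩
  · exact hx ▸ IsSquare.one
  · rw [valuation_quadratic_of_one_lt hb hc hx, sq (w x)] at hw
    exact ⟨w t, by rw [← sq, mul_left_cancel₀ hwx hw]⟩

lemma isSquare_valuation_of_weierstrass {a y : K} (ha : w a ≤ 1) (hb : w b ≤ 1) (hc : w c = 1)
    (hx0 : x ≠ 0) (h : y * (y + a * x) = x * (x ^ 2 + b * x + c)) : IsSquare (w x) := by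
  have hwx : w x ≠ 0 := w.ne_zero_iff.2 hx0
  have hax : w (a * x) ≤ w x := map_mul w a x ▸ mul_le_of_le_one_left zero_le ha
  have hw : w y * w (y + a * x) = w x * w (x ^ 2 + b * x + c) := by rw [← map_mul, h, map_mul]
  have hsq (hlt : w x < w (x ^ 2 + b * x + c)) : w y ^ 2 = w x * w (x ^ 2 + b * x + c) := by
    have hxy : w x < w y := by
      by_contra! hyx
      have : w y * w (y + a * x) ≤ w x * w x := mul_le_mul' hyx (w.map_add_le hyx hax)
      exact (mul_lt_mul_of_pos_left hlt (zero_lt_iff.2 hwx)).not_ge (hw ▸ this)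
    rw [← hw, w.map_add_eq_of_lt_left (hax.trans_lt hxy), sq]
  rcases lt_trichotomy (w x) 1 with hx | hx | hx
  · rw [valuation_quadratic_of_lt_one hb hc hx, mul_one] at hsq
    exact ⟨w y, by rw [← sq, hsq hx]⟩
  · exact hx ▸ IsSquare.one
  · rw [valuation_quadratic_of_one_lt hb hc hx] at hsq
    refine ⟨w y / w x, ?_⟩
    rw [← sq, div_pow, hsq (lt_self_pow₀ hx one_lt_two), mul_div_assoc,
      div_self (pow_ne_zero 2 hwx), mul_one]

end Valuation

section SquareClasses

open Polynomial IsDedekindDomain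

lemma exists_ideal_eq_sq_or_eq_sq_mul {R : Type*} [CommRing R] [IsDedekindDomain R]
    {I P : Ideal R} (hI : I ≠ ⊥)
    (h : ∀ v : HeightOneSpectrum R, v.asIdeal ≠ P →
      Even ((Associates.mk v.asIdeal).count (Associates.mk I).factors)) :
    ∃ J : Ideal R, I = J ^ 2 ∨ I = J ^ 2 * P := by
  classical
  set m := UniqueFactorizationMonoid.normalizedFactors I
  have heven : ∀ Q ∈ m.toFinset, Q ≠ P → m.count Q % 2 = 0 := by
    intro Q hQ hne
    have hprime :=
      UniqueFactorizationMonoid.prime_of_normalized_factor Q (Multiset.mem_toFinset.1 hQ)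
    have hQP := Ideal.isPrime_of_prime hprime
    have := h ⟨Q, hQP, hprime.ne_zero⟩ hne
    rw [Ideal.count_associates_factors_eq hI hQP hprime.ne_zero] at this
    exact Nat.even_iff.1 this
  have hmod : ∏ Q ∈ m.toFinset, Q ^ (m.count Q % 2) = P ^ (m.count P % 2) := by
    refine Finset.prod_eq_single P (fun Q hQ hne ↦ by rw [heven Q hQ hne, pow_zero]) fun hP ↦ ?_
    rw [Multiset.count_eq_zero.2 (mt Multiset.mem_toFinset.2 hP), Nat.zero_mod, pow_zero]
  have hfactor : I = (∏ Q ∈ m.toFinset, Q ^ (m.count Q / 2)) ^ 2 * P ^ (m.count P % 2) := calc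
    I = ∏ Q ∈ m.toFinset, Q ^ m.count Q := by
      rw [← Finset.prod_multiset_count]
      exact (associated_iff_eq.1 (UniqueFactorizationMonoid.prod_normalizedFactors hI)).symm
    _ = _ := by
      rw [← hmod, ← Finset.prod_pow, ← Finset.prod_mul_distrib]
      refine Finset.prod_congr rfl fun Q _ ↦ ?_
      rw [← pow_mul, ← pow_add, mul_comm, Nat.div_add_mod]
  refine ⟨∏ Q ∈ m.toFinset, Q ^ (m.count Q / 2),
    (Nat.mod_two_eq_zero_or_one (m.count P)).imp (fun h0 ↦ ?_) fun h1 ↦ ?_⟩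
  · rwa [h0, pow_zero, mul_one] at hfactor
  · rwa [h1, pow_one] at hfactor

lemma even_count_of_isSquare_valuation {R K : Type*} [CommRing R] [IsDedekindDomain R] [Field K]
    [Algebra R K] [IsFractionRing R K] (v : HeightOneSpectrum R) {c : R} (hc : c ≠ 0)
    (h : IsSquare (v.valuation K (algebraMap R K c))) :
    Even ((Associates.mk v.asIdeal).count (Associates.mk (Ideal.span {c})).factors) := by
  classical
  obtain ⟨r, hr⟩ := h
  rw [HeightOneSpectrum.valuation_of_algebraMap, HeightOneSpectrum.intValuation_if_neg _ hc] at hr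
  have hr0 : r ≠ 0 := by
    rintro rfl
    simp at hr
  have hlog := congrArg WithZero.log hr
  rw [WithZero.log_exp, WithZero.log_mul hr0 hr0] at hlog
  exact (Int.even_coe_nat _).1 ⟨-WithZero.log r, by lia⟩

lemma isSquare_of_zpow_generator {G : Type*} [CommGroup G] [HasDistribNeg G] {f : G}
    (hf : ∀ u, ∃ n : ℤ, u = f ^ n ∨ u = -f ^ n) (u : G) :
    (IsSquare u ∨ IsSquare (-u)) ∨ IsSquare (f * u) ∨ IsSquare (-(f * u)) := by
  obtain ⟨n, hn⟩ := hf u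
  rcases n.even_or_odd with hn2 | hn2
  · have hsq : IsSquare (f ^ n) := hn2.isSquare_zpow f
    rcases hn with rfl | rfl
    · exact .inl (.inl hsq)
    · exact .inl (.inr (by rwa [neg_neg]))
  · have hsq : IsSquare (f * f ^ n) := by
      rw [← zpow_one_add]
      exact (odd_one.add_odd hn2).isSquare_zpow f
    rcases hn with rfl | rfl
    · exact .inr (.inl hsq)
    · exact .inr (.inr (by rwa [mul_neg, neg_neg]))

lemma isSquare_or_isSquare_mul_of_zpow_generator {G : Type*} [CommGroup G] [HasDistribNeg G]
    {f e : G} (hf : ∀ u, ∃ n : ℤ, u = f ^ n ∨ u = -f ^ n) (he : ¬IsSquare e) (he' : ¬IsSquare (-e))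
    (u : G) : (IsSquare u ∨ IsSquare (-u)) ∨ IsSquare (e * u) ∨ IsSquare (-(e * u)) := by
  refine (isSquare_of_zpow_generator hf u).imp_right fun hu ↦ ?_
  have hfe := (isSquare_of_zpow_generator hf e).resolve_left (not_or.2 ⟨he, he'⟩)
  have hprod : f * e * (f * u) * f⁻¹ ^ 2 = e * u := by
    rw [mul_mul_mul_comm, ← sq, mul_right_comm, ← mul_pow, mul_inv_cancel, one_pow, one_mul]
  have hsq {x y : G} (hx : IsSquare x) (hy : IsSquare y) : IsSquare (x * y * f⁻¹ ^ 2) :=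
    (hx.mul hy).mul (IsSquare.sq _)
  rcases hfe with hfe | hfe <;> rcases hu with hu | hu
  · exact .inl (hprod ▸ hsq hfe hu)
  · exact .inr (by simpa only [mul_neg, neg_mul, neg_neg, hprod] using hsq hfe hu)
  · exact .inr (by simpa only [mul_neg, neg_mul, neg_neg, hprod] using hsq hfe hu)
  · exact .inl (by simpa only [mul_neg, neg_mul, neg_neg, hprod] using hsq hfe hu)

lemma exists_unit_zpow_generator {K : Type*} [Field K] [NumberField K]
    (hrank : Units.rank K = 1) (hodd : Odd (Module.finrank ℚ K)) :
    ∃ f : (𝓞 K)ˣ, ∀ u, ∃ n : ℤ, u = f ^ n ∨ u = -f ^ n := by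
  have : Unique (Fin (Units.rank K)) := hrank ▸ inferInstanceAs (Unique (Fin 1))
  refine ⟨Units.fundSystem K default, fun u ↦ ?_⟩
  obtain ⟨⟨ζ, e⟩, hu, -⟩ := Units.exist_unique_eq_mul_prod K u
  rw [Fintype.prod_unique] at hu
  refine ⟨e default, ?_⟩
  rcases Units.torsion_eq_one_or_neg_one_of_odd_finrank hodd ζ with hζ | hζ
  · exact .inl (by simpa [hζ] using hu)
  · exact .inr (by simpa [hζ] using hu)

end SquareClasses

section Descent

open Polynomial IsDedekindDomain

/-- `x` lies in the subgroup of `Kˣ / Kˣ²` generated by the classes of `a` and `2 - a`. -/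
def MemDescentGroup {K : Type*} [Field K] (a x : K) : Prop :=
  ∃ s : K, s ≠ 0 ∧ (x = s ^ 2 ∨ x = a * s ^ 2 ∨ x = (2 - a) * s ^ 2 ∨ x = a * (2 - a) * s ^ 2)

/-- The affine elliptic curve `η² = ξ (4 ξ² - 3 a² ξ + 4 a)`, where `a` is a cube root of `7`;
the points of `C₄` over `ℚ` map to its points over `ℚ(∛7)`. -/
def DescentCurve {K : Type*} [Field K] (a ξ η : K) : Prop :=
  η ^ 2 = ξ * (4 * ξ ^ 2 - 3 * a ^ 2 * ξ + 4 * a)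

section RealCubeRoot

variable {a : ℝ}

lemma pos_of_pow_three_eq_seven (ha : a ^ 3 = 7) : 0 < a :=
  (Odd.pow_pos_iff (by decide : Odd 3)).1 (by rw [ha]; norm_num)

lemma lt_two_of_pow_three_eq_seven (ha : a ^ 3 = 7) : a < 2 :=
  lt_of_pow_lt_pow_left₀ 3 (by norm_num) (by rw [ha]; norm_num)

lemma DescentCurve.pos {ξ η : ℝ} (h : DescentCurve a ξ η) (ha : a ^ 3 = 7) (hξ : ξ ≠ 0) :
    0 < ξ := by
  have hdiscr : 16 * (4 * ξ ^ 2 - 3 * a ^ 2 * ξ + 4 * a) = (8 * ξ - 3 * a ^ 2) ^ 2 + a := by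
    linear_combination (-9 * a) * ha
  have hpos : 0 < 4 * ξ ^ 2 - 3 * a ^ 2 * ξ + 4 * a := by
    nlinarith [sq_nonneg (8 * ξ - 3 * a ^ 2), pos_of_pow_three_eq_seven ha]
  have hnonneg : 0 ≤ ξ * (4 * ξ ^ 2 - 3 * a ^ 2 * ξ + 4 * a) := h ▸ sq_nonneg η
  exact (nonneg_of_mul_nonneg_left hnonneg hpos).lt_of_ne' hξ

end RealCubeRoot

namespace IsPureCubic

variable {K : Type*} [Field K] [NumberField K] {α : 𝓞 K}

lemma coe_pow_three_eq_seven (hα : IsPureCubic 7 α) : (α : K) ^ 3 = 7 := by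
  simpa using hα.coe_pow_three

/-- The unit `2 - α` of `ℚ(∛7)`. -/
def unitTwoSub (hα : IsPureCubic 7 α) : (𝓞 K)ˣ where
  val := 2 - α
  inv := 4 + 2 * α + α ^ 2
  val_inv := by linear_combination -hα.pow_three_eq_seven
  inv_val := by linear_combination -hα.pow_three_eq_seven

lemma coe_unitTwoSub (hα : IsPureCubic 7 α) : ((hα.unitTwoSub : 𝓞 K) : K) = 2 - α := by
  rw [unitTwoSub, RingOfIntegers.coe_eq_algebraMap, map_sub, map_ofNat]

lemma exists_eq_unit_mul_sq_of_span_eq_sq (hα : IsPureCubic 7 α) {c : 𝓞 K} (hc : c ≠ 0)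
    {J : Ideal (𝓞 K)} (hJ : Ideal.span {c} = J ^ 2) :
    ∃ (u : (𝓞 K)ˣ) (s : 𝓞 K), c = u * s ^ 2 := by
  have hJ0 : J ≠ ⊥ := by
    rintro rfl
    rw [← Ideal.zero_eq_bot, zero_pow two_ne_zero, Ideal.zero_eq_bot,
      Ideal.span_singleton_eq_bot] at hJ
    exact hc hJ
  obtain ⟨g, rfl⟩ := hα.isPrincipal_of_isPrincipal_sq hJ0 ⟨c, hJ.symm⟩
  rw [← Ideal.span, Ideal.span_singleton_pow, Ideal.span_singleton_eq_span_singleton] at hJ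
  obtain ⟨u, hu⟩ := hJ.symm
  exact ⟨u, g, by rw [← hu, mul_comm]⟩

lemma exists_eq_unit_mul_sq_or_eq_mul_unit_mul_sq (hα : IsPureCubic 7 α) {c : 𝓞 K} (hc : c ≠ 0)
    (hv : ∀ v : HeightOneSpectrum (𝓞 K), α ∉ v.asIdeal → IsSquare (v.valuation K (c : K))) :
    ∃ (u : (𝓞 K)ˣ) (s : 𝓞 K), c = u * s ^ 2 ∨ c = α * (u * s ^ 2) := by
  have hα0 : α ≠ 0 := by
    rintro rfl
    simpa using hα.pow_three_eq_seven
  have heven (v : HeightOneSpectrum (𝓞 K)) (hne : v.asIdeal ≠ Ideal.span {α}) :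
      Even ((Associates.mk v.asIdeal).count (Associates.mk (Ideal.span {c})).factors) := by
    refine even_count_of_isSquare_valuation (K := K) v hc (hv v fun hmem ↦ hne ?_)
    exact (hα.isMaximal_span_self.eq_of_le v.isPrime.ne_top
      ((Ideal.span_singleton_le_iff_mem _).2 hmem)).symm
  obtain ⟨J, hJ | hJ⟩ :=
    exists_ideal_eq_sq_or_eq_sq_mul (mt Ideal.span_singleton_eq_bot.1 hc) heven
  · obtain ⟨u, s, hs⟩ := hα.exists_eq_unit_mul_sq_of_span_eq_sq hc hJ
    exact ⟨u, s, .inl hs⟩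
  · obtain ⟨d, rfl⟩ : α ∣ c := by
      rw [← Ideal.span_singleton_le_span_singleton, hJ]
      exact Ideal.mul_le_right
    rw [← Ideal.span_singleton_mul_span_singleton, mul_comm] at hJ
    obtain ⟨u, s, hs⟩ := hα.exists_eq_unit_mul_sq_of_span_eq_sq (right_ne_zero_of_mul hc)
      (mul_right_cancel₀ (mt Ideal.span_singleton_eq_bot.1 hα0) hJ)
    exact ⟨u, s, .inr (by rw [hs])⟩

lemma exists_eq_unit_mul_sq_or_eq_mul_unit_mul_sq_field (hα : IsPureCubic 7 α) {γ : K}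
    (hγ : γ ≠ 0)
    (hv : ∀ v : HeightOneSpectrum (𝓞 K), α ∉ v.asIdeal → IsSquare (v.valuation K γ)) :
    ∃ (u : (𝓞 K)ˣ) (s : K), s ≠ 0 ∧ (γ = u * s ^ 2 ∨ γ = α * (u * s ^ 2)) := by
  obtain ⟨a, b, hb, rfl⟩ := IsFractionRing.div_surjective (A := 𝓞 K) γ
  have hb0 : (b : K) ≠ 0 :=
    (FaithfulSMul.algebraMap_eq_zero_iff (𝓞 K) K).not.2 (nonZeroDivisors.ne_zero hb)
  have ha0 : (a : K) ≠ 0 := fun h ↦ hγ (by rw [← RingOfIntegers.coe_eq_algebraMap, h, zero_div])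
  have hab : ((a * b : 𝓞 K) : K) = a / b * (b : K) ^ 2 := by
    push_cast
    field_simp
  have hab0 : a * b ≠ 0 := by
    intro h
    simp [h, ha0, hb0] at hab
  obtain ⟨u, s, hs⟩ := hα.exists_eq_unit_mul_sq_or_eq_mul_unit_mul_sq hab0 fun v hvα ↦ by
    rw [hab, map_mul, map_pow]
    exact (hv v hvα).mul (IsSquare.sq _)
  refine ⟨u, s / b, div_ne_zero ?_ hb0, ?_⟩
  · norm_cast
    rintro rfl
    simp [hab0] at hs
  · refine hs.imp (fun hs ↦ ?_) fun hs ↦ ?_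
    all_goals
      rw [hs] at hab
      push_cast at hab
      field_simp at hab ⊢
      linear_combination -hab

lemma isSquare_or_isSquare_unit_mul (hα : IsPureCubic 7 α) (φ : K →+* ℝ)
    (hns : ¬IsSquare (2 - α : K)) {u : (𝓞 K)ˣ} (hu : 0 < φ u) :
    IsSquare u ∨ IsSquare (hα.unitTwoSub * u) := by
  have hcube : φ α ^ 3 = 7 := by rw [← map_pow, hα.coe_pow_three_eq_seven, map_ofNat]
  have hε : 0 < φ (hα.unitTwoSub : 𝓞 K) := by
    simpa only [coe_unitTwoSub, map_sub, map_ofNat, sub_pos] using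
      lt_two_of_pow_three_eq_seven hcube
  have hneg {v : (𝓞 K)ˣ} (hv : 0 < φ v) : ¬IsSquare (-v) := by
    rintro ⟨t, ht⟩
    have : -φ v = φ t * φ t := by simpa using congrArg (fun x : (𝓞 K)ˣ ↦ φ x) ht
    nlinarith [mul_self_nonneg (φ t)]
  have hεns : ¬IsSquare hα.unitTwoSub := by
    rintro ⟨t, ht⟩
    exact hns ⟨t, by
      rw [← hα.coe_unitTwoSub, ht]
      simp⟩
  obtain ⟨f, hf⟩ := exists_unit_zpow_generator hα.rank_units (hα.finrank_eq ▸ by decide)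
  refine (isSquare_or_isSquare_mul_of_zpow_generator hf hεns (hneg hε) u).imp ?_ ?_
  · exact fun h ↦ h.resolve_right (hneg hu)
  · exact fun h ↦ h.resolve_right (hneg (by simpa using mul_pos hε hu))

lemma exists_unit_eq_sq_or_eq_two_sub_mul_sq (hα : IsPureCubic 7 α) (φ : K →+* ℝ)
    (hns : ¬IsSquare (2 - α : K)) {u : (𝓞 K)ˣ} (hu : 0 < φ u) :
    ∃ w : K, w ≠ 0 ∧ ((u : K) = w ^ 2 ∨ (u : K) = (2 - α) * w ^ 2) := by
  have hunit (v : (𝓞 K)ˣ) : (v : K) ≠ 0 := by simp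
  rcases hα.isSquare_or_isSquare_unit_mul φ hns hu with ⟨t, rfl⟩ | ⟨t, ht⟩
  · exact ⟨t, hunit t, .inl (by push_cast; ring)⟩
  · have hε := hunit hα.unitTwoSub
    refine ⟨t / hα.unitTwoSub, div_ne_zero (hunit t) hε, .inr ?_⟩
    have ht' : (hα.unitTwoSub : K) * u = t * t := by
      simpa using congrArg (fun x : (𝓞 K)ˣ ↦ (x : K)) ht
    rw [← hα.coe_unitTwoSub]
    field_simp
    linear_combination ht'

lemma memDescentGroup_of_isSquare_valuation (hα : IsPureCubic 7 α) (φ : K →+* ℝ)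
    (hns : ¬IsSquare (2 - α : K)) {γ : K} (hγ : 0 < φ γ)
    (hv : ∀ v : HeightOneSpectrum (𝓞 K), v.valuation K (α : K) = 1 → IsSquare (v.valuation K γ)) :
    MemDescentGroup (α : K) γ := by
  have hγ0 : γ ≠ 0 := by
    rintro rfl
    simp at hγ
  obtain ⟨u, s, hs0, hs⟩ := hα.exists_eq_unit_mul_sq_or_eq_mul_unit_mul_sq_field hγ0
    fun v hvα ↦ hv v (v.valuation_eq_one_iff_notMem.2 hvα)
  have hα0 := pos_of_pow_three_eq_seven
    (show φ α ^ 3 = 7 by rw [← map_pow, hα.coe_pow_three_eq_seven, map_ofNat])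
  have hu : 0 < φ u := by
    rcases hs with rfl | rfl
    · rw [map_mul, map_pow] at hγ
      exact pos_of_mul_pos_left hγ (sq_nonneg _)
    · rw [map_mul, map_mul, map_pow] at hγ
      exact pos_of_mul_pos_left (pos_of_mul_pos_right hγ hα0.le) (sq_nonneg _)
  obtain ⟨w, hw0, hw⟩ := hα.exists_unit_eq_sq_or_eq_two_sub_mul_sq φ hns hu
  refine ⟨w * s, mul_ne_zero hw0 hs0, ?_⟩
  rcases hw with hw | hw <;> rw [hw] at hs <;> rcases hs with rfl | rfl
  · exact .inl (by ring)
  · exact .inr (.inl (by ring))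
  · exact .inr (.inr (.inl (by ring)))
  · exact .inr (.inr (.inr (by ring)))

lemma memDescentGroup_of_descentCurve (hα : IsPureCubic 7 α) (φ : K →+* ℝ)
    (hns : ¬IsSquare (2 - α : K)) {ξ η : K} (hξ : ξ ≠ 0) (h : DescentCurve (α : K) ξ η) :
    MemDescentGroup (α : K) ξ := by
  refine hα.memDescentGroup_of_isSquare_valuation φ hns ?_ fun v hv ↦ ?_
  · refine DescentCurve.pos (a := φ α) (η := φ η) ?_ ?_ (by rwa [Ne, map_eq_zero])
    · simpa only [DescentCurve, map_mul, map_pow, map_add, map_sub, map_ofNat] using congrArg φ h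
    · rw [← map_pow, hα.coe_pow_three_eq_seven, map_ofNat]
  · refine isSquare_valuation_of_weierstrass (a := (α : K)) (b := -(α : K) ^ 2)
      (y := (η - α * ξ) / 2) hv.le (by simp [hv]) hv hξ ?_
    rw [DescentCurve] at h
    linear_combination h / 4

lemma memDescentGroup_of_mul_sq_eq (hα : IsPureCubic 7 α) (φ : K →+* ℝ)
    (hns : ¬IsSquare (2 - α : K)) {x t : K} (hx : 0 < φ x)
    (h : x * t ^ 2 = x ^ 2 + 6 * (α : K) ^ 2 * x - α) : MemDescentGroup (α : K) x := by
  refine hα.memDescentGroup_of_isSquare_valuation φ hns hx fun v hv ↦ ?_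
  have hx0 : x ≠ 0 := by
    rintro rfl
    simp at hx
  have h6 : v.valuation K (6 : K) ≤ 1 := by
    simpa only [map_ofNat] using v.valuation_le_one (K := K) 6
  exact isSquare_valuation_of_mul_sq_eq_quadratic (b := 6 * (α : K) ^ 2) (c := -(α : K))
    (by simp [hv, h6])
    (by simp [hv]) hx0 (by rw [h]; ring)

end IsPureCubic

end Descent

section LocalAtTwo

/-- `R` is the local ring of `K` at an unramified prime above `2` with residue field `𝔽₄`, where
`A ∈ R` is a cube root of `7`, and `ρ` is the residue map. The statement `ρ a = ρ b` is congruence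
modulo `2`, and every nonzero element of `K` is a power of `2` times a unit of `R`. -/
structure IsResidueMapAtTwo {K : Type*} [Field K] {R : Subring K} (A : R) {F : Type*} [Field F]
    (ρ : R →+* F) : Prop where
  pow_three : A ^ 3 = 7
  exists_eq_two_mul : ∀ a, ρ a = 0 → ∃ b, a = 2 * b
  two_eq_zero : (2 : F) = 0
  exists_mul_eq_one : ∀ a, ρ a ≠ 0 → ∃ b, a * b = 1
  sq_add_add_one : ρ A ^ 2 + ρ A + 1 = 0
  residue_cases : ∀ x : F, x = 0 ∨ x = 1 ∨ x = ρ A ∨ x = ρ A ^ 2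
  exists_unit : ∀ x : K, x ≠ 0 → ∃ u : R, ρ u ≠ 0 ∧
    (x = u ∨ ∃ m : ℕ, x = 2 ^ (m + 1) * u ∨ x * 2 ^ (m + 1) = u)

/-- `c` is congruent to a square modulo `4`. -/
def IsSquareModFour {R : Type*} [CommRing R] (c : R) : Prop := ∃ u t : R, c = u ^ 2 + 4 * t

@[simp, norm_cast]
lemma coe_ofNat_subring {K : Type*} [Field K] (R : Subring K) (n : ℕ) [n.AtLeastTwo] :
    ((ofNat(n) : R) : K) = ofNat(n) := rfl

lemma subring_two_ne_zero {K : Type*} [Field K] [CharZero K] {R : Subring K} : (2 : R) ≠ 0 :=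
  fun h => two_ne_zero (α := K) (congrArg Subtype.val h)

namespace IsResidueMapAtTwo

variable {K : Type*} [Field K] {R : Subring K} {A : R} {F : Type*} [Field F] {ρ : R →+* F}

lemma coe_pow_three (hρ : IsResidueMapAtTwo A ρ) : (A : K) ^ 3 = 7 := by
  exact_mod_cast congrArg Subtype.val hρ.pow_three

lemma map_two_mul (hρ : IsResidueMapAtTwo A ρ) (a : R) : ρ (2 * a) = 0 := by
  rw [map_mul, map_ofNat, hρ.two_eq_zero, zero_mul]

lemma map_four_mul (hρ : IsResidueMapAtTwo A ρ) (a : R) : ρ (4 * a) = 0 := by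
  rw [show 4 * a = 2 * (2 * a) by ring, hρ.map_two_mul]

lemma map_eight_mul (hρ : IsResidueMapAtTwo A ρ) (a : R) : ρ (8 * a) = 0 := by
  rw [show 8 * a = 2 * (4 * a) by ring, hρ.map_two_mul]

lemma exists_eq_add_two_mul (hρ : IsResidueMapAtTwo A ρ) {a b : R} (h : ρ a = ρ b) :
    ∃ c, a = b + 2 * c := by
  obtain ⟨c, hc⟩ := hρ.exists_eq_two_mul (a - b) (by rw [map_sub, h, sub_self])
  exact ⟨c, by linear_combination hc⟩

lemma map_pow_three (hρ : IsResidueMapAtTwo A ρ) : ρ A ^ 3 = 1 := by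
  linear_combination (ρ A - 1) * hρ.sq_add_add_one

lemma map_ne_zero (hρ : IsResidueMapAtTwo A ρ) : ρ A ≠ 0 := by
  intro h
  simpa [h] using hρ.map_pow_three

lemma map_ne_one (hρ : IsResidueMapAtTwo A ρ) : ρ A ≠ 1 := by
  intro h
  have hw := hρ.sq_add_add_one
  rw [h] at hw
  exact one_ne_zero (α := F) (by linear_combination hw - hρ.two_eq_zero)

lemma map_two_sub_ne_zero (hρ : IsResidueMapAtTwo A ρ) : ρ (2 - A) ≠ 0 := by
  rw [map_sub, map_ofNat, hρ.two_eq_zero, zero_sub, neg_ne_zero]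
  exact hρ.map_ne_zero

-- `A + 1` is a unit, and `(A + 1) (A ^ 2 - A + 1) = 8`.
lemma exists_sq_eq (hρ : IsResidueMapAtTwo A ρ) : ∃ κ, A ^ 2 = A - 1 + 8 * κ := by
  have hunit : ρ (A + 1) ≠ 0 := by
    intro h
    rw [map_add, map_one] at h
    exact one_ne_zero (α := F) (by linear_combination hρ.sq_add_add_one - ρ A * h)
  obtain ⟨b, hb⟩ := hρ.exists_mul_eq_one _ hunit
  exact ⟨b, by linear_combination b * hρ.pow_three - (A ^ 2 - A + 1) * hb⟩

lemma sq_injective (hρ : IsResidueMapAtTwo A ρ) {x y : F} (h : x ^ 2 = y ^ 2) : x = y := by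
  have hsq : (x - y) ^ 2 = 0 := by linear_combination h + (y ^ 2 - x * y) * hρ.two_eq_zero
  exact sub_eq_zero.1 (pow_eq_zero_iff two_ne_zero |>.1 hsq)

lemma exists_eq_sq_add_two_mul (hρ : IsResidueMapAtTwo A ρ) (a : R) :
    ∃ u w, a = u ^ 2 + 2 * w := by
  have hsqrt : ∃ u, ρ a = ρ (u ^ 2) := by
    rcases hρ.residue_cases (ρ a) with h | h | h | h
    · exact ⟨0, by simp [h]⟩
    · exact ⟨1, by simp [h]⟩
    · refine ⟨A ^ 2, ?_⟩
      rw [h, map_pow, map_pow]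
      linear_combination -ρ A * hρ.map_pow_three
    · exact ⟨A, by rw [h, map_pow]⟩
  obtain ⟨u, hu⟩ := hsqrt
  exact ⟨u, hρ.exists_eq_add_two_mul hu⟩

lemma exists_coe_eq_of_sq_eq (hρ : IsResidueMapAtTwo A ρ) {x : K} {a : R} (h : x ^ 2 = a) :
    ∃ t : R, x = t := by
  by_cases hx : x = 0
  · exact ⟨0, by simp [hx]⟩
  obtain ⟨u, hu, hxu | ⟨m, hxu | hxu⟩⟩ := hρ.exists_unit x hx
  · exact ⟨u, hxu⟩
  · exact ⟨2 ^ (m + 1) * u, by push_cast; exact hxu⟩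
  · have hu2 : u ^ 2 = 2 * (2 * (2 ^ m) ^ 2 * a) := by
      apply Subtype.ext
      push_cast
      rw [← h, ← hxu]
      ring
    have hρu := congrArg ρ hu2
    rw [hρ.map_two_mul, map_pow] at hρu
    exact absurd (pow_eq_zero_iff two_ne_zero |>.1 hρu) hu

lemma exists_coe_eq_of_unit_mul_sq_eq (hρ : IsResidueMapAtTwo A ρ) {x : K} {a c : R}
    (hc : ρ c ≠ 0) (h : c * x ^ 2 = a) : ∃ t : R, x = t ∧ c * t ^ 2 = a := by
  obtain ⟨b, hb⟩ := hρ.exists_mul_eq_one c hc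
  have hbK : (c : K) * b = 1 := by exact_mod_cast congrArg Subtype.val hb
  have hx : x ^ 2 = (b * a : R) := by
    push_cast
    rw [← h]
    linear_combination -x ^ 2 * hbK
  obtain ⟨t, rfl⟩ := hρ.exists_coe_eq_of_sq_eq hx
  exact ⟨t, rfl, by exact_mod_cast h⟩

lemma exists_sq_eq_four_mul (hρ : IsResidueMapAtTwo A ρ) {u : R} (h : ρ u = 0) :
    ∃ t, u ^ 2 = 4 * t := by
  obtain ⟨c, rfl⟩ := hρ.exists_eq_two_mul u h
  exact ⟨c ^ 2, by ring⟩

lemma exists_sq_eq_one_add (hρ : IsResidueMapAtTwo A ρ) {u : R} (h : ρ u = 1) :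
    ∃ t, u ^ 2 = 1 + 4 * t := by
  obtain ⟨c, rfl⟩ := hρ.exists_eq_add_two_mul (a := u) (b := 1) (by rw [h, map_one])
  exact ⟨c + c ^ 2, by ring⟩

lemma exists_sq_eq_sq_add (hρ : IsResidueMapAtTwo A ρ) {u : R} (h : ρ u = ρ A) :
    ∃ t, u ^ 2 = A ^ 2 + 4 * t := by
  obtain ⟨c, rfl⟩ := hρ.exists_eq_add_two_mul h
  exact ⟨A * c + c ^ 2, by ring⟩

lemma exists_sq_eq_neg_add (hρ : IsResidueMapAtTwo A ρ) {u : R} (h : ρ u = ρ A ^ 2) :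
    ∃ t, u ^ 2 = -A + 4 * t := by
  obtain ⟨c, rfl⟩ := hρ.exists_eq_add_two_mul (a := u) (b := A ^ 2) (by rw [h, map_pow])
  exact ⟨A ^ 2 * c + c ^ 2 + 2 * A, by linear_combination A * hρ.pow_three⟩

lemma intCast_cases (hρ : IsResidueMapAtTwo A ρ) (n : ℤ) :
    ((n : F) = 0 ∧ (2 : ℤ) ∣ n) ∨ ((n : F) = 1 ∧ ¬(2 : ℤ) ∣ n) := by
  obtain ⟨k, rfl | rfl⟩ := Int.even_or_odd' n
  · exact .inl ⟨by push_cast; rw [hρ.two_eq_zero, zero_mul], dvd_mul_right 2 k⟩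
  · exact .inr ⟨by push_cast; rw [hρ.two_eq_zero, zero_mul, zero_add], by omega⟩

lemma two_dvd_of_map_eq_zero (hρ : IsResidueMapAtTwo A ρ) {a b : ℤ} (h : ρ (a + b * A) = 0) :
    (2 : ℤ) ∣ a ∧ (2 : ℤ) ∣ b := by
  rw [map_add, map_mul, map_intCast, map_intCast] at h
  rcases hρ.intCast_cases a with ⟨ha, ha2⟩ | ⟨ha, -⟩ <;>
    rcases hρ.intCast_cases b with ⟨hb, hb2⟩ | ⟨hb, -⟩ <;> rw [ha, hb] at h
  · exact ⟨ha2, hb2⟩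
  · exact absurd (by linear_combination h) hρ.map_ne_zero
  · exact absurd (by linear_combination h) (one_ne_zero (α := F))
  · exact absurd (by linear_combination h - hρ.two_eq_zero) hρ.map_ne_one

lemma isSquareModFour_of_mul_sq_eq (hρ : IsResidueMapAtTwo A ρ) {x m s : K} {c d : R}
    (hc : ρ c ≠ 0) (hd : ρ d ≠ 0) (hxc : x * m ^ 2 = c) (hcsq : IsSquareModFour c)
    (hx : x = d * s ^ 2) : IsSquareModFour d := by
  obtain ⟨v, -, hv⟩ := hρ.exists_coe_eq_of_unit_mul_sq_eq (x := s * m) (a := c) hd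
    (by rw [← hxc, hx]; ring)
  have hρv : ρ v ≠ 0 := by
    intro h0
    apply hc
    rw [← hv, map_mul, map_pow, h0, zero_pow two_ne_zero, mul_zero]
  obtain ⟨b, hb⟩ := hρ.exists_mul_eq_one v hρv
  obtain ⟨u, t, rfl⟩ := hcsq
  exact ⟨u * b, t * b ^ 2, by linear_combination b ^ 2 * hv - d * (v * b + 1) * hb⟩

lemma isSquareModFour_of_quadratic_pos (hρ : IsResidueMapAtTwo A ρ) {D T n : R}
    (h : D * T ^ 2 = 16 * n ^ 4 * D ^ 2 + 24 * A ^ 2 * n ^ 2 * D - A) : IsSquareModFour D := by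
  have hT : ρ T ≠ 0 := by
    intro h0
    have hρh := congrArg ρ h
    simp only [map_mul, map_pow, map_add, map_sub, map_ofNat, h0] at hρh
    exact hρ.map_ne_zero (by linear_combination hρh +
      (8 * ρ n ^ 4 * ρ D ^ 2 + 12 * ρ A ^ 2 * ρ n ^ 2 * ρ D) * hρ.two_eq_zero)
  obtain ⟨S, hS⟩ := hρ.exists_mul_eq_one T hT
  exact ⟨A ^ 2 * S, S ^ 2 * (4 * n ^ 4 * D ^ 2 + 6 * A ^ 2 * n ^ 2 * D - 2 * A), by
    linear_combination S ^ 2 * h - D * (T * S + 1) * hS - S ^ 2 * A * hρ.pow_three⟩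

lemma isSquareModFour_of_quadratic_neg (hρ : IsResidueMapAtTwo A ρ) {D T n : R} (hD : ρ D ≠ 0)
    (h : D * T ^ 2 = D ^ 2 + 24 * A ^ 2 * n ^ 2 * D - 16 * n ^ 4 * A) : IsSquareModFour D := by
  obtain ⟨b, hb⟩ := hρ.exists_mul_eq_one D hD
  exact ⟨T, -(b * (6 * A ^ 2 * n ^ 2 * D - 4 * n ^ 4 * A)), by
    linear_combination -b * h - (D - T ^ 2) * hb⟩

lemma exists_unit_mul_sq_of_memDescentGroup (hρ : IsResidueMapAtTwo A ρ) {x : K}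
    (hx : MemDescentGroup (A : K) x) : ∃ (d : R) (s : K), ρ d ≠ 0 ∧ s ≠ 0 ∧ x = d * s ^ 2 := by
  obtain ⟨s, hs, h | h | h | h⟩ := hx
  · exact ⟨1, s, by simp, hs, by simpa using h⟩
  · exact ⟨A, s, hρ.map_ne_zero, hs, h⟩
  · exact ⟨2 - A, s, hρ.map_two_sub_ne_zero, hs, by push_cast; exact h⟩
  · refine ⟨A * (2 - A), s, ?_, hs, by push_cast; exact h⟩
    rw [map_mul]
    exact mul_ne_zero hρ.map_ne_zero hρ.map_two_sub_ne_zero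

variable [CharZero K]

lemma four_dvd_of_eq_four_mul (hρ : IsResidueMapAtTwo A ρ) (a b c : ℤ) {t : R}
    (ht : a + b * A + c * A ^ 2 = 4 * t) : (4 : ℤ) ∣ a - c ∧ (4 : ℤ) ∣ b + c := by
  obtain ⟨κ, hκ⟩ := hρ.exists_sq_eq
  have hlin : ((a - c : ℤ) : R) + ((b + c : ℤ) : R) * A = 2 * (2 * (t - 2 * c * κ)) := by
    push_cast
    linear_combination ht - c * hκ
  obtain ⟨⟨x, hx⟩, ⟨y, hy⟩⟩ := hρ.two_dvd_of_map_eq_zero (by rw [hlin, hρ.map_two_mul])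
  rw [hx, hy] at hlin
  have hhalf : (x : R) + y * A = 2 * (t - 2 * c * κ) := by
    apply mul_left_cancel₀ (subring_two_ne_zero (K := K))
    push_cast at hlin
    linear_combination hlin
  have := hρ.two_dvd_of_map_eq_zero (by rw [hhalf, hρ.map_two_mul])
  omega

lemma four_dvd_of_isSquareModFour (hρ : IsResidueMapAtTwo A ρ) (a b c : ℤ)
    (h : IsSquareModFour (a + b * A + c * A ^ 2 : R)) :
    ((4 : ℤ) ∣ a - c ∧ (4 : ℤ) ∣ b + c) ∨ ((4 : ℤ) ∣ a - c - 1 ∧ (4 : ℤ) ∣ b + c) ∨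
      ((4 : ℤ) ∣ a - c + 1 ∧ (4 : ℤ) ∣ b + c - 1) ∨ ((4 : ℤ) ∣ a - c ∧ (4 : ℤ) ∣ b + c + 1) := by
  obtain ⟨u, t, h⟩ := h
  rcases hρ.residue_cases (ρ u) with hu | hu | hu | hu
  · obtain ⟨s, hs⟩ := hρ.exists_sq_eq_four_mul hu
    have := hρ.four_dvd_of_eq_four_mul a b c (t := s + t) (by linear_combination h + hs)
    omega
  · obtain ⟨s, hs⟩ := hρ.exists_sq_eq_one_add hu
    have := hρ.four_dvd_of_eq_four_mul (a - 1) b c (t := s + t)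
      (by push_cast; linear_combination h + hs)
    omega
  · obtain ⟨s, hs⟩ := hρ.exists_sq_eq_sq_add hu
    have := hρ.four_dvd_of_eq_four_mul a b (c - 1) (t := s + t)
      (by push_cast; linear_combination h + hs)
    omega
  · obtain ⟨s, hs⟩ := hρ.exists_sq_eq_neg_add hu
    have := hρ.four_dvd_of_eq_four_mul a (b + 1) c (t := s + t)
      (by push_cast; linear_combination h + hs)
    omega

lemma not_isSquareModFour_self (hρ : IsResidueMapAtTwo A ρ) : ¬IsSquareModFour A := by
  intro h
  have := hρ.four_dvd_of_isSquareModFour 0 1 0 (by simpa using h)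
  omega

lemma not_isSquareModFour_two_sub (hρ : IsResidueMapAtTwo A ρ) : ¬IsSquareModFour (2 - A) := by
  intro h
  have := hρ.four_dvd_of_isSquareModFour 2 (-1) 0 (by simpa [← sub_eq_add_neg] using h)
  omega

lemma not_isSquareModFour_mul_two_sub (hρ : IsResidueMapAtTwo A ρ) :
    ¬IsSquareModFour (A * (2 - A)) := by
  intro h
  have := hρ.four_dvd_of_isSquareModFour 0 2 (-1) (by
    rwa [show ((0 : ℤ) : R) + ((2 : ℤ) : R) * A + ((-1 : ℤ) : R) * A ^ 2 = A * (2 - A) by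
      push_cast; ring])
  omega

lemma isSquare_of_isSquareModFour (hρ : IsResidueMapAtTwo A ρ) {x m : K} {c : R}
    (hx : MemDescentGroup (A : K) x) (hc : ρ c ≠ 0) (hxc : x * m ^ 2 = c)
    (hcsq : IsSquareModFour c) : ∃ s : K, s ≠ 0 ∧ x = s ^ 2 := by
  obtain ⟨s, hs, h⟩ := hx
  refine ⟨s, hs, ?_⟩
  rcases h with h | h | h | h
  · exact h
  · exact absurd (hρ.isSquareModFour_of_mul_sq_eq hc hρ.map_ne_zero hxc hcsq h)
      hρ.not_isSquareModFour_self
  · exact absurd (hρ.isSquareModFour_of_mul_sq_eq hc hρ.map_two_sub_ne_zero hxc hcsq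
      (by push_cast; exact h)) hρ.not_isSquareModFour_two_sub
  · refine absurd (hρ.isSquareModFour_of_mul_sq_eq hc (d := A * (2 - A)) ?_ hxc hcsq
      (by push_cast; exact h)) hρ.not_isSquareModFour_mul_two_sub
    rw [map_mul]
    exact mul_ne_zero hρ.map_ne_zero hρ.map_two_sub_ne_zero

lemma isSquareModFour_of_quadratic_even (hρ : IsResidueMapAtTwo A ρ) {D T : R}
    (h : D * (2 * T) ^ 2 = D ^ 2 + 6 * A ^ 2 * D - A) : IsSquareModFour D := by
  have hρh := congrArg ρ h
  simp only [map_mul, map_pow, map_add, map_sub, map_ofNat] at hρh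
  have hρD : ρ D = ρ (A ^ 2) := by
    apply hρ.sq_injective
    rw [map_pow]
    linear_combination -hρh - ρ A * hρ.map_pow_three
      + (2 * ρ D * ρ T ^ 2 - 3 * ρ A ^ 2 * ρ D) * hρ.two_eq_zero
  obtain ⟨c, rfl⟩ := hρ.exists_eq_add_two_mul hρD
  have hT : (A ^ 2 + 2 * c) * T ^ 2 = 2 * (6 * A + 2 * A ^ 2 * c) + c ^ 2 := by
    apply mul_left_cancel₀ (mul_ne_zero subring_two_ne_zero (subring_two_ne_zero (K := K)))
    linear_combination h + 7 * A * hρ.pow_three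
  have hρc : ρ c = ρ (A * T) := by
    apply hρ.sq_injective
    have hρT := congrArg ρ hT
    rw [map_add, hρ.map_two_mul, map_mul, hρD] at hρT
    simp only [map_mul, map_pow] at hρT ⊢
    linear_combination -hρT
  obtain ⟨g, hg⟩ := hρ.exists_eq_add_two_mul hρc
  have hcT : c * T ^ 2 = 2 * (3 * A + A ^ 2 * c + A * T * g + g ^ 2) := by
    apply mul_left_cancel₀ (subring_two_ne_zero (K := K))
    linear_combination hT + (c + A * T + 2 * g) * hg
  have hρcT := congrArg ρ hcT
  rw [hρ.map_two_mul, map_mul, map_pow] at hρcT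
  have hρc0 : ρ c = 0 := by
    rcases mul_eq_zero.1 hρcT with h0 | h0
    · exact h0
    · rw [hρc, map_mul, pow_eq_zero_iff two_ne_zero |>.1 h0, mul_zero]
  obtain ⟨c, rfl⟩ := hρ.exists_eq_two_mul c hρc0
  exact ⟨A, c, by ring⟩

lemma isSquareModFour_of_quadratic_odd (hρ : IsResidueMapAtTwo A ρ) {D T : R} (hT : ρ T ≠ 0)
    (h : D * T ^ 2 = D ^ 2 + 6 * A ^ 2 * D - A) : IsSquareModFour D := by
  obtain ⟨u, w, rfl⟩ := hρ.exists_eq_sq_add_two_mul D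
  have hρh := congrArg ρ h
  simp only [map_mul, map_pow, map_add, map_sub, map_ofNat] at hρh
  have huT : ρ (u * T) = ρ (u ^ 2 + A ^ 2) := by
    apply hρ.sq_injective
    simp only [map_mul, map_pow, map_add]
    linear_combination hρh - ρ A * hρ.map_pow_three + (2 * ρ u ^ 2 * ρ w + 2 * ρ w ^ 2
      + 2 * ρ A ^ 2 * ρ u ^ 2 + 6 * ρ A ^ 2 * ρ w - ρ A - ρ w * ρ T ^ 2) * hρ.two_eq_zero
  obtain ⟨g, hg⟩ := hρ.exists_eq_add_two_mul huT
  have hwT : w * T ^ 2 = 2 * (u ^ 2 * w + w ^ 2 + A ^ 2 * u ^ 2 + 3 * A ^ 2 * w - 2 * A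
      - (u ^ 2 + A ^ 2) * g - g ^ 2) := by
    apply mul_left_cancel₀ (subring_two_ne_zero (K := K))
    linear_combination h - (u * T + u ^ 2 + A ^ 2 + 2 * g) * hg - A * hρ.pow_three
  have hρw := congrArg ρ hwT
  rw [hρ.map_two_mul, map_mul, map_pow] at hρw
  obtain ⟨w, rfl⟩ := hρ.exists_eq_two_mul w
    ((mul_eq_zero.1 hρw).resolve_right (pow_ne_zero 2 hT))
  exact ⟨u, w, by ring⟩

lemma isSquareModFour_of_quadratic (hρ : IsResidueMapAtTwo A ρ) {D T : R}
    (h : D * T ^ 2 = D ^ 2 + 6 * A ^ 2 * D - A) : IsSquareModFour D := by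
  by_cases hT : ρ T = 0
  · obtain ⟨T, rfl⟩ := hρ.exists_eq_two_mul T hT
    exact hρ.isSquareModFour_of_quadratic_even h
  · exact hρ.isSquareModFour_of_quadratic_odd hT h

lemma isSquare_of_mul_sq_eq_quadratic (hρ : IsResidueMapAtTwo A ρ) {x t : K}
    (hx : MemDescentGroup (A : K) x) (h : x * t ^ 2 = x ^ 2 + 6 * A ^ 2 * x - A) :
    ∃ s : K, s ≠ 0 ∧ x = s ^ 2 := by
  obtain ⟨d, s, hd, hs, hxd⟩ := hρ.exists_unit_mul_sq_of_memDescentGroup hx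
  obtain ⟨v, hv, hsv⟩ := hρ.exists_unit s hs
  set D : R := d * v ^ 2 with hDdef
  have hD : ρ D ≠ 0 := by
    rw [hDdef, map_mul, map_pow]
    exact mul_ne_zero hd (pow_ne_zero 2 hv)
  have hDK : (D : K) = d * v ^ 2 := by rw [hDdef]; push_cast; rfl
  rcases hsv with rfl | ⟨m, rfl | hsv⟩
  · rw [hxd, ← hDK] at h
    obtain ⟨T, rfl, hT⟩ := hρ.exists_coe_eq_of_unit_mul_sq_eq
      (a := D ^ 2 + 6 * A ^ 2 * D - A) hD (by push_cast; exact h)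
    exact hρ.isSquare_of_isSquareModFour (m := 1) hx hD (by rw [hxd, hDK]; ring)
      (hρ.isSquareModFour_of_quadratic hT)
  · have hxD : x = (2 ^ (m + 1)) ^ 2 * D := by rw [hxd, hDK]; ring
    obtain ⟨T, -, hT⟩ := hρ.exists_coe_eq_of_unit_mul_sq_eq (x := 2 ^ (m + 1) * t)
      (a := 16 * (2 ^ m) ^ 4 * D ^ 2 + 24 * A ^ 2 * (2 ^ m) ^ 2 * D - A) hD
      (by push_cast; rw [hxD] at h; linear_combination h)
    exact hρ.isSquare_of_isSquareModFour (m := (2 ^ (m + 1))⁻¹) hx hD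
      (by rw [hxD]; field_simp) (hρ.isSquareModFour_of_quadratic_pos hT)
  · have hxD : x * (2 ^ (m + 1)) ^ 2 = D := by rw [hxd, hDK, ← hsv]; ring
    obtain ⟨T, -, hT⟩ := hρ.exists_coe_eq_of_unit_mul_sq_eq (x := 2 ^ (m + 1) * t)
      (a := D ^ 2 + 24 * A ^ 2 * (2 ^ m) ^ 2 * D - 16 * (2 ^ m) ^ 4 * A) hD
      (by push_cast; rw [← hxD]; linear_combination (2 ^ (m + 1)) ^ 4 * h)
    exact hρ.isSquare_of_isSquareModFour hx hD hxD (hρ.isSquareModFour_of_quadratic_neg hD hT)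

end IsResidueMapAtTwo

end LocalAtTwo

section Halving

/-- If `(s², ·)` is a point of `DescentCurve a`, then the points `(x, q x)` whose double is that
point up to sign have slopes `q` satisfying this equation. -/
def IsHalvingSlope {K : Type*} [Field K] (a s q : K) : Prop :=
  q ^ 4 + 6 * a ^ 2 * q ^ 2 - a = 16 * s ^ 2 * q ^ 2

/-- The outcome of the 2-descent on `DescentCurve a`: the `ξ`-coordinates take values in the
descent group, and the points whose `ξ`-coordinate is a square are divisible by two. -/
structure HasTwoDescent {K : Type*} [Field K] (a : K) : Prop where
  memDescentGroup : ∀ ξ η : K, ξ ≠ 0 → DescentCurve a ξ η → MemDescentGroup a ξ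
  exists_slope : ∀ s η : K, s ≠ 0 → DescentCurve a (s ^ 2) η → ∃ q, IsHalvingSlope a s q ∧
    (s * (q ^ 2 + 3 * a ^ 2 - 8 * s ^ 2) = 4 * η ∨ s * (q ^ 2 + 3 * a ^ 2 - 8 * s ^ 2) = -(4 * η))

section Field

variable {K : Type*} [Field K] {a s q x x' : K}

lemma ne_zero_of_pow_three_eq_seven [CharZero K] (ha : a ^ 3 = 7) : a ≠ 0 := by
  rintro rfl
  norm_num at ha

lemma IsHalvingSlope.ne_zero (h : IsHalvingSlope a s q) (ha : a ≠ 0) : q ≠ 0 := by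
  rintro rfl
  apply ha
  unfold IsHalvingSlope at h
  linear_combination -h

lemma IsHalvingSlope.neg (h : IsHalvingSlope a s q) : IsHalvingSlope a (-s) q := by
  unfold IsHalvingSlope at *
  rw [h, neg_sq]

lemma descentCurve_of_mul_eq_of_add_eq (hmul : x * x' = a)
    (hadd : 4 * (x + x') = 3 * a ^ 2 + q ^ 2) : DescentCurve a x (q * x) := by
  unfold DescentCurve
  linear_combination -x ^ 2 * hadd + 4 * x * hmul

lemma IsHalvingSlope.descentCurve [CharZero K] (h : IsHalvingSlope a s q) (ha : a ^ 3 = 7)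
    (hx : 8 * x = 3 * a ^ 2 + q ^ 2 + 4 * s * q) (hx' : 8 * x' = 3 * a ^ 2 + q ^ 2 - 4 * s * q) :
    x * x' = a ∧ DescentCurve a x (q * x) ∧ DescentCurve a x' (q * x') := by
  have hmul : x * x' = a := by
    apply mul_left_cancel₀ (by norm_num : (64 : K) ≠ 0)
    unfold IsHalvingSlope at h
    linear_combination 8 * x' * hx + (3 * a ^ 2 + q ^ 2 + 4 * s * q) * hx' + h + 9 * a * ha
  have hadd : 4 * (x + x') = 3 * a ^ 2 + q ^ 2 := by linear_combination (hx + hx') / 2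
  exact ⟨hmul, descentCurve_of_mul_eq_of_add_eq hmul hadd,
    descentCurve_of_mul_eq_of_add_eq (by rw [mul_comm, hmul]) (by rw [add_comm, hadd])⟩

lemma DescentCurve.translate_two_torsion {η : K} (ha : a ≠ 0) (hmul : x * x' = a)
    (h : DescentCurve a x η) : DescentCurve a x' (η * x' / x) := by
  have hx : x ≠ 0 := left_ne_zero_of_mul (hmul ▸ ha)
  unfold DescentCurve at *
  rw [← hmul] at h ⊢
  field_simp
  rw [h]
  ring

end Field

namespace IsResidueMapAtTwo

variable {K : Type*} [Field K] {R : Subring K} {A : R} {F : Type*} [Field F] {ρ : R →+* F}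

lemma ne_zero_of_map_ne_zero {a : R} (h : ρ a ≠ 0) : a ≠ 0 := by
  rintro rfl
  exact h (map_zero ρ)

lemma coe_ne_zero_of_map_ne_zero {a : R} (h : ρ a ≠ 0) : (a : K) ≠ 0 :=
  fun h0 => ne_zero_of_map_ne_zero h (Subtype.ext h0)

lemma eq_of_pow_four_eq (hρ : IsResidueMapAtTwo A ρ) {x : F} (h : x ^ 4 = ρ A) : x = ρ A := by
  apply hρ.sq_injective
  apply hρ.sq_injective
  linear_combination h - ρ A * hρ.map_pow_three

lemma exists_unit_of_quartic (hρ : IsResidueMapAtTwo A ρ) {q : K} {B : R} (hq : q ≠ 0)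
    (h : q ^ 4 + 6 * A ^ 2 * q ^ 2 - A = B * q ^ 2) :
    ∃ Q : R, q = Q ∧ ρ Q ≠ 0 ∧ Q ^ 4 + 6 * A ^ 2 * Q ^ 2 - A = B * Q ^ 2 := by
  obtain ⟨Q, hQ, rfl | ⟨m, rfl | hqQ⟩⟩ := hρ.exists_unit q hq
  · exact ⟨Q, rfl, hQ, by exact_mod_cast h⟩
  · have hA : A = 2 * (8 * (2 ^ m) ^ 4 * Q ^ 4 + 2 * (6 * A ^ 2 - B) * (2 ^ m) ^ 2 * Q ^ 2) := by
      apply Subtype.ext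
      push_cast
      linear_combination -h
    exact absurd (by rw [hA, hρ.map_two_mul]) hρ.map_ne_zero
  · have hQ4 : Q ^ 4 = 2 * (8 * (2 ^ m) ^ 4 * A - 2 * (6 * A ^ 2 - B) * (2 ^ m) ^ 2 * Q ^ 2) := by
      apply Subtype.ext
      push_cast
      rw [← hqQ]
      linear_combination (2 ^ (m + 1)) ^ 4 * h
    exact absurd (by rw [← map_pow, hQ4, hρ.map_two_mul]) (pow_ne_zero 4 hQ)

variable [CharZero K]

lemma coe_ne_zero (hρ : IsResidueMapAtTwo A ρ) : (A : K) ≠ 0 :=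
  ne_zero_of_pow_three_eq_seven hρ.coe_pow_three

lemma exists_isHalvingSlope_of_pos (hρ : IsResidueMapAtTwo A ρ) (φ : K →+* ℝ)
    (hmem : ∀ x t : K, 0 < φ x → x * t ^ 2 = x ^ 2 + 6 * A ^ 2 * x - A →
      MemDescentGroup (A : K) x) {s m : K}
    (hm : m ^ 2 = 4 * (s ^ 2) ^ 2 - 3 * A ^ 2 * s ^ 2 + 4 * A)
    (hpos : 0 < φ (8 * s ^ 2 - 3 * A ^ 2 + 4 * m)) :
    ∃ q : K, q ^ 2 = 8 * s ^ 2 - 3 * A ^ 2 + 4 * m ∧ IsHalvingSlope (A : K) s q := by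
  have hquad : (8 * s ^ 2 - 3 * A ^ 2 + 4 * m) * (4 * s) ^ 2 =
      (8 * s ^ 2 - 3 * A ^ 2 + 4 * m) ^ 2 + 6 * A ^ 2 * (8 * s ^ 2 - 3 * A ^ 2 + 4 * m) - A := by
    linear_combination -16 * hm + 9 * A * hρ.coe_pow_three
  obtain ⟨q, -, hq⟩ := hρ.isSquare_of_mul_sq_eq_quadratic (hmem _ _ hpos hquad) hquad
  refine ⟨q, hq.symm, ?_⟩
  rw [hq] at hquad
  unfold IsHalvingSlope
  linear_combination -hquad

-- The two candidates for `q ^ 2` have product `-A`, so exactly one is positive in `ℝ`.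
lemma exists_isHalvingSlope (hρ : IsResidueMapAtTwo A ρ) (φ : K →+* ℝ)
    (hmem : ∀ x t : K, 0 < φ x → x * t ^ 2 = x ^ 2 + 6 * A ^ 2 * x - A →
      MemDescentGroup (A : K) x) {s η : K} (hs : s ≠ 0) (h : DescentCurve (A : K) (s ^ 2) η) :
    ∃ q, IsHalvingSlope (A : K) s q ∧ (s * (q ^ 2 + 3 * A ^ 2 - 8 * s ^ 2) = 4 * η ∨
      s * (q ^ 2 + 3 * A ^ 2 - 8 * s ^ 2) = -(4 * η)) := by
  obtain ⟨m, rfl⟩ : ∃ m, η = m * s := ⟨η / s, by field_simp⟩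
  have hm : m ^ 2 = 4 * (s ^ 2) ^ 2 - 3 * A ^ 2 * s ^ 2 + 4 * A := by
    apply mul_left_cancel₀ (pow_ne_zero 2 hs)
    unfold DescentCurve at h
    linear_combination h
  have hprod : φ (8 * s ^ 2 - 3 * A ^ 2 + 4 * m) * φ (8 * s ^ 2 - 3 * A ^ 2 + 4 * -m) = -φ A := by
    rw [← map_mul, ← map_neg]
    congr 1
    linear_combination -16 * hm + 9 * A * hρ.coe_pow_three
  have hφA : 0 < φ A :=
    pos_of_pow_three_eq_seven (by rw [← map_pow, hρ.coe_pow_three, map_ofNat])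
  rcases lt_or_ge 0 (φ (8 * s ^ 2 - 3 * A ^ 2 + 4 * m)) with hpos | hneg
  · obtain ⟨q, hq, hslope⟩ := hρ.exists_isHalvingSlope_of_pos φ hmem hm hpos
    exact ⟨q, hslope, .inl (by rw [hq]; ring)⟩
  · have hpos : 0 < φ (8 * s ^ 2 - 3 * A ^ 2 + 4 * -m) := by
      by_contra hneg'
      linarith [mul_nonneg_of_nonpos_of_nonpos hneg (not_lt.1 hneg')]
    obtain ⟨q, hq, hslope⟩ := hρ.exists_isHalvingSlope_of_pos φ hmem (by rwa [neg_sq]) hpos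
    exact ⟨q, hslope, .inr (by rw [hq]; ring)⟩

lemma exists_quartic_eq_of_descentCurve_sq (hρ : IsResidueMapAtTwo A ρ)
    (hA : HasTwoDescent (A : K)) {s : R} {η : K} (hs : ρ s ≠ 0)
    (h : DescentCurve (A : K) ((s : K) ^ 2) η) :
    ∃ g : R, (A ^ 2 + A * g + g ^ 2) ^ 2 = 4 * A + s ^ 2 * (A + 2 * g) ^ 2 := by
  obtain ⟨q, hslope, -⟩ := hA.exists_slope s η (coe_ne_zero_of_map_ne_zero hs) h
  obtain ⟨Q, rfl, -, hQ⟩ := hρ.exists_unit_of_quartic (B := 16 * s ^ 2)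
    (hslope.ne_zero hρ.coe_ne_zero) (by push_cast; exact hslope)
  have hρQ : ρ Q = ρ A := by
    apply hρ.eq_of_pow_four_eq
    have hρeq := congrArg ρ hQ
    simp only [map_mul, map_pow, map_add, map_sub, map_ofNat] at hρeq
    linear_combination hρeq + (8 * ρ s ^ 2 * ρ Q ^ 2 - 3 * ρ A ^ 2 * ρ Q ^ 2) * hρ.two_eq_zero
  obtain ⟨g, rfl⟩ := hρ.exists_eq_add_two_mul hρQ
  refine ⟨g, ?_⟩
  apply mul_left_cancel₀ (pow_ne_zero 4 (subring_two_ne_zero (K := K)))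
  linear_combination hQ + 9 * A * hρ.pow_three

lemma map_eq_of_descentCurve_sq (hρ : IsResidueMapAtTwo A ρ) (hA : HasTwoDescent (A : K)) {s : R}
    {η : K} (hs : ρ s ≠ 0) (h : DescentCurve (A : K) ((s : K) ^ 2) η) : ρ s = ρ A := by
  obtain ⟨g, hg⟩ := hρ.exists_quartic_eq_of_descentCurve_sq hA hs h
  have hρg := congrArg ρ hg
  simp only [map_mul, map_pow, map_add, map_ofNat] at hρg
  have hsA : ρ A ^ 2 + ρ A * ρ g + ρ g ^ 2 = ρ s * ρ A := by
    apply hρ.sq_injective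
    linear_combination hρg + (2 * ρ A + ρ s ^ 2 * (2 * ρ A * ρ g + 2 * ρ g ^ 2)) * hρ.two_eq_zero
  have hne : ρ A ^ 2 + ρ A * ρ g + ρ g ^ 2 ≠ 0 := hsA ▸ mul_ne_zero hs hρ.map_ne_zero
  apply mul_right_cancel₀ hρ.map_ne_zero
  rw [← hsA]
  rcases hρ.residue_cases (ρ g) with hg | hg | hg | hg <;> rw [hg] at hne ⊢
  · ring
  · exact absurd (by linear_combination hρ.sq_add_add_one) hne
  · linear_combination ρ A ^ 2 * hρ.two_eq_zero
  · exact absurd (by linear_combination hρ.sq_add_add_one + (1 + ρ A) * hρ.map_pow_three) hne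

lemma map_eq_sq_of_descentCurve_self_mul_sq (hρ : IsResidueMapAtTwo A ρ)
    (hA : HasTwoDescent (A : K)) {v : R} {η : K} (hv : ρ v ≠ 0)
    (h : DescentCurve (A : K) (A * v ^ 2) η) : ρ (A * v ^ 2) = ρ A ^ 2 := by
  obtain ⟨b, hb⟩ := hρ.exists_mul_eq_one v hv
  have hbK : (v : K) * b = 1 := by exact_mod_cast congrArg Subtype.val hb
  have hρb : ρ v * ρ b = 1 := by rw [← map_mul, hb, map_one]
  have htrans := h.translate_two_torsion hρ.coe_ne_zero (x' := (b : K) ^ 2)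
    (by linear_combination A * (v * b + 1) * hbK)
  rw [hρ.map_eq_of_descentCurve_sq hA (right_ne_zero_of_mul_eq_one hρb) htrans] at hρb
  rw [map_mul, map_pow]
  linear_combination ρ A ^ 2 * (ρ v * ρ A + 1) * hρb - ρ v ^ 2 * ρ A * hρ.map_pow_three

lemma exists_eq_two_sub_mul_sq_of_descentCurve (hρ : IsResidueMapAtTwo A ρ)
    (hA : HasTwoDescent (A : K)) {ξ : R} {η : K} (hξ : ρ ξ ≠ 0) (hξ' : ρ ξ ≠ ρ A ^ 2)
    (h : DescentCurve (A : K) ξ η) : ∃ v : R, ξ = (2 - A) * v ^ 2 ∨ ξ = A * (2 - A) * v ^ 2 := by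
  obtain ⟨s, -, hclass⟩ := hA.memDescentGroup ξ η (coe_ne_zero_of_map_ne_zero hξ) h
  rcases hclass with hs | hs | hs | hs
  · obtain ⟨v, rfl⟩ := hρ.exists_coe_eq_of_sq_eq hs.symm
    obtain rfl : ξ = v ^ 2 := by exact_mod_cast hs
    rw [map_pow] at hξ hξ'
    rw [hρ.map_eq_of_descentCurve_sq hA (pow_ne_zero_iff two_ne_zero |>.1 hξ)
      (by exact_mod_cast h)] at hξ'
    exact absurd rfl hξ'
  · obtain ⟨v, rfl, rfl⟩ := hρ.exists_coe_eq_of_unit_mul_sq_eq hρ.map_ne_zero hs.symm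
    rw [map_mul, map_pow] at hξ
    exact absurd (hρ.map_eq_sq_of_descentCurve_self_mul_sq hA
      (pow_ne_zero_iff two_ne_zero |>.1 (right_ne_zero_of_mul hξ)) (by exact_mod_cast h)) hξ'
  · obtain ⟨v, -, hv⟩ := hρ.exists_coe_eq_of_unit_mul_sq_eq hρ.map_two_sub_ne_zero
      (by push_cast; exact hs.symm)
    exact ⟨v, .inl hv.symm⟩
  · obtain ⟨v, -, hv⟩ := hρ.exists_coe_eq_of_unit_mul_sq_eq (c := A * (2 - A))
      (by rw [map_mul]; exact mul_ne_zero hρ.map_ne_zero hρ.map_two_sub_ne_zero)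
      (by push_cast; exact hs.symm)
    exact ⟨v, .inr hv.symm⟩

lemma isSquare_of_descentCurve_of_pole (hρ : IsResidueMapAtTwo A ρ) (hA : HasTwoDescent (A : K))
    {ξ η : K} {j : ℕ} {c : R} (hc : ρ c ≠ 0) (hξ : ξ * (2 ^ (j + 2)) ^ 2 = c)
    (h : DescentCurve (A : K) ξ η) : ∃ s : K, s ≠ 0 ∧ ξ = s ^ 2 := by
  have hξ0 : ξ ≠ 0 := left_ne_zero_of_mul (hξ ▸ coe_ne_zero_of_map_ne_zero hc)
  obtain ⟨f, rfl⟩ : ∃ f, η = f * ξ := ⟨η / ξ, by field_simp⟩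
  have hf : f ^ 2 * ξ = 4 * ξ ^ 2 - 3 * A ^ 2 * ξ + 4 * A := by
    apply mul_left_cancel₀ hξ0
    unfold DescentCurve at h
    linear_combination h
  obtain ⟨T, -, hT⟩ := hρ.exists_coe_eq_of_unit_mul_sq_eq (x := 2 ^ (j + 1) * f)
    (a := c ^ 2 - 12 * A ^ 2 * c * (2 ^ j) ^ 2 + 256 * (2 ^ j) ^ 4 * A) hc (by
      push_cast
      rw [← hξ]
      linear_combination 64 * (2 ^ j) ^ 4 * hf)
  obtain ⟨b, hb⟩ := hρ.exists_mul_eq_one c hc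
  exact hρ.isSquare_of_isSquareModFour (hA.memDescentGroup ξ _ hξ0 h) hc hξ
    ⟨T, 3 * A ^ 2 * (2 ^ j) ^ 2 - 64 * (2 ^ j) ^ 4 * A * b,
      by linear_combination -b * hT - (c - T ^ 2 - 12 * A ^ 2 * (2 ^ j) ^ 2) * hb⟩

end IsResidueMapAtTwo

end Halving

section HalfPoints

namespace IsResidueMapAtTwo

variable {K : Type*} [Field K] {R : Subring K} {A : R} {F : Type*} [Field F] {ρ : R →+* F}

lemma coe_descentCurve_of_mul_eq_of_add_eq {y y' q : R} (hmul : y * y' = A)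
    (hadd : 4 * (y + y') = 3 * A ^ 2 + q ^ 2) : DescentCurve (A : K) y (q * y) :=
  descentCurve_of_mul_eq_of_add_eq (x' := y') (by exact_mod_cast congrArg Subtype.val hmul)
    (by exact_mod_cast congrArg Subtype.val hadd)

lemma map_ne_sq (hρ : IsResidueMapAtTwo A ρ) : ρ A ≠ ρ A ^ 2 := by
  intro h
  apply hρ.map_ne_one
  apply mul_left_cancel₀ hρ.map_ne_zero
  linear_combination -h

lemma exists_add_eq_of_mul_eq (hρ : IsResidueMapAtTwo A ρ) {y y' ε t : R} (hε : ε ^ 2 = 1)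
    (hmul : y * y' = A) (hy : y = ε * (2 - A) + 4 * t) : ∃ t', y + y' = ε * A ^ 2 + 4 * t' := by
  obtain ⟨κ, hκ⟩ := hρ.exists_sq_eq
  have hinv : (2 - A) * (4 + 2 * A + A ^ 2) = 1 := by linear_combination -hρ.pow_three
  have hquad : y * (y + y') = y ^ 2 + A := by linear_combination hmul
  refine ⟨ε * (2 + A + 2 * κ) + ε * (4 + 2 * A + A ^ 2) * (2 * t * ε * (2 - A) + 4 * t ^ 2)
    - t * (4 + 2 * A + A ^ 2) * ε * (y + y'), ?_⟩
  generalize y + y' = H at hquad ⊢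
  rw [hy] at hquad
  linear_combination ε * (4 + 2 * A + A ^ 2) * hquad - (ε ^ 2 * H - ε ^ 3 * (2 - A)) * hinv +
    (-H + ε * (2 - A)) * hε + ε * hκ + ε * hρ.pow_three

lemma exists_eq_of_mul_eq_sq_sub (hρ : IsResidueMapAtTwo A ρ) {z H ε t : R}
    (hε : ε = 1 ∨ ε = -1) (hH : H = ε * A ^ 2 + 4 * t)
    (h : z * (4 * H - 3 * A ^ 2) = H ^ 2 - 4 * A) : ∃ w, z = -3 * A ^ 2 + 8 * w := by
  obtain ⟨τ, hτ⟩ : ∃ τ, z * A ^ 2 = 3 * A + 8 * τ := by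
    rw [hH] at h
    rcases hε with rfl | rfl
    · exact ⟨A ^ 2 * t + 2 * t ^ 2 - 2 * t * z, by linear_combination h + A * hρ.pow_three⟩
    · exact ⟨-A ^ 2 * t + 2 * t ^ 2 - 2 * t * z + A ^ 2 * z,
        by linear_combination h + A * hρ.pow_three⟩
  exact ⟨z - A * τ, by linear_combination -A * hτ + z * hρ.pow_three⟩

variable [CharZero K]

lemma eight_ne_zero : (8 : R) ≠ 0 :=
  fun h => OfNat.ofNat_ne_zero (R := K) 8 (congrArg Subtype.val h)

lemma four_ne_zero : (4 : R) ≠ 0 :=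
  fun h => OfNat.ofNat_ne_zero (R := K) 4 (congrArg Subtype.val h)

lemma map_eq_zero_of_sq_add_eq (hρ : IsResidueMapAtTwo A ρ) {z e w : R}
    (hz : z = -3 * A ^ 2 + 8 * w) (he : z ^ 2 + A = 8 * e * z) : ρ e = 0 := by
  have hez : e * z = 2 * (4 * A - 3 * A ^ 2 * w + 4 * w ^ 2) := by
    apply mul_left_cancel₀ (eight_ne_zero (K := K))
    rw [hz] at he ⊢
    linear_combination -he + 9 * A * hρ.pow_three
  have hρez := congrArg ρ hez
  rw [hρ.map_two_mul, map_mul] at hρez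
  refine (mul_eq_zero.1 hρez).resolve_right fun hρz => hρ.map_ne_zero ?_
  rw [hz, map_add, hρ.map_eight_mul] at hρz
  simp only [map_mul, map_neg, map_pow, map_ofNat] at hρz
  apply pow_eq_zero_iff two_ne_zero |>.1
  linear_combination hρz + 2 * ρ A ^ 2 * hρ.two_eq_zero

lemma exists_eq_two_sub_add_of_descentCurve (hρ : IsResidueMapAtTwo A ρ)
    (hA : HasTwoDescent (A : K)) {y : R} {η : K} (hy : ρ y = ρ A) (h : DescentCurve (A : K) y η) :
    ∃ ε t : R, (ε = 1 ∨ ε = -1) ∧ y = ε * (2 - A) + 4 * t := by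
  obtain ⟨v, hv | hv⟩ := hρ.exists_eq_two_sub_mul_sq_of_descentCurve hA
    (hy ▸ hρ.map_ne_zero) (hy ▸ hρ.map_ne_sq) h
  all_goals
    have hρv := congrArg ρ hv
    simp only [map_mul, map_pow, map_sub, map_ofNat] at hρv
  · have hv1 : ρ v = 1 := by
      apply hρ.sq_injective
      apply mul_left_cancel₀ hρ.map_ne_zero
      linear_combination -hρv + hy + ρ v ^ 2 * (ρ A - 1) * hρ.two_eq_zero
    obtain ⟨t, ht⟩ := hρ.exists_sq_eq_one_add hv1
    exact ⟨1, (2 - A) * t, .inl rfl, by rw [hv, ht]; ring⟩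
  · have hvA : ρ v = ρ A := by
      apply hρ.sq_injective
      apply mul_left_cancel₀ (pow_ne_zero 2 hρ.map_ne_zero)
      linear_combination -hρv + hy + ρ v ^ 2 * (ρ A ^ 2 - ρ A) * hρ.two_eq_zero
        - ρ A * hρ.map_pow_three
    obtain ⟨t, ht⟩ := hρ.exists_sq_eq_sq_add hvA
    refine ⟨-1, 4 - 2 * A + A * (2 - A) * t, .inr rfl, ?_⟩
    rw [hv, ht]
    linear_combination (2 - A) * hρ.pow_three

lemma exists_half_points (hρ : IsResidueMapAtTwo A ρ) (hA : HasTwoDescent (A : K)) {s : R} {η : K}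
    (hs : ρ s ≠ 0) (h : DescentCurve (A : K) ((s : K) ^ 2) η) :
    ∃ q b : R, ρ q = ρ A ∧ b * (b + s * q) = A ∧ 4 * (b + (b + s * q)) = 3 * A ^ 2 + q ^ 2 := by
  obtain ⟨g, hg⟩ := hρ.exists_quartic_eq_of_descentCurve_sq hA hs h
  have hρH : ρ (A ^ 2 + A * g + g ^ 2) = ρ (s * (A + 2 * g)) := by
    apply hρ.sq_injective
    have hρg := congrArg ρ hg
    rw [map_add, hρ.map_four_mul, zero_add] at hρg
    rw [← map_pow, hρg, ← mul_pow, map_pow]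
  obtain ⟨b, hb⟩ := hρ.exists_eq_add_two_mul hρH
  refine ⟨A + 2 * g, b, by rw [map_add, hρ.map_two_mul, add_zero], ?_, ?_⟩
  · apply mul_left_cancel₀ (four_ne_zero (K := K))
    rw [hb] at hg
    linear_combination hg
  · linear_combination -4 * hb

lemma exists_half_point_map_eq (hρ : IsResidueMapAtTwo A ρ) (hA : HasTwoDescent (A : K)) {s : R}
    {η : K} (hs : ρ s = ρ A) (h : DescentCurve (A : K) ((s : K) ^ 2) η) :
    ∃ (y y' : R) (η' : K), y * y' = A ∧ ρ y = ρ A ∧ DescentCurve (A : K) y η' ∧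
      s ^ 2 * (4 * (y + y') - 3 * A ^ 2) = (y + y') ^ 2 - 4 * A := by
  obtain ⟨q, b, hq, hmul, hadd⟩ := hρ.exists_half_points hA (hs ▸ hρ.map_ne_zero) h
  have hmul' : (b + s * q) * b = A := by rw [mul_comm, hmul]
  have hρmul := congrArg ρ hmul
  rw [map_mul, map_add, map_mul, hs, hq] at hρmul
  rcases hρ.residue_cases (ρ b) with hb | hb | hb | hb
  · exact absurd (by rw [← hρmul, hb, zero_mul]) hρ.map_ne_zero
  · refine ⟨b + s * q, b, _, hmul', ?_,
      coe_descentCurve_of_mul_eq_of_add_eq hmul' (by rw [add_comm, hadd]), ?_⟩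
    · rw [map_add, map_mul, hs, hq, hb]
      linear_combination hρ.sq_add_add_one - ρ A * hρ.two_eq_zero
    · linear_combination s ^ 2 * hadd - 4 * hmul
  · refine ⟨b, b + s * q, _, hmul, hb, coe_descentCurve_of_mul_eq_of_add_eq hmul hadd, ?_⟩
    linear_combination s ^ 2 * hadd - 4 * hmul
  · rw [hb] at hρmul
    exact absurd (by linear_combination -hρmul + ρ A ^ 4 * hρ.two_eq_zero) hρ.map_ne_zero

lemma map_eq_zero_of_descentCurve_sq (hρ : IsResidueMapAtTwo A ρ) (hA : HasTwoDescent (A : K))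
    {s e : R} {η : K} (hs : ρ s = ρ A) (h : DescentCurve (A : K) ((s : K) ^ 2) η)
    (he : (s ^ 2) ^ 2 + A = 8 * e * s ^ 2) : ρ e = 0 := by
  obtain ⟨y, y', η', hmul, hy, hcurve, hsum⟩ := hρ.exists_half_point_map_eq hA hs h
  obtain ⟨ε, t, hε, hyε⟩ := hρ.exists_eq_two_sub_add_of_descentCurve hA hy hcurve
  obtain ⟨t', ht'⟩ := hρ.exists_add_eq_of_mul_eq (by rcases hε with rfl | rfl <;> ring) hmul hyε
  obtain ⟨w, hw⟩ := hρ.exists_eq_of_mul_eq_sq_sub hε ht' hsum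
  exact hρ.map_eq_zero_of_sq_add_eq hw he

lemma map_eq_zero_of_descentCurve (hρ : IsResidueMapAtTwo A ρ) (hA : HasTwoDescent (A : K))
    {z e y : R} {η : K} (hz : z = A ^ 2 + 4 * y) (h : DescentCurve (A : K) z η)
    (he : z ^ 2 + A = 8 * e * z) : ρ e = 0 := by
  have hρz : ρ z = ρ A ^ 2 := by rw [hz, map_add, hρ.map_four_mul, add_zero, map_pow]
  have hz0 : ρ z ≠ 0 := hρz ▸ pow_ne_zero 2 hρ.map_ne_zero
  obtain ⟨s, -, hs⟩ := hρ.isSquare_of_isSquareModFour (m := 1)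
    (hA.memDescentGroup z η (coe_ne_zero_of_map_ne_zero hz0) h) hz0 (by ring) ⟨A, y, hz⟩
  obtain ⟨s, rfl⟩ := hρ.exists_coe_eq_of_sq_eq hs.symm
  obtain rfl : z = s ^ 2 := by exact_mod_cast hs
  exact hρ.map_eq_zero_of_descentCurve_sq hA (hρ.sq_injective (by rw [← hρz, map_pow]))
    (by exact_mod_cast h) he

end IsResidueMapAtTwo

end HalfPoints

section SlopeZeros

namespace IsResidueMapAtTwo

variable {K : Type*} [Field K] {R : Subring K} {A : R} {F : Type*} [Field F] {ρ : R →+* F}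

lemma mul_sq_eq_of_isHalvingSlope {s q : K} {S Q : R} {k : ℕ} (hS : s * 2 ^ (k + 3) = S)
    (hq : q = 2 ^ (k + 1) * Q) (h : IsHalvingSlope (A : K) s q) :
    (S * Q) ^ 2 = 16 * (2 ^ k) ^ 4 * Q ^ 4 + 24 * A ^ 2 * (2 ^ k) ^ 2 * Q ^ 2 - A := by
  apply Subtype.ext
  push_cast
  unfold IsHalvingSlope at h
  rw [hq] at h
  rw [← hS]
  linear_combination -h

variable [CharZero K]

lemma map_eq_zero_of_add_eq_eight_mul (hρ : IsResidueMapAtTwo A ρ) (hA : HasTwoDescent (A : K))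
    {z z' e : R} {η η' : K} (hmul : z * z' = A) (hadd : z + z' = 8 * e) (hz : ρ z = ρ A ^ 2)
    (h : DescentCurve (A : K) z η) (h' : DescentCurve (A : K) z' η') : ρ e = 0 := by
  have hquad : z ^ 2 + A = 8 * e * z := by linear_combination -hmul + z * hadd
  have hquad' : z' ^ 2 + A = 8 * e * z' := by linear_combination -hmul + z' * hadd
  obtain ⟨x, hx⟩ := hρ.exists_eq_add_two_mul (a := z) (b := A ^ 2) (by rw [hz, map_pow])
  have hxz : x * (A ^ 2 + x) = 2 * (e * z - A) := by
    apply mul_left_cancel₀ (four_ne_zero (K := K))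
    rw [hx] at hquad ⊢
    linear_combination hquad - A * hρ.pow_three
  have hρx := congrArg ρ hxz
  rw [hρ.map_two_mul, map_mul, map_add, map_pow] at hρx
  rcases mul_eq_zero.1 hρx with hx0 | hx0
  · obtain ⟨y, hy⟩ := hρ.exists_eq_two_mul x hx0
    exact hρ.map_eq_zero_of_descentCurve hA (y := y) (by rw [hx, hy]; ring) h hquad
  · obtain ⟨y, hy⟩ := hρ.exists_eq_add_two_mul (a := x) (b := A ^ 2) (by
      rw [map_pow]; linear_combination hx0 - ρ A ^ 2 * hρ.two_eq_zero)
    refine hρ.map_eq_zero_of_descentCurve hA (y := 2 * e - y - A ^ 2) ?_ h' hquad'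
    rw [hx, hy] at hadd
    linear_combination hadd

lemma map_eq_of_add_eq_four_mul (hρ : IsResidueMapAtTwo A ρ) {u Q z z' : R} (hu : ρ u = ρ A)
    (hQ : ρ Q ≠ 0) (hmul : z * z' = A) (hadd : z + z' = 8 * u ^ 2 + 4 * u * Q)
    (hz : ρ z = ρ A ^ 2) : ρ Q = ρ A := by
  have hw := hρ.sq_add_add_one
  obtain ⟨x, hx⟩ := hρ.exists_eq_add_two_mul (a := z) (b := A ^ 2) (by rw [hz, map_pow])
  have hxz : 2 * A + A ^ 2 * x + x ^ 2 = (2 * u ^ 2 + u * Q) * z := by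
    apply mul_left_cancel₀ (four_ne_zero (K := K))
    have hquad : z ^ 2 + A = (8 * u ^ 2 + 4 * u * Q) * z := by
      linear_combination -hmul + z * hadd
    rw [hx] at hquad ⊢
    linear_combination hquad - A * hρ.pow_three
  have hρxz := congrArg ρ hxz
  simp only [map_mul, map_pow, map_add, map_ofNat] at hρxz
  rw [hz, hu] at hρxz
  have hQx : ρ Q = ρ x * (ρ x + ρ A ^ 2) := by
    linear_combination -hρxz - ρ Q * hρ.map_pow_three + (ρ A - ρ A ^ 4) * hρ.two_eq_zero
  rw [hQx] at hQ ⊢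
  rcases hρ.residue_cases (ρ x) with hx | hx | hx | hx <;> rw [hx] at hQ ⊢
  · exact absurd (zero_mul _) hQ
  · linear_combination hw - ρ A * hρ.two_eq_zero
  · linear_combination hw + hρ.map_pow_three - ρ A * hρ.two_eq_zero
  · exact absurd (by linear_combination ρ A ^ 4 * hρ.two_eq_zero) hQ

lemma map_eq_of_half_points_add_eq (hρ : IsResidueMapAtTwo A ρ) (hA : HasTwoDescent (A : K))
    {u Q z z' : R} {η η' : K} {k : ℕ} (hu : ρ u = ρ A) (hQ : ρ Q ≠ 0) (hmul : z * z' = A)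
    (hadd : z + z' = 8 * u ^ 2 + 4 * 2 ^ k * u * Q) (hz : ρ z = ρ A ^ 2)
    (h : DescentCurve (A : K) z η) (h' : DescentCurve (A : K) z' η') : ρ Q = ρ A := by
  rcases k with _ | _ | k
  · exact hρ.map_eq_of_add_eq_four_mul hu hQ hmul (by rw [hadd]; ring) hz
  · have hsum := hρ.map_eq_zero_of_add_eq_eight_mul (e := u ^ 2 + u * Q) hA hmul
      (by rw [hadd]; ring) hz h h'
    rw [map_add, map_mul, map_pow, hu] at hsum
    apply mul_left_cancel₀ hρ.map_ne_zero
    linear_combination hsum - ρ A ^ 2 * hρ.two_eq_zero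
  · have hsum := hρ.map_eq_zero_of_add_eq_eight_mul (e := u ^ 2 + 2 * (2 ^ k * u * Q)) hA hmul
      (by rw [hadd]; ring) hz h h'
    rw [map_add, hρ.map_two_mul, add_zero, map_pow, hu] at hsum
    exact absurd hsum (pow_ne_zero 2 hρ.map_ne_zero)

lemma map_eq_of_descentCurve_two_mul_sq (hρ : IsResidueMapAtTwo A ρ) (hA : HasTwoDescent (A : K))
    {u Q : R} {k : ℕ} (hu : ρ u = ρ A) (hQ : ρ Q ≠ 0)
    (h : DescentCurve (A : K) ((2 * u : K) ^ 2) (2 ^ (k + 1) * Q * (2 * u) ^ 2)) :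
    ρ Q = ρ A := by
  have hu0 : (2 * u : K) ≠ 0 :=
    mul_ne_zero two_ne_zero (coe_ne_zero_of_map_ne_zero (hu ▸ hρ.map_ne_zero))
  obtain ⟨q, hslope, hq⟩ := hA.exists_slope _ _ hu0 h
  obtain ⟨Y, rfl, -, hY⟩ := hρ.exists_unit_of_quartic (B := 64 * u ^ 2)
    (hslope.ne_zero hρ.coe_ne_zero) (by
      unfold IsHalvingSlope at hslope; push_cast; linear_combination hslope)
  have hρY : ρ Y = ρ A := by
    apply hρ.eq_of_pow_four_eq
    have hρeq := congrArg ρ hY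
    simp only [map_mul, map_pow, map_add, map_sub, map_ofNat] at hρeq
    linear_combination hρeq + (32 * ρ u ^ 2 * ρ Y ^ 2 - 3 * ρ A ^ 2 * ρ Y ^ 2) * hρ.two_eq_zero
  have hmain : ∀ P : R, ρ P ≠ 0 → (Y : K) ^ 2 + 3 * A ^ 2 - 8 * (2 * u) ^ 2 =
      16 * 2 ^ k * P * u → ρ P = ρ A := by
    intro P hP hYP
    obtain ⟨hmul, hz, hz'⟩ := hslope.descentCurve hρ.coe_pow_three
      (x := ((4 * u ^ 2 + 2 * 2 ^ k * P * u + u * Y : R) : K))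
      (x' := ((4 * u ^ 2 + 2 * 2 ^ k * P * u - u * Y : R) : K))
      (by push_cast; linear_combination -hYP) (by push_cast; linear_combination -hYP)
    refine hρ.map_eq_of_half_points_add_eq hA hu hP (by exact_mod_cast hmul) (by ring) ?_ hz hz'
    simp only [map_mul, map_pow, map_add, map_ofNat]
    rw [hu, hρY]
    linear_combination (2 * ρ A ^ 2 + (2 : F) ^ k * ρ P * ρ A) * hρ.two_eq_zero
  rcases hq with hq | hq
  · exact hmain Q hQ (mul_left_cancel₀ hu0 (by rw [hq]; ring))
  · have hneg := hmain (-Q) (by rw [map_neg]; exact neg_ne_zero.2 hQ)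
      (mul_left_cancel₀ hu0 (by rw [hq]; push_cast; ring))
    rw [map_neg] at hneg
    linear_combination -hneg - ρ A * hρ.two_eq_zero

lemma exists_add_eq_of_mul_eq_neg_sq_add (hρ : IsResidueMapAtTwo A ρ) {S Q p n : R}
    (h : (S * Q) ^ 2 = 16 * n ^ 4 * Q ^ 4 + 24 * A ^ 2 * n ^ 2 * Q ^ 2 - A)
    (hp : S * Q = -A ^ 2 + 4 * p) : ∃ g, p + n ^ 2 * Q ^ 2 = A ^ 2 + 2 * g := by
  have hp' : A - A ^ 2 * p + 2 * p ^ 2 = 2 * n ^ 4 * Q ^ 4 + 3 * A ^ 2 * n ^ 2 * Q ^ 2 := by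
    apply mul_left_cancel₀ (eight_ne_zero (K := K))
    rw [hp] at h
    linear_combination h - A * hρ.pow_three
  apply hρ.exists_eq_add_two_mul
  have hρp := congrArg ρ hp'
  simp only [map_mul, map_pow, map_add, map_sub, map_ofNat] at hρp ⊢
  linear_combination -ρ A * hρp - (ρ p + ρ n ^ 2 * ρ Q ^ 2) * hρ.map_pow_three +
    (ρ A * ρ p ^ 2 - ρ A * ρ n ^ 4 * ρ Q ^ 4 - ρ A ^ 3 * ρ n ^ 2 * ρ Q ^ 2) * hρ.two_eq_zero

lemma exists_descentCurve_two_mul_sq (hρ : IsResidueMapAtTwo A ρ) (hA : HasTwoDescent (A : K))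
    {ξ η : K} {g : R} (hmul : (3 * A ^ 2 + 4 * g : K) / 4 * ξ = A)
    (h : DescentCurve (A : K) ξ η) : ∃ u : R, ρ u = ρ A ∧ ξ = (2 * u : K) ^ 2 := by
  have hρx : ρ (3 * A ^ 2 + 4 * g) = ρ A ^ 2 := by
    rw [map_add, hρ.map_four_mul, map_mul, map_pow, map_ofNat]
    linear_combination ρ A ^ 2 * hρ.two_eq_zero
  obtain ⟨b, hb⟩ := hρ.exists_mul_eq_one (3 * A ^ 2 + 4 * g)
    (hρx ▸ pow_ne_zero 2 hρ.map_ne_zero)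
  have hbK : (3 * (A : K) ^ 2 + 4 * g) * b = 1 := by exact_mod_cast congrArg Subtype.val hb
  have hρb : ρ b = ρ A := by
    have hρeq := congrArg ρ hb
    rw [map_mul, hρx, map_one] at hρeq
    linear_combination ρ A * hρeq - ρ b * hρ.map_pow_three
  have hξ : ξ = 4 * A * b := by linear_combination 4 * b * hmul - ξ * hbK
  have hρAb : ρ (A * b) = ρ A ^ 2 := by rw [map_mul, hρb, sq]
  obtain ⟨s, -, hs⟩ := hρ.isSquare_of_isSquareModFour (m := 1 / 2) (c := A * b)
    (hA.memDescentGroup ξ _ (right_ne_zero_of_mul (hmul ▸ hρ.coe_ne_zero)) h)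
    (hρAb ▸ pow_ne_zero 2 hρ.map_ne_zero) (by rw [hξ]; push_cast; ring)
    ⟨A, -(5 + g * A) * A * b, by linear_combination A ^ 2 * hb - 3 * A * b * hρ.pow_three⟩
  have hu : (s / 2) ^ 2 = (A * b : R) := by push_cast; rw [div_pow, ← hs, hξ]; ring
  obtain ⟨u, hsu⟩ := hρ.exists_coe_eq_of_sq_eq hu
  refine ⟨u, hρ.sq_injective ?_, by rw [hs, ← hsu]; ring⟩
  rw [hsu] at hu
  rw [← hρAb, ← map_pow]
  exact congrArg ρ (by exact_mod_cast hu)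

lemma map_slope_eq_of_zero_of_mul_eq (hρ : IsResidueMapAtTwo A ρ) (hA : HasTwoDescent (A : K))
    {s q : K} {S Q p : R} {k : ℕ} (hS : s * 2 ^ (k + 3) = S) (hq : q = 2 ^ (k + 1) * Q)
    (hQ : ρ Q ≠ 0) (h : IsHalvingSlope (A : K) s q) (hp : S * Q = -A ^ 2 + 4 * p) :
    ρ Q = ρ A := by
  have hsq : 4 * s * q = -A ^ 2 + 4 * p := by
    have hpK : (S * Q : K) = -A ^ 2 + 4 * p := by exact_mod_cast congrArg Subtype.val hp
    rw [← hpK, hq, ← hS]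
    ring
  obtain ⟨g, hg⟩ := hρ.exists_add_eq_of_mul_eq_neg_sq_add (mul_sq_eq_of_isHalvingSlope hS hq h) hp
  have hgK : (p : K) + (2 ^ k) ^ 2 * Q ^ 2 = A ^ 2 + 2 * g := by
    exact_mod_cast congrArg Subtype.val hg
  obtain ⟨hmul, -, hcurve⟩ := h.descentCurve hρ.coe_pow_three
    (x := (3 * (A : K) ^ 2 + 4 * g) / 4) (x' := (3 * (A : K) ^ 2 + q ^ 2 - 4 * s * q) / 8)
    (by rw [hsq, hq]; linear_combination -4 * hgK) (by ring)
  obtain ⟨u, hu, hξ⟩ := hρ.exists_descentCurve_two_mul_sq hA hmul hcurve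
  rw [hξ, hq] at hcurve
  exact hρ.map_eq_of_descentCurve_two_mul_sq hA hu hQ hcurve

lemma map_eq_of_slope_zero (hρ : IsResidueMapAtTwo A ρ) (hA : HasTwoDescent (A : K))
    {s q : K} {S Q : R} {k : ℕ} (hS : s * 2 ^ (k + 3) = S) (hq : q = 2 ^ (k + 1) * Q)
    (hQ : ρ Q ≠ 0) (h : IsHalvingSlope (A : K) s q) : ρ S = ρ A := by
  have hSQ := mul_sq_eq_of_isHalvingSlope hS hq h
  have hρSQ : ρ (S * Q) = ρ (A ^ 2) := by
    apply hρ.sq_injective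
    rw [← map_pow, hSQ]
    simp only [map_mul, map_pow, map_add, map_sub, map_ofNat]
    linear_combination (8 * ((2 : F) ^ k) ^ 4 * ρ Q ^ 4 + 12 * ρ A ^ 2 * ((2 : F) ^ k) ^ 2 * ρ Q ^ 2
      - ρ A) * hρ.two_eq_zero - ρ A * hρ.map_pow_three
  obtain ⟨r, hr⟩ := hρ.exists_eq_add_two_mul hρSQ
  have hr2 : r * (r + A ^ 2) =
      2 * (2 * (2 ^ k) ^ 4 * Q ^ 4 + 3 * A ^ 2 * (2 ^ k) ^ 2 * Q ^ 2 - A) := by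
    apply mul_left_cancel₀ (four_ne_zero (K := K))
    rw [hr] at hSQ
    linear_combination hSQ - A * hρ.pow_three
  have hρr := congrArg ρ hr2
  rw [hρ.map_two_mul, map_mul, map_add, map_pow] at hρr
  have hQA : ρ Q = ρ A := by
    rcases mul_eq_zero.1 hρr with hr0 | hr0
    · obtain ⟨p, rfl⟩ := hρ.exists_eq_two_mul r hr0
      exact hρ.map_slope_eq_of_zero_of_mul_eq hA (S := -S) (p := -p)
        (by push_cast; rw [← hS]; ring) hq hQ h.neg (by linear_combination -hr)
    · obtain ⟨p, rfl⟩ := hρ.exists_eq_add_two_mul (a := r) (b := A ^ 2) (by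
        rw [map_pow]; linear_combination hr0 - ρ A ^ 2 * hρ.two_eq_zero)
      exact hρ.map_slope_eq_of_zero_of_mul_eq hA (p := p + A ^ 2) hS hq hQ h (by rw [hr]; ring)
  rw [map_mul, map_pow, hQA, sq] at hρSQ
  exact mul_right_cancel₀ hρ.map_ne_zero hρSQ

end IsResidueMapAtTwo

end SlopeZeros

section SlopePoles

namespace IsResidueMapAtTwo

variable {K : Type*} [Field K] {R : Subring K} {A : R} {F : Type*} [Field F] {ρ : R →+* F}

lemma map_sq_mul_sq_ne_two_mul (hρ : IsResidueMapAtTwo A ρ) {S Q t : R} (hS : ρ S ≠ 0)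
    (hQ : ρ Q ≠ 0) : S ^ 2 * Q ^ 2 ≠ 2 * t := by
  intro h
  have hρh := congrArg ρ h
  rw [hρ.map_two_mul, map_mul, map_pow, map_pow] at hρh
  exact mul_ne_zero (pow_ne_zero 2 hS) (pow_ne_zero 2 hQ) hρh

variable [CharZero K]

lemma exponent_eq_of_eq_two_pow_mul (hρ : IsResidueMapAtTwo A ρ) {q : K} {S Q : R} {n e : ℕ}
    (hS : ρ S ≠ 0) (hQ : ρ Q ≠ 0) (hq : q = 2 ^ e * Q)
    (h : (2 ^ n) ^ 2 * (q ^ 4 + 6 * A ^ 2 * q ^ 2 - A) = (S : K) ^ 2 * q ^ 2) : e = n := by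
  have hpow (j : ℕ) : ((2 : K) ^ j) ^ 2 ≠ 0 := pow_ne_zero 2 (pow_ne_zero j two_ne_zero)
  rw [hq] at h
  rcases lt_trichotomy e n with hlt | rfl | hgt
  · obtain ⟨d, rfl⟩ := Nat.exists_eq_add_of_lt hlt
    have heven : S ^ 2 * Q ^ 2 = 2 * (2 * (2 ^ d) ^ 2 *
        ((2 ^ e * Q) ^ 4 + 6 * A ^ 2 * (2 ^ e * Q) ^ 2 - A)) := by
      apply Subtype.ext
      push_cast
      apply mul_left_cancel₀ (hpow e)
      linear_combination -h
    exact absurd heven (hρ.map_sq_mul_sq_ne_two_mul hS hQ)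
  · rfl
  · obtain ⟨d, rfl⟩ := Nat.exists_eq_add_of_lt hgt
    have heven : A = 2 * (8 * (2 ^ (n + d)) ^ 4 * Q ^ 4 +
        12 * A ^ 2 * (2 ^ (n + d)) ^ 2 * Q ^ 2 - 2 * (2 ^ d) ^ 2 * S ^ 2 * Q ^ 2) := by
      apply Subtype.ext
      push_cast
      apply mul_left_cancel₀ (hpow n)
      linear_combination -h
    exact absurd (by rw [heven, hρ.map_two_mul]) hρ.map_ne_zero

lemma exponent_eq_of_mul_two_pow_eq (hρ : IsResidueMapAtTwo A ρ) {q : K} {S Q : R} {n e : ℕ}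
    (hS : ρ S ≠ 0) (hQ : ρ Q ≠ 0) (hq : q * 2 ^ e = Q)
    (h : (2 ^ n) ^ 2 * (q ^ 4 + 6 * A ^ 2 * q ^ 2 - A) = (S : K) ^ 2 * q ^ 2) : e = n := by
  have hpow (j : ℕ) : ((2 : K) ^ j) ^ 2 ≠ 0 := pow_ne_zero 2 (pow_ne_zero j two_ne_zero)
  have hQK : (2 ^ n) ^ 2 * (Q ^ 4 + 6 * A ^ 2 * (2 ^ e) ^ 2 * Q ^ 2 - (2 ^ e) ^ 4 * A) =
      (S : K) ^ 2 * Q ^ 2 * (2 ^ e) ^ 2 := by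
    rw [← hq]
    linear_combination (2 ^ e) ^ 4 * h
  rcases lt_trichotomy e n with hlt | rfl | hgt
  · obtain ⟨d, rfl⟩ := Nat.exists_eq_add_of_lt hlt
    have heven : S ^ 2 * Q ^ 2 = 2 * (2 * (2 ^ d) ^ 2 *
        (Q ^ 4 + 6 * A ^ 2 * (2 ^ e) ^ 2 * Q ^ 2 - (2 ^ e) ^ 4 * A)) := by
      apply Subtype.ext
      push_cast
      apply mul_left_cancel₀ (hpow e)
      linear_combination -hQK
    exact absurd heven (hρ.map_sq_mul_sq_ne_two_mul hS hQ)
  · rfl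
  · obtain ⟨d, rfl⟩ := Nat.exists_eq_add_of_lt hgt
    have heven : Q ^ 2 * Q ^ 2 = 2 * (2 * (2 ^ d) ^ 2 * S ^ 2 * Q ^ 2 -
        12 * A ^ 2 * (2 ^ (n + d)) ^ 2 * Q ^ 2 + 8 * (2 ^ (n + d)) ^ 4 * A) := by
      apply Subtype.ext
      push_cast
      apply mul_left_cancel₀ (hpow n)
      linear_combination hQK
    exact absurd heven (hρ.map_sq_mul_sq_ne_two_mul hQ hQ)

lemma exists_unit_slope (hρ : IsResidueMapAtTwo A ρ) {q : K} {S : R} {n : ℕ} (hS : ρ S ≠ 0)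
    (hq : q ≠ 0) (h : (2 ^ n) ^ 2 * (q ^ 4 + 6 * A ^ 2 * q ^ 2 - A) = (S : K) ^ 2 * q ^ 2) :
    ∃ Q : R, ρ Q ≠ 0 ∧ (q = 2 ^ n * Q ∨ q * 2 ^ n = Q) := by
  obtain ⟨Q, hQ, hqQ | ⟨m, hqQ | hqQ⟩⟩ := hρ.exists_unit q hq
  · obtain rfl := hρ.exponent_eq_of_eq_two_pow_mul (e := 0) hS hQ (by simpa using hqQ) h
    exact ⟨Q, hQ, .inl (by simpa using hqQ)⟩
  · obtain rfl := hρ.exponent_eq_of_eq_two_pow_mul hS hQ hqQ h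
    exact ⟨Q, hQ, .inl hqQ⟩
  · obtain rfl := hρ.exponent_eq_of_mul_two_pow_eq hS hQ hqQ h
    exact ⟨Q, hQ, .inr hqQ⟩

lemma map_slope_eq_of_pole_of_add_eq (hρ : IsResidueMapAtTwo A ρ) (hA : HasTwoDescent (A : K))
    {k : ℕ} (ih : ∀ (s η : K) (S : R), DescentCurve (A : K) (s ^ 2) η → s * 2 ^ (k + 2) = S →
      ρ S ≠ 0 → ρ S = ρ A) {s q : K} {S Q T : R} (hS : s * 2 ^ (k + 3) = S)
    (hq : q * 2 ^ (k + 1) = Q) (hQ : ρ Q ≠ 0) (h : IsHalvingSlope (A : K) s q)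
    (hT : Q + S = 2 * T) (hTQ : ρ T = ρ Q) : ρ Q = ρ A := by
  obtain ⟨-, hcurve, -⟩ := h.descentCurve hρ.coe_pow_three
    (x := (3 * (A : K) ^ 2 + q ^ 2 + 4 * s * q) / 8)
    (x' := (3 * (A : K) ^ 2 + q ^ 2 - 4 * s * q) / 8) (by ring) (by ring)
  have hpole : (3 * (A : K) ^ 2 + q ^ 2 + 4 * s * q) / 8 * (2 ^ (k + 2)) ^ 2 =
      ((6 * A ^ 2 * (2 ^ k) ^ 2 + Q * T : R) : K) := by
    have hTK : (Q : K) + S = 2 * T := by exact_mod_cast congrArg Subtype.val hT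
    push_cast
    rw [← hS, ← hq] at hTK
    rw [← hq]
    linear_combination q * 2 ^ (k + 1) / 2 * hTK
  have hρc : ρ (6 * A ^ 2 * (2 ^ k) ^ 2 + Q * T) = ρ Q ^ 2 := by
    simp only [map_mul, map_pow, map_add, map_ofNat]
    rw [hTQ]
    linear_combination 3 * ρ A ^ 2 * ((2 : F) ^ k) ^ 2 * hρ.two_eq_zero
  obtain ⟨s', -, hs'⟩ :=
    hρ.isSquare_of_descentCurve_of_pole hA (hρc ▸ pow_ne_zero 2 hQ) hpole hcurve
  rw [hs'] at hpole hcurve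
  rw [← mul_pow] at hpole
  obtain ⟨S', hS'⟩ := hρ.exists_coe_eq_of_sq_eq hpole
  have hρS' : ρ S' = ρ Q := by
    apply hρ.sq_injective
    rw [← hρc, ← map_pow]
    rw [hS'] at hpole
    exact congrArg ρ (by exact_mod_cast hpole)
  rw [← hρS']
  exact ih s' _ S' hcurve hS' (hρS' ▸ hQ)

lemma map_eq_of_slope_pole (hρ : IsResidueMapAtTwo A ρ) (hA : HasTwoDescent (A : K))
    {k : ℕ} (ih : ∀ (s η : K) (S : R), DescentCurve (A : K) (s ^ 2) η → s * 2 ^ (k + 2) = S →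
      ρ S ≠ 0 → ρ S = ρ A) {s q : K} {S Q : R} (hS : s * 2 ^ (k + 3) = S)
    (hq : q * 2 ^ (k + 1) = Q) (hQ : ρ Q ≠ 0) (h : IsHalvingSlope (A : K) s q) :
    ρ S = ρ A := by
  have hquartic : Q ^ 4 + 24 * A ^ 2 * (2 ^ k) ^ 2 * Q ^ 2 - 16 * (2 ^ k) ^ 4 * A =
      S ^ 2 * Q ^ 2 := by
    apply Subtype.ext
    push_cast
    rw [← hS, ← hq]
    unfold IsHalvingSlope at h
    linear_combination (2 ^ (k + 1)) ^ 4 * h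
  have hQS : ρ Q = ρ S := by
    apply hρ.sq_injective
    apply mul_right_cancel₀ (pow_ne_zero 2 hQ)
    have hρq := congrArg ρ hquartic
    simp only [map_mul, map_pow, map_add, map_sub, map_ofNat] at hρq
    linear_combination hρq + (8 * ((2 : F) ^ k) ^ 4 * ρ A -
      12 * ρ A ^ 2 * ((2 : F) ^ k) ^ 2 * ρ Q ^ 2) * hρ.two_eq_zero
  rw [← hQS]
  obtain ⟨T, hT⟩ := hρ.exists_eq_two_mul (Q + S)
    (by rw [map_add, ← hQS]; linear_combination ρ Q * hρ.two_eq_zero)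
  have hTQ : Q ^ 2 * (T * (T - Q)) =
      2 * (3 * A ^ 2 * (2 ^ k) ^ 2 * Q ^ 2 - 2 * (2 ^ k) ^ 4 * A) := by
    apply mul_left_cancel₀ (four_ne_zero (K := K))
    obtain rfl : S = 2 * T - Q := by linear_combination hT
    linear_combination -hquartic
  have hρT := congrArg ρ hTQ
  rw [hρ.map_two_mul, map_mul, map_mul, map_sub, map_pow] at hρT
  rcases mul_eq_zero.1 ((mul_eq_zero.1 hρT).resolve_left (pow_ne_zero 2 hQ)) with hT0 | hT0
  · exact hρ.map_slope_eq_of_pole_of_add_eq hA ih (S := -S) (T := Q - T)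
      (by push_cast; rw [← hS]; ring) hq hQ h.neg (by linear_combination -hT)
      (by rw [map_sub, hT0, sub_zero])
  · exact hρ.map_slope_eq_of_pole_of_add_eq hA ih hS hq hQ h hT (sub_eq_zero.1 hT0)

lemma map_eq_of_descentCurve_sq_of_simple_pole (hρ : IsResidueMapAtTwo A ρ)
    (hA : HasTwoDescent (A : K)) {s η : K} {S : R} (h : DescentCurve (A : K) (s ^ 2) η)
    (hS : s * 4 = S) (hρS : ρ S ≠ 0) : ρ S = ρ A := by
  have hs : s ≠ 0 := left_ne_zero_of_mul (hS ▸ coe_ne_zero_of_map_ne_zero hρS)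
  obtain ⟨q, hslope, -⟩ := hA.exists_slope s η hs h
  obtain ⟨Q, rfl, hQ, hquartic⟩ := hρ.exists_unit_of_quartic (B := S ^ 2)
    (hslope.ne_zero hρ.coe_ne_zero) (by
      unfold IsHalvingSlope at hslope; push_cast; rw [← hS]; linear_combination hslope)
  have hρq := congrArg ρ hquartic
  simp only [map_mul, map_pow, map_add, map_sub, map_ofNat] at hρq
  have hSQ : ρ S ^ 2 * ρ Q ^ 2 = ρ Q ^ 4 + ρ A := by
    linear_combination -hρq + (3 * ρ A ^ 2 * ρ Q ^ 2 - ρ A) * hρ.two_eq_zero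
  have hw := hρ.sq_add_add_one
  have hw3 := hρ.map_pow_three
  apply hρ.sq_injective
  rcases hρ.residue_cases (ρ Q) with hx | hx | hx | hx
  · exact absurd hx hQ
  · rw [hx] at hSQ
    linear_combination hSQ + hw - ρ A ^ 2 * hρ.two_eq_zero
  · rw [hx] at hSQ
    exact absurd (by linear_combination hSQ + ρ A * hw3 + ρ A * hρ.two_eq_zero)
      (mul_ne_zero (pow_ne_zero 2 hρS) (pow_ne_zero 2 hρ.map_ne_zero))
  · rw [hx] at hSQ
    linear_combination ρ A ^ 2 * hSQ + (-ρ S ^ 2 * (ρ A ^ 3 + 1) + ρ A ^ 7 + ρ A ^ 4 + ρ A + 1) *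
      hw3 + hw - ρ A ^ 2 * hρ.two_eq_zero

-- A point near the origin is halved until its `x`-coordinate has pole order at most `4`.
lemma map_eq_of_descentCurve_sq_of_pole (hρ : IsResidueMapAtTwo A ρ) (hA : HasTwoDescent (A : K))
    {k : ℕ} (s η : K) (S : R) (h : DescentCurve (A : K) (s ^ 2) η) (hS : s * 2 ^ (k + 2) = S)
    (hρS : ρ S ≠ 0) : ρ S = ρ A := by
  induction k generalizing s η S with
  | zero => exact hρ.map_eq_of_descentCurve_sq_of_simple_pole hA h (by rw [← hS]; ring) hρS
  | succ k ih =>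
    have hs : s ≠ 0 := left_ne_zero_of_mul (hS ▸ coe_ne_zero_of_map_ne_zero hρS)
    obtain ⟨q, hslope, -⟩ := hA.exists_slope s η hs h
    obtain ⟨Q, hQ, hq | hq⟩ := hρ.exists_unit_slope (n := k + 1) hρS
      (hslope.ne_zero hρ.coe_ne_zero) (by
        unfold IsHalvingSlope at hslope; rw [← hS, hslope]; ring)
    · exact hρ.map_eq_of_slope_zero hA hS hq hQ hslope
    · exact hρ.map_eq_of_slope_pole hA ih hS hq hQ hslope

end IsResidueMapAtTwo

end SlopePoles

section Translation

variable {K : Type*} [Field K] {a : K}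

-- The line `η = l * ξ + (η₁ - l * x)` meets the curve in the points over `x`, `g` and `x₃`.
lemma DescentCurve.chord {l x g x₃ η₁ η₂ : K} (h₁ : DescentCurve a x η₁) (h₂ : DescentCurve a g η₂)
    (hne : x ≠ g) (hl : l * (x - g) = η₁ - η₂)
    (hx₃ : 4 * x₃ = l ^ 2 + 3 * a ^ 2 - 4 * x - 4 * g) :
    (η₁ - l * x) ^ 2 = 4 * x * g * x₃ ∧ DescentCurve a x₃ (l * x₃ + (η₁ - l * x)) := by
  obtain ⟨n, rfl⟩ : ∃ n, η₁ = l * x + n := ⟨η₁ - l * x, by ring⟩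
  obtain rfl : η₂ = l * g + n := by linear_combination hl
  unfold DescentCurve at *
  have hsymm₂ : 4 * a - 2 * l * n = 4 * (x₃ * (x + g) + x * g) := by
    apply mul_left_cancel₀ (sub_ne_zero.2 hne)
    linear_combination h₂ - h₁ - (x - g) * (x + g) * hx₃
  have hsymm₃ : n ^ 2 = 4 * x * g * x₃ := by
    linear_combination h₁ + x * hsymm₂ + x ^ 2 * hx₃
  exact ⟨by linear_combination hsymm₃, by linear_combination -x₃ * hsymm₂ + hsymm₃ - x₃ ^ 2 * hx₃⟩

variable [CharZero K]

-- The image of `(0 : 1 : 1)`.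
lemma descentCurve_base (ha : a ^ 3 = 7) : DescentCurve a ((a ^ 2 - 1) / 3) ((a + 1) / 3) := by
  unfold DescentCurve
  linear_combination (-(4 * a ^ 3 - 12 * a + 28) / 27 + (a ^ 3 + 7 - 2 * a) / 3 - 4 / 3) * ha

-- `(a ^ 2 - 1) / 3` is `2 - a` times the square of `(a - 1) ^ 2 / 3`, so translation by the base
-- point moves the class of `2 - a` to the trivial one.
lemma DescentCurve.exists_eq_sq_of_translate (ha : a ^ 3 = 7) {ξ η l s x₃ : K}
    (h : DescentCurve a ξ η) (hs : s ≠ 0) (hξ : ξ = (2 - a) * s ^ 2) (hne : ξ ≠ (a ^ 2 - 1) / 3)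
    (hl : l * (ξ - (a ^ 2 - 1) / 3) = η - (a + 1) / 3)
    (hx₃ : 4 * x₃ = l ^ 2 + 3 * a ^ 2 - 4 * ξ - 4 * ((a ^ 2 - 1) / 3)) :
    ∃ s₃ η₃, x₃ = s₃ ^ 2 ∧ DescentCurve a (s₃ ^ 2) η₃ := by
  obtain ⟨hprod, hcurve⟩ := h.chord (descentCurve_base ha) hne hl hx₃
  have ha1 : a - 1 ≠ 0 := by
    intro h1
    rw [sub_eq_zero.1 h1] at ha
    norm_num at ha
  have hsq : x₃ = (3 * (η - l * ξ) / (2 * s * (a - 1) ^ 2)) ^ 2 := by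
    field_simp
    rw [hξ] at hprod ⊢
    linear_combination -9 * hprod + 4 * s ^ 2 * x₃ * (a - 1) * ha
  exact ⟨_, _, hsq, hsq ▸ hcurve⟩

end Translation

/-- `x` lies in the square class of `1` or of `2 - a`: those are the classes of `MemDescentGroup a`
whose norm to `ℚ` is a square when `a ^ 3 = 7`. -/
def MemSquareNormClass {K : Type*} [Field K] (a x : K) : Prop :=
  ∃ s : K, s ≠ 0 ∧ (x = s ^ 2 ∨ x = (2 - a) * s ^ 2)

section Exclusion

namespace IsResidueMapAtTwo

variable {K : Type*} [Field K] {R : Subring K} {A : R} {F : Type*} [Field F] {ρ : R →+* F}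

lemma map_sq_ne_one (hρ : IsResidueMapAtTwo A ρ) : ρ A ^ 2 ≠ 1 := by
  intro h
  exact hρ.map_ne_one (by linear_combination hρ.map_pow_three - ρ A * h)

lemma exists_inv_three (hρ : IsResidueMapAtTwo A ρ) : ∃ g : R, 3 * g = 1 ∧ ρ g = 1 := by
  obtain ⟨g, hg⟩ := hρ.exists_mul_eq_one 3 (by
    rw [map_ofNat]
    intro h
    exact one_ne_zero (α := F) (by linear_combination h - hρ.two_eq_zero))
  refine ⟨g, hg, ?_⟩
  have hρg := congrArg ρ hg
  rw [map_mul, map_one, map_ofNat] at hρg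
  linear_combination hρg - ρ g * hρ.two_eq_zero

lemma exists_eq_sq_or_two_sub_mul_sq (hρ : IsResidueMapAtTwo A ρ) {ξ m : K} {c : R}
    (h : MemSquareNormClass (A : K) ξ) (hc : ξ * m ^ 2 = c) :
    ∃ S : R, c = S ^ 2 ∨ c = (2 - A) * S ^ 2 := by
  obtain ⟨s, -, rfl | rfl⟩ := h
  · rw [← mul_pow] at hc
    obtain ⟨S, hS⟩ := hρ.exists_coe_eq_of_sq_eq hc
    rw [hS] at hc
    exact ⟨S, .inl (by exact_mod_cast hc.symm)⟩
  · obtain ⟨S, -, hS⟩ := hρ.exists_coe_eq_of_unit_mul_sq_eq (x := s * m) (a := c)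
      hρ.map_two_sub_ne_zero (by push_cast; rw [← hc]; ring)
    exact ⟨S, .inr hS.symm⟩

lemma exists_eq_one_add_of_memSquareNormClass (hρ : IsResidueMapAtTwo A ρ) {ξ m : K} {c : R}
    (h : MemSquareNormClass (A : K) ξ) (hc : ξ * m ^ 2 = c) (hρc : ρ c = 1) :
    (∃ t, c = 1 + 4 * t) ∨ ∃ t, c = 1 + 2 * A ^ 2 + 4 * t := by
  obtain ⟨S, rfl | rfl⟩ := hρ.exists_eq_sq_or_two_sub_mul_sq h hc
  · rw [map_pow] at hρc
    exact .inl (hρ.exists_sq_eq_one_add (hρ.sq_injective (by rw [hρc, one_pow])))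
  · rw [map_mul, map_sub, map_ofNat, map_pow] at hρc
    obtain ⟨t, ht⟩ := hρ.exists_sq_eq_sq_add (u := S) (hρ.sq_injective (by
      linear_combination ρ A ^ 2 * hρc - ρ S ^ 2 * hρ.map_pow_three +
        (ρ S ^ 2 * ρ A ^ 3 - ρ S ^ 2 * ρ A ^ 2) * hρ.two_eq_zero))
    exact .inr ⟨-2 + (2 - A) * t, by rw [ht]; linear_combination -hρ.pow_three⟩

lemma exists_eq_mul_of_descentCurve (hρ : IsResidueMapAtTwo A ρ) {ξ η : K} {c : R}
    (h : DescentCurve (A : K) ξ η) (hc : ξ * 2 ^ 2 = c) (hρc : ρ c ≠ 0) :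
    ∃ f b : R, η = f * ξ ∧ f ^ 2 = c - 3 * A ^ 2 + 16 * A * b := by
  obtain ⟨b, hb⟩ := hρ.exists_mul_eq_one c hρc
  have hbK : (c : K) * b = 1 := by exact_mod_cast congrArg Subtype.val hb
  have hξ : ξ ≠ 0 := left_ne_zero_of_mul (hc ▸ coe_ne_zero_of_map_ne_zero hρc)
  have hsq : (η / ξ) ^ 2 = ((c - 3 * A ^ 2 + 16 * A * b : R) : K) := by
    unfold DescentCurve at h
    rw [← hc] at hbK
    push_cast
    rw [div_pow, h, ← hc]
    field_simp
    linear_combination -4 * A * hbK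
  obtain ⟨f, hf⟩ := hρ.exists_coe_eq_of_sq_eq hsq
  rw [hf] at hsq
  exact ⟨f, b, by rw [← hf]; field_simp, by exact_mod_cast hsq⟩

variable [CharZero K]

lemma ne_neg_sub_sq_add_of_memSquareNormClass (hρ : IsResidueMapAtTwo A ρ) {ξ m : K} {c t : R}
    (h : MemSquareNormClass (A : K) ξ) (hc : ξ * m ^ 2 = c) : c ≠ -A - A ^ 2 + 4 * t := by
  intro ht
  have hρc : ρ c = 1 := by
    rw [ht, map_add, hρ.map_four_mul, map_sub, map_neg, map_pow]
    linear_combination -hρ.sq_add_add_one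
  rcases hρ.exists_eq_one_add_of_memSquareNormClass h hc hρc with ⟨t', ht'⟩ | ⟨t', ht'⟩
  · exact absurd (hρ.four_dvd_of_eq_four_mul 1 1 1 (t := t - t')
      (by push_cast; linear_combination ht - ht')) (by decide)
  · exact absurd (hρ.four_dvd_of_eq_four_mul 1 1 3 (t := t - t')
      (by push_cast; linear_combination ht - ht')) (by decide)

lemma ne_neg_one_add_of_memSquareNormClass (hρ : IsResidueMapAtTwo A ρ) {ξ m : K} {c t : R}
    (h : MemSquareNormClass (A : K) ξ) (hc : ξ * m ^ 2 = c) : c ≠ -1 + 4 * t := by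
  intro ht
  have hρc : ρ c = 1 := by
    rw [ht, map_add, hρ.map_four_mul, map_neg, map_one]
    linear_combination -hρ.two_eq_zero
  rcases hρ.exists_eq_one_add_of_memSquareNormClass h hc hρc with ⟨t', ht'⟩ | ⟨t', ht'⟩
  · exact absurd (hρ.four_dvd_of_eq_four_mul 2 0 0 (t := t - t')
      (by push_cast; linear_combination ht - ht')) (by decide)
  · exact absurd (hρ.four_dvd_of_eq_four_mul 2 0 2 (t := t - t')
      (by push_cast; linear_combination ht - ht')) (by decide)

lemma map_eq_sq_of_descentCurve_of_pole (hρ : IsResidueMapAtTwo A ρ) (hA : HasTwoDescent (A : K))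
    {ξ η : K} {k : ℕ} {c : R} (h : DescentCurve (A : K) ξ η) (hc : ξ * (2 ^ (k + 2)) ^ 2 = c)
    (hρc : ρ c ≠ 0) : ρ c = ρ A ^ 2 := by
  obtain ⟨s, -, rfl⟩ := hρ.isSquare_of_descentCurve_of_pole hA hρc hc h
  rw [← mul_pow] at hc
  obtain ⟨S, hS⟩ := hρ.exists_coe_eq_of_sq_eq hc
  rw [hS] at hc
  obtain rfl : S ^ 2 = c := by exact_mod_cast hc
  rw [map_pow] at hρc ⊢
  rw [hρ.map_eq_of_descentCurve_sq_of_pole hA s η S h hS (pow_ne_zero_iff two_ne_zero |>.1 hρc)]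

lemma map_ne_one_of_memSquareNormClass (hρ : IsResidueMapAtTwo A ρ) {ξ η : K} {c : R}
    (h : DescentCurve (A : K) ξ η) (hC : MemSquareNormClass (A : K) ξ) (hc : ξ * 2 ^ 2 = c) :
    ρ c ≠ 1 := by
  intro hρc
  obtain ⟨f, b, -, hf⟩ := hρ.exists_eq_mul_of_descentCurve h hc (hρc ▸ one_ne_zero)
  obtain ⟨t, ht⟩ := hρ.exists_sq_eq_neg_add (u := f) (hρ.sq_injective (by
    rw [← map_pow, hf]
    simp only [map_mul, map_pow, map_add, map_sub, map_ofNat]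
    rw [hρc]
    linear_combination hρ.sq_add_add_one +
      (8 * ρ A * ρ b - 2 * ρ A ^ 2 - ρ A) * hρ.two_eq_zero - ρ A * hρ.map_pow_three))
  exact hρ.ne_neg_sub_sq_add_of_memSquareNormClass (t := A ^ 2 - 4 * A * b + t) hC hc
    (by linear_combination -hf + ht)

lemma exists_chord_slope (hρ : IsResidueMapAtTwo A ρ) {ξ η : K} {c f : R} (hc : ξ * 2 ^ 2 = c)
    (hρc : ρ c ≠ 0) (hη : η = f * ξ) : ξ ≠ (A ^ 2 - 1) / 3 ∧
      ∃ μ : R, (f + 4 * μ : K) * (ξ - (A ^ 2 - 1) / 3) = η - (A + 1) / 3 := by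
  obtain ⟨g, hg, -⟩ := hρ.exists_inv_three
  have hgK : (g : K) = 1 / 3 := by
    have hgK : (3 : K) * g = 1 := by exact_mod_cast congrArg Subtype.val hg
    linear_combination hgK / 3
  obtain ⟨d, hd⟩ := hρ.exists_mul_eq_one (c - 4 * ((A ^ 2 - 1) * g))
    (by rwa [map_sub, hρ.map_four_mul, sub_zero])
  have hdK : ((c : K) - 4 * ((A ^ 2 - 1) * (1 / 3))) * d = 1 := by
    rw [← hgK]
    exact_mod_cast congrArg Subtype.val hd
  rw [← hc] at hdK
  refine ⟨?_, (f * ((A ^ 2 - 1) * g) - (A + 1) * g) * d, ?_⟩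
  · rintro rfl
    exact zero_ne_one (α := K) (by linear_combination hdK)
  · push_cast
    rw [hη, hgK]
    linear_combination (f * ((A ^ 2 - 1) * (1 / 3)) - (A + 1) * (1 / 3)) * hdK

lemma ne_two_sub_add_of_memSquareNormClass (hρ : IsResidueMapAtTwo A ρ)
    (hA : HasTwoDescent (A : K)) {ξ η : K} {c t : R} (h : DescentCurve (A : K) ξ η)
    (hC : MemSquareNormClass (A : K) ξ) (hc : ξ * 2 ^ 2 = c) : c ≠ 2 - A + 4 * t := by
  intro hct
  have hρc : ρ c ≠ 0 := by
    rw [hct, map_add, hρ.map_four_mul, add_zero]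
    exact hρ.map_two_sub_ne_zero
  obtain ⟨s, hs, rfl | hξ⟩ := hC
  · rw [← mul_pow] at hc
    obtain ⟨S, hS⟩ := hρ.exists_coe_eq_of_sq_eq hc
    rw [hS] at hc
    have hS2 : S ^ 2 = c := by exact_mod_cast hc
    exact hρ.not_isSquareModFour_two_sub ⟨S, -t, by rw [hS2, hct]; ring⟩
  obtain ⟨g, hg, hρg⟩ := hρ.exists_inv_three
  obtain ⟨f, b, hη, hf⟩ := hρ.exists_eq_mul_of_descentCurve h hc hρc
  obtain ⟨hne, μ, hμ⟩ := hρ.exists_chord_slope hc hρc hη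
  have hgK : (3 : K) * g = 1 := by exact_mod_cast congrArg Subtype.val hg
  have hfK : (f : K) ^ 2 = c - 3 * A ^ 2 + 16 * A * b := by
    exact_mod_cast congrArg Subtype.val hf
  obtain ⟨s₃, η₃, hs₃, hcurve⟩ := h.exists_eq_sq_of_translate hρ.coe_pow_three hs hξ hne hμ
    (x₃ := ((4 * A * b + 2 * f * μ + 4 * μ ^ 2 - (A ^ 2 - 1) * g : R) : K))
    (by push_cast; linear_combination -hfK + hc - 4 * (A ^ 2 - 1) / 3 * hgK)
  obtain ⟨S, rfl⟩ := hρ.exists_coe_eq_of_sq_eq hs₃.symm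
  have hS : 4 * A * b + 2 * f * μ + 4 * μ ^ 2 - (A ^ 2 - 1) * g = S ^ 2 := by
    exact_mod_cast hs₃
  have hρS : ρ S = ρ A ^ 2 := by
    apply hρ.sq_injective
    rw [← map_pow, ← hS]
    simp only [map_mul, map_pow, map_add, map_sub, map_ofNat, map_one]
    rw [hρg]
    linear_combination (2 * ρ A * ρ b + ρ f * ρ μ + 2 * ρ μ ^ 2 - ρ A ^ 2 - ρ A) * hρ.two_eq_zero
      + hρ.sq_add_add_one - ρ A * hρ.map_pow_three
  have hρS' := hρ.map_eq_of_descentCurve_sq hA (hρS ▸ pow_ne_zero 2 hρ.map_ne_zero) hcurve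
  exact hρ.map_ne_sq (by rw [← hρS, hρS'])

lemma exists_descentCurve_translate (hρ : IsResidueMapAtTwo A ρ) (hA : HasTwoDescent (A : K))
    {ξ : R} {η l : K} (h : DescentCurve (A : K) ξ η) (hC : MemSquareNormClass (A : K) ξ)
    (hξ : ρ ξ = ρ A) (hne : (ξ : K) ≠ (A ^ 2 - 1) / 3)
    (hl : l * (ξ - (A ^ 2 - 1) / 3) = η - (A + 1) / 3) :
    ∃ s₃ η₃, (l ^ 2 + 3 * A ^ 2 - 4 * ξ - 4 * ((A ^ 2 - 1) / 3)) / 4 = s₃ ^ 2 ∧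
      DescentCurve (A : K) (s₃ ^ 2) η₃ := by
  obtain ⟨s, hs, hs' | hs'⟩ := hC
  · obtain ⟨S, rfl⟩ := hρ.exists_coe_eq_of_sq_eq hs'.symm
    obtain rfl : ξ = S ^ 2 := by exact_mod_cast hs'
    rw [map_pow] at hξ
    have hρS : ρ S = ρ A ^ 2 :=
      hρ.sq_injective (by rw [hξ]; linear_combination -ρ A * hρ.map_pow_three)
    have hρS' := hρ.map_eq_of_descentCurve_sq hA (hρS ▸ pow_ne_zero 2 hρ.map_ne_zero)
      (by exact_mod_cast h)
    exact absurd (by rw [← hρS, hρS']) hρ.map_ne_sq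
  · exact h.exists_eq_sq_of_translate hρ.coe_pow_three hs hs' hne hl (by ring)

lemma map_slope_ne_sq (hρ : IsResidueMapAtTwo A ρ) (hA : HasTwoDescent (A : K))
    {ξ l : R} {η : K} (h : DescentCurve (A : K) ξ η) (hC : MemSquareNormClass (A : K) ξ)
    (hξ : ρ ξ = ρ A) (hne : (ξ : K) ≠ (A ^ 2 - 1) / 3)
    (hl : l * (ξ - (A ^ 2 - 1) / 3) = η - (A + 1) / 3) : ρ l ≠ ρ A ^ 2 := by
  intro hρl
  obtain ⟨g, hg, -⟩ := hρ.exists_inv_three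
  have hgK : (3 : K) * g = 1 := by exact_mod_cast congrArg Subtype.val hg
  obtain ⟨s₃, η₃, hs₃, -⟩ := hρ.exists_descentCurve_translate hA h hC hξ hne hl
  obtain ⟨t, ht⟩ := hρ.exists_sq_eq_neg_add hρl
  have htK : (l : K) ^ 2 = -A + 4 * t := by exact_mod_cast congrArg Subtype.val ht
  have hsq : s₃ ^ 2 * 2 ^ 2 =
      ((-A - A ^ 2 + 4 * (t + A ^ 2 - ξ - (A ^ 2 - 1) * g) : R) : K) := by
    push_cast
    rw [← hs₃]
    linear_combination htK + 4 * (A ^ 2 - 1) / 3 * hgK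
  have hs₃0 : s₃ ≠ 0 := by
    rintro rfl
    have hzero : -A - A ^ 2 + 4 * (t + A ^ 2 - ξ - (A ^ 2 - 1) * g) = 0 :=
      Subtype.ext (by rw [← hsq]; simp)
    have hρzero := congrArg ρ hzero
    rw [map_add, hρ.map_four_mul, map_sub, map_neg, map_pow, map_zero] at hρzero
    exact one_ne_zero (α := F) (by linear_combination hρ.sq_add_add_one + hρzero)
  exact hρ.ne_neg_sub_sq_add_of_memSquareNormClass ⟨s₃, hs₃0, .inl rfl⟩ hsq rfl

lemma map_slope_ne_one (hρ : IsResidueMapAtTwo A ρ) (hA : HasTwoDescent (A : K))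
    {ξ Λ : R} {η l : K} {j : ℕ} (h : DescentCurve (A : K) ξ η)
    (hC : MemSquareNormClass (A : K) ξ) (hξ : ρ ξ = ρ A) (hne : (ξ : K) ≠ (A ^ 2 - 1) / 3)
    (hl : l * (ξ - (A ^ 2 - 1) / 3) = η - (A + 1) / 3) (hΛ : l * 2 ^ (j + 1) = Λ) :
    ρ Λ ≠ 1 := by
  intro hρΛ
  obtain ⟨g, hg, -⟩ := hρ.exists_inv_three
  have hgK : (3 : K) * g = 1 := by exact_mod_cast congrArg Subtype.val hg
  obtain ⟨s₃, η₃, hs₃, hcurve⟩ := hρ.exists_descentCurve_translate hA h hC hξ hne hl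
  have hρc : ρ (Λ ^ 2 + 4 * ((2 ^ j) ^ 2 * (3 * A ^ 2 - 4 * ξ - 4 * ((A ^ 2 - 1) * g)))) = 1 := by
    rw [map_add, hρ.map_four_mul, map_pow, hρΛ, one_pow, add_zero]
  have hpole := hρ.map_eq_sq_of_descentCurve_of_pole hA (k := j) hcurve (by
    rw [← hs₃]
    push_cast
    rw [← hΛ]
    linear_combination (16 * (2 ^ j) ^ 2 * (A ^ 2 - 1) / 3) * hgK)
    (hρc ▸ one_ne_zero)
  exact hρ.map_sq_ne_one (by rw [← hpole, hρc])

end IsResidueMapAtTwo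

end Exclusion

/-- The affine cone over the plane quartic `C₄`. -/
def IsOnQuartic (x y z : ℤ) : Prop :=
  7 * x ^ 3 * z + 3 * x ^ 2 * y ^ 2 - 3 * x * y * z ^ 2 + y ^ 3 * z - z ^ 4 = 0

/-- The `ξ`-coordinate of the morphism from `C₄` to `DescentCurve a`, for `z ≠ 0`. -/
def quarticX {K : Type*} [Field K] (a : K) (x y z : ℤ) : K :=
  -(y + a * x - a ^ 2 * z) / (3 * z)

/-- The `η`-coordinate of the morphism from `C₄` to `DescentCurve a`, for `z ≠ 0`. -/
def quarticY {K : Type*} [Field K] (a : K) (x y z : ℤ) : K :=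
  (2 * x * y - a * (a * x + y) * z - z ^ 2) / (3 * z ^ 2)

section Integers

lemma exists_sq_eq_one_add_of_odd {n : ℤ} (h : Odd n) : ∃ m : ℤ, n ^ 2 = 1 + 4 * m := by
  obtain ⟨k, rfl⟩ := h
  exact ⟨k + k ^ 2, by ring⟩

lemma exists_eq_two_pow_mul_odd {n : ℤ} (h : n ≠ 0) : ∃ (k : ℕ) (m : ℤ), n = 2 ^ k * m ∧ Odd m := by
  obtain ⟨k, m, hm, hn⟩ := Nat.exists_eq_two_pow_mul_odd (Int.natAbs_ne_zero.2 h)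
  have hm' : Odd (m : ℤ) := by exact_mod_cast hm
  rcases Int.natAbs_eq n with hpos | hneg
  · exact ⟨k, m, by rw [hpos, hn]; push_cast; rfl, hm'⟩
  · exact ⟨k, -m, by rw [hneg, hn]; push_cast; ring, hm'.neg⟩

lemma le_of_two_pow_mul_eq {m n : ℕ} {a b : ℤ} (hb : Odd b) (h : 2 ^ m * a = 2 ^ n * b) :
    m ≤ n := by
  have hdvd : (2 : ℤ) ^ m ∣ 2 ^ n :=
    (Int.isCoprime_two_left.2 hb).pow_left.dvd_of_dvd_mul_right (h ▸ dvd_mul_right _ _)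
  exact (pow_dvd_pow_iff two_ne_zero (by decide)).1 hdvd

lemma exists_two_pow_mul_of_mul_eq_mul_sq {b z u a : ℤ} (hz : z ≠ 0) (hu : Odd u) (ha : Odd a)
    (h : z * u = a * b ^ 2) :
    ∃ (k : ℕ) (b' z' : ℤ), b = 2 ^ k * b' ∧ z = (2 ^ k) ^ 2 * z' ∧ Odd b' ∧ Odd z' := by
  have hb : b ≠ 0 := by
    rintro rfl
    rcases mul_eq_zero.1 (h.trans (by ring) : z * u = 0) with h0 | h0
    · exact hz h0
    · exact absurd (h0 ▸ hu) (by decide)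
  obtain ⟨k, b', rfl, hb'⟩ := exists_eq_two_pow_mul_odd hb
  obtain ⟨n, z', rfl, hz'⟩ := exists_eq_two_pow_mul_odd hz
  have heq : 2 ^ n * (z' * u) = 2 ^ (k * 2) * (a * b' ^ 2) := by
    rw [pow_mul]
    linear_combination h
  obtain rfl : n = k * 2 := le_antisymm (le_of_two_pow_mul_eq (ha.mul hb'.pow) heq)
    (le_of_two_pow_mul_eq (hz'.mul hu) heq.symm)
  exact ⟨k, b', z', rfl, by rw [pow_mul], hb', hz'⟩

namespace IsOnQuartic

variable {x y z : ℤ}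

lemma mul_eq (h : IsOnQuartic x y z) :
    z * (7 * x ^ 3 - 3 * x * y * z + y ^ 3 - z ^ 3) = -3 * x ^ 2 * y ^ 2 := by
  unfold IsOnQuartic at h
  linear_combination h

lemma odd_cofactor (hz : Even z) (hxy : Odd (x + y)) :
    Odd (7 * x ^ 3 - 3 * x * y * z + y ^ 3 - z ^ 3) := by
  simp_all [Int.odd_sub, Int.odd_add, Int.odd_mul, Int.odd_pow, Int.even_pow, parity_simps,
    show Odd (7 : ℤ) by decide]

lemma exists_two_pow_of_odd_of_even (h : IsOnQuartic x y z) (hz0 : z ≠ 0) (hx : Odd x)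
    (hy : Even y) (hz : Even z) :
    ∃ (k : ℕ) (y' z' : ℤ), y = 2 ^ k * y' ∧ z = (2 ^ k) ^ 2 * z' ∧ Odd y' ∧ Odd z' :=
  exists_two_pow_mul_of_mul_eq_mul_sq hz0 (odd_cofactor hz (hx.add_even hy))
    ((by decide : Odd (-3 : ℤ)).mul hx.pow) h.mul_eq

lemma exists_two_pow_of_even_of_odd (h : IsOnQuartic x y z) (hz0 : z ≠ 0) (hx : Even x)
    (hy : Odd y) (hz : Even z) :
    ∃ (k : ℕ) (x' z' : ℤ), x = 2 ^ k * x' ∧ z = (2 ^ k) ^ 2 * z' ∧ Odd x' ∧ Odd z' :=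
  exists_two_pow_mul_of_mul_eq_mul_sq hz0 (odd_cofactor hz (hx.add_odd hy))
    ((by decide : Odd (-3 : ℤ)).mul (hy.pow (n := 2))) (h.mul_eq.trans (by ring))

lemma exists_mul_eq_three_add {y' z' : ℤ} (h : IsOnQuartic x (2 * y') (4 * z')) (hx : Odd x)
    (hy' : Odd y') : ∃ d : ℤ, x * z' = 3 + 4 * d := by
  obtain ⟨a, ha⟩ := exists_sq_eq_one_add_of_odd hx
  obtain ⟨b, hb⟩ := exists_sq_eq_one_add_of_odd hy'
  have hdiv : 7 * x ^ 2 * (x * z') + 3 * x ^ 2 * y' ^ 2 - 24 * x * y' * z' ^ 2 + 8 * y' ^ 3 * z'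
      - 64 * z' ^ 4 = 0 := by
    refine mul_left_cancel₀ (four_ne_zero (α := ℤ)) ?_
    unfold IsOnQuartic at h
    linear_combination h
  rw [ha, hb] at hdiv
  exact ⟨7 * a * (x * z') + 2 * (x * z') + 3 * (a + b + 4 * a * b) - 6 * x * y' * z' ^ 2 +
    2 * y' ^ 3 * z' - 16 * z' ^ 4, by linear_combination -hdiv⟩

lemma exists_mul_eq_sub_one_add {b : ℤ} (h : IsOnQuartic x (2 * b) z) (hx : Odd x) (hz : Odd z) :
    ∃ d : ℤ, x * z = 2 * b - 1 + 4 * d := by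
  obtain ⟨a, ha⟩ := exists_sq_eq_one_add_of_odd hx
  obtain ⟨c, hc⟩ := exists_sq_eq_one_add_of_odd hz
  obtain ⟨e, he⟩ : ∃ e, x * b = b + 2 * e := by
    obtain ⟨t, rfl⟩ := hx
    exact ⟨t * b, by ring⟩
  have hmod : 7 * x ^ 2 * (x * z) + 12 * x ^ 2 * b ^ 2 - 6 * (x * b) * z ^ 2 + 8 * b ^ 3 * z
      - (z ^ 2) ^ 2 = 0 := by
    unfold IsOnQuartic at h
    linear_combination h
  rw [ha, hc, he] at hmod
  exact ⟨2 * (x * z) + 7 * a * (x * z) + 3 * (1 + 4 * a) * b ^ 2 - 2 * b - 3 * e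
    - 6 * c * (b + 2 * e) + 2 * b ^ 3 * z - 2 * c - 4 * c ^ 2, by linear_combination -hmod⟩

lemma left_eq_zero_or_of_right_eq_zero (h : IsOnQuartic x y 0) : x = 0 ∨ y = 0 := by
  have hsq : (x * y) ^ 2 = 0 := by
    unfold IsOnQuartic at h
    linarith
  exact mul_eq_zero.1 (pow_eq_zero_iff two_ne_zero |>.1 hsq)

lemma eq_of_left_eq_zero (h : IsOnQuartic 0 y z) (hz : z ≠ 0) : y = z := by
  have hcube : y ^ 3 = z ^ 3 := by
    refine mul_left_cancel₀ hz ?_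
    unfold IsOnQuartic at h
    linear_combination h
  exact (Odd.strictMono_pow (by decide)).injective hcube

lemma odd_add (h : IsOnQuartic x y z) (hcop : Int.gcd x (Int.gcd y z : ℤ) = 1) :
    Odd (x + y) := by
  by_contra hxy
  rw [Int.not_odd_iff_even, Int.even_add] at hxy
  have hparity : Even (7 * x ^ 3 * z + 3 * x ^ 2 * y ^ 2 - 3 * x * y * z ^ 2 + y ^ 3 * z - z ^ 4) :=
    h ▸ Even.zero
  have h3 : ¬Even (3 : ℤ) := by decide
  have h7 : ¬Even (7 : ℤ) := by decide
  have hxz : Even x ∧ Even z := by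
    simp only [Int.even_sub, Int.even_add, Int.even_mul, h7, Int.even_pow, ne_eq,
      OfNat.ofNat_ne_zero, not_false_eq_true, and_true, false_or, h3] at hparity
    tauto
  have hdvd : (2 : ℤ) ∣ (Int.gcd x (Int.gcd y z : ℤ) : ℤ) :=
    Int.dvd_coe_gcd hxz.1.two_dvd (Int.dvd_coe_gcd (hxy.1 hxz.1).two_dvd hxz.2.two_dvd)
  rw [hcop] at hdvd
  norm_num at hdvd

end IsOnQuartic

end Integers

section QuarticMorphism

variable {K : Type*} [Field K] [CharZero K] {a μ : K} {x y z : ℤ}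

lemma descentCurve_quartic (ha : a ^ 3 = 7) (h : IsOnQuartic x y z) (hz : z ≠ 0) :
    DescentCurve a (quarticX a x y z) (quarticY a x y z) := by
  have hK : 7 * (x : K) ^ 3 * z + 3 * x ^ 2 * y ^ 2 - 3 * x * y * z ^ 2
      + y ^ 3 * z - z ^ 4 = 0 := by
    exact_mod_cast congrArg (Int.cast (R := K)) h
  have hzK : (z : K) ≠ 0 := Int.cast_ne_zero.2 hz
  unfold DescentCurve quarticX quarticY
  field_simp
  linear_combination 4 * hK + (-6 * x * a ^ 2 * z ^ 3 + 4 * x ^ 3 * z - 6 * y * a * z ^ 3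
    + z ^ 4 * (5 * a ^ 3 - 1)) * ha

lemma quarticX_sub_base (hz : z ≠ 0) (hy : (y : K) = z + x * μ) :
    quarticX a x y z - (a ^ 2 - 1) / 3 = -x * (a + μ) / (3 * z) := by
  have hzK : (z : K) ≠ 0 := Int.cast_ne_zero.2 hz
  unfold quarticX
  rw [hy]
  field_simp
  ring

lemma quarticY_sub_base (hz : z ≠ 0) (hy : (y : K) = z + x * μ) :
    quarticY a x y z - (a + 1) / 3 =
      (-2 * (a + 1) + x * (2 * y / z ^ 2 - a * (a + μ) / z)) / 3 := by
  have hzK : (z : K) ≠ 0 := Int.cast_ne_zero.2 hz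
  unfold quarticY
  rw [hy]
  field_simp
  ring

end QuarticMorphism

section QuarticLocal

variable {K : Type*} [Field K] {R : Subring K} {A : R} {F : Type*} [Field F] {ρ : R →+* F}
  {x y z : ℤ}

namespace IsResidueMapAtTwo

lemma map_intCast_of_odd (hρ : IsResidueMapAtTwo A ρ) {n : ℤ} (h : Odd n) : ρ n = 1 := by
  obtain ⟨k, rfl⟩ := h
  push_cast
  rw [map_add, hρ.map_two_mul, map_one, zero_add]

lemma map_intCast_of_even (hρ : IsResidueMapAtTwo A ρ) {n : ℤ} (h : Even n) : ρ n = 0 := by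
  obtain ⟨k, rfl⟩ := h
  push_cast
  rw [← two_mul, hρ.map_two_mul]

lemma exists_inv_three_mul_intCast (hρ : IsResidueMapAtTwo A ρ) (h : Odd z) :
    ∃ i r : R, 3 * (z : R) * i = 1 ∧ i = -z + 4 * r ∧ ρ i = 1 := by
  obtain ⟨g, hg, -⟩ := hρ.exists_inv_three
  obtain ⟨w, hw⟩ := hρ.exists_mul_eq_one z (by rw [hρ.map_intCast_of_odd h]; exact one_ne_zero)
  obtain ⟨m, hm⟩ := exists_sq_eq_one_add_of_odd h
  have hmR : (z : R) ^ 2 = 1 + 4 * m := by exact_mod_cast congrArg (Int.cast (R := R)) hm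
  have hinv : 3 * (z : R) * (g * w) = 1 := by linear_combination w * z * hg + hw
  have hi : g * w = -z + 4 * (g * w + 3 * m * (g * w)) := by
    linear_combination -(z : R) * hinv + 3 * (g * w) * hmR
  refine ⟨g * w, _, hinv, hi, ?_⟩
  rw [hi, map_add, hρ.map_four_mul, map_neg, hρ.map_intCast_of_odd h]
  linear_combination -hρ.two_eq_zero

lemma exists_inv_intCast_mul_add (hρ : IsResidueMapAtTwo A ρ) {n : ℤ} {μ : R} (hn : Odd n)
    (hρμ : ρ μ = 1) : ∃ d : R, n * (A + μ) * d = 1 ∧ ρ d = ρ A := by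
  have hρd' : ρ (n * (A + μ)) = -ρ A ^ 2 := by
    rw [map_mul, map_add, hρ.map_intCast_of_odd hn, hρμ]
    linear_combination hρ.sq_add_add_one
  obtain ⟨d, hd⟩ := hρ.exists_mul_eq_one (n * (A + μ))
    (hρd' ▸ neg_ne_zero.2 (pow_ne_zero 2 hρ.map_ne_zero))
  refine ⟨d, hd, ?_⟩
  have hprod := congrArg ρ hd
  rw [map_mul, hρd', map_one] at hprod
  linear_combination -ρ A * hprod - ρ d * hρ.map_pow_three - ρ A * hρ.two_eq_zero

lemma exists_eq_add_mul_of_isOnQuartic (hρ : IsResidueMapAtTwo A ρ) (h : IsOnQuartic x y z)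
    (hx : Even x) (hy : Odd y) (hz : Odd z) : ∃ μ : R, (y : R) = z + x * μ ∧ ρ μ = 1 := by
  have hR : 7 * (x : R) ^ 3 * z + 3 * x ^ 2 * y ^ 2 - 3 * x * y * z ^ 2
      + y ^ 3 * z - z ^ 4 = 0 := by
    exact_mod_cast congrArg (Int.cast (R := R)) h
  have hρx := hρ.map_intCast_of_even hx
  have hρy := hρ.map_intCast_of_odd hy
  have hρz := hρ.map_intCast_of_odd hz
  have hρU : ρ (z * (y ^ 2 + y * z + z ^ 2)) = 1 := by
    simp only [map_mul, map_add, map_pow, hρy, hρz]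
    linear_combination hρ.two_eq_zero
  obtain ⟨w, hw⟩ := hρ.exists_mul_eq_one _ (hρU ▸ one_ne_zero)
  have hρw : ρ w = 1 := by
    have hprod := congrArg ρ hw
    rwa [map_mul, hρU, one_mul, map_one] at hprod
  refine ⟨-(7 * x ^ 2 * z + 3 * x * y ^ 2 - 3 * y * z ^ 2) * w, ?_, ?_⟩
  · linear_combination w * hR - (y - z) * hw
  · simp only [map_mul, map_add, map_pow, map_sub, map_neg, map_ofNat, hρx, hρy, hρz, hρw]
    linear_combination hρ.two_eq_zero

variable [CharZero K]

lemma quarticX_mul_sq {k : ℕ} {z' : ℤ} {i : R} (hi : 3 * (z' : R) * i = 1) :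
    quarticX (A : K) x y ((2 ^ k) ^ 2 * z') * (2 ^ k) ^ 2 =
      ((-(y + A * x - A ^ 2 * ((2 ^ k) ^ 2 * z')) * i : R) : K) := by
  have hiK : 3 * (z' : K) * i = 1 := by exact_mod_cast congrArg Subtype.val hi
  have hz : (z' : K) ≠ 0 := right_ne_zero_of_mul (left_ne_zero_of_mul (hiK ▸ one_ne_zero))
  have hinv : (i : K) = 1 / (3 * z') := by
    field_simp
    linear_combination hiK
  unfold quarticX
  push_cast
  rw [hinv]
  field_simp

lemma quarticX_eq_coe {i : R} (hi : 3 * (z : R) * i = 1) :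
    quarticX (A : K) x y z = ((-(y + A * x - A ^ 2 * z) * i : R) : K) := by
  simpa using quarticX_mul_sq (A := A) (x := x) (y := y) (k := 0) hi

lemma not_odd_even_even (hρ : IsResidueMapAtTwo A ρ) (hA : HasTwoDescent (A : K))
    (h : IsOnQuartic x y z) (hC : MemSquareNormClass (A : K) (quarticX (A : K) x y z))
    (hz0 : z ≠ 0) (hx : Odd x) (hy : Even y) : ¬Even z := by
  intro hz
  have hE := descentCurve_quartic hρ.coe_pow_three h hz0
  obtain ⟨k, y', z', rfl, rfl, hy', hz'⟩ := h.exists_two_pow_of_odd_of_even hz0 hx hy hz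
  obtain ⟨i, r, hi, hir, hρi⟩ := hρ.exists_inv_three_mul_intCast hz'
  have hξ := quarticX_mul_sq (A := A) (x := x) (y := 2 ^ k * y') (k := k) hi
  rcases k with _ | _ | k
  · exact Int.not_odd_iff_even.2 hy (by simpa using hy')
  · simp only [zero_add, pow_one] at h hE hC hξ
    obtain ⟨d, hd⟩ := IsOnQuartic.exists_mul_eq_three_add h hx hy'
    obtain ⟨m, hm⟩ := hy'.mul hz'
    have hdR : (x : R) * z' = 3 + 4 * d := by exact_mod_cast congrArg (Int.cast (R := R)) hd
    have hmR : (y' : R) * z' = 2 * m + 1 := by exact_mod_cast congrArg (Int.cast (R := R)) hm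
    refine hρ.ne_two_sub_add_of_memSquareNormClass hA hE hC
      (t := m + A + A * d - (2 * y' + A * x) * r + A ^ 2 * z' * i) hξ ?_
    push_cast
    linear_combination (-(2 * (y' : R) + A * x)) * hir + 2 * hmR + A * hdR
  · have hρc : ρ (-(((2 ^ (k + 2) * y' : ℤ) : R) + A * x
        - A ^ 2 * ((2 ^ (k + 2)) ^ 2 * z')) * i) = ρ A := by
      simp only [map_mul, map_neg, map_sub, map_add, map_pow, hρi, hρ.map_intCast_of_odd hx,
        hρ.map_intCast_of_even hy, map_ofNat, hρ.two_eq_zero]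
      linear_combination -ρ A * hρ.two_eq_zero
    have hpole := hρ.map_eq_sq_of_descentCurve_of_pole hA (k := k) hE hξ
      (hρc ▸ hρ.map_ne_zero)
    exact hρ.map_ne_sq (by rw [← hpole, hρc])

lemma not_even_odd_even (hρ : IsResidueMapAtTwo A ρ) (hA : HasTwoDescent (A : K))
    (h : IsOnQuartic x y z) (hC : MemSquareNormClass (A : K) (quarticX (A : K) x y z))
    (hz0 : z ≠ 0) (hx : Even x) (hy : Odd y) : ¬Even z := by
  intro hz
  have hE := descentCurve_quartic hρ.coe_pow_three h hz0
  obtain ⟨k, x', z', rfl, rfl, hx', hz'⟩ := h.exists_two_pow_of_even_of_odd hz0 hx hy hz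
  obtain ⟨i, -, hi, -, hρi⟩ := hρ.exists_inv_three_mul_intCast hz'
  rcases k with _ | k
  · exact Int.not_odd_iff_even.2 hx (by simpa using hx')
  have hξ := quarticX_mul_sq (A := A) (x := 2 ^ (k + 1) * x') (y := y) (k := k + 1) hi
  have hρc : ρ (-((y : R) + A * ((2 ^ (k + 1) * x' : ℤ) : R)
      - A ^ 2 * ((2 ^ (k + 1)) ^ 2 * z')) * i) = 1 := by
    simp only [map_mul, map_neg, map_sub, map_add, map_pow, hρi, hρ.map_intCast_of_odd hy,
      hρ.map_intCast_of_even hx, map_ofNat, hρ.two_eq_zero]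
    linear_combination -hρ.two_eq_zero
  rcases k with _ | k
  · simp only [zero_add, pow_one] at hE hC hξ hρc
    exact hρ.map_ne_one_of_memSquareNormClass hE hC hξ hρc
  · have hpole := hρ.map_eq_sq_of_descentCurve_of_pole hA (k := k) hE hξ
      (hρc ▸ one_ne_zero)
    exact hρ.map_sq_ne_one (by rw [← hpole, hρc])

lemma not_odd_even_odd (hρ : IsResidueMapAtTwo A ρ) (h : IsOnQuartic x y z)
    (hC : MemSquareNormClass (A : K) (quarticX (A : K) x y z)) (hx : Odd x) (hy : Even y) :
    ¬Odd z := by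
  intro hz
  obtain ⟨i, r, hi, hir, -⟩ := hρ.exists_inv_three_mul_intCast hz
  have hξ : quarticX (A : K) x y z * 1 ^ 2 = ((-(y + A * x - A ^ 2 * z) * i : R) : K) := by
    rw [one_pow, mul_one, quarticX_eq_coe hi]
  obtain ⟨b, rfl⟩ := hy.two_dvd
  obtain ⟨c, hc⟩ := exists_sq_eq_one_add_of_odd hz
  obtain ⟨g, hg⟩ : ∃ g, b * z = b + 2 * g := by
    obtain ⟨t, rfl⟩ := hz
    exact ⟨t * b, by ring⟩
  obtain ⟨d, hd⟩ := h.exists_mul_eq_sub_one_add hx hz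
  have hdR : (x : R) * z = 2 * b - 1 + 4 * d := by exact_mod_cast congrArg (Int.cast (R := R)) hd
  have hgR : (b : R) * z = b + 2 * g := by exact_mod_cast congrArg (Int.cast (R := R)) hg
  have hcR : (z : R) ^ 2 = 1 + 4 * c := by exact_mod_cast congrArg (Int.cast (R := R)) hc
  have hmod : -(((2 * b : ℤ) : R) + A * x - A ^ 2 * z) * i = 2 * (1 + A) * b - A - A ^ 2 +
      4 * (g + A * d - A ^ 2 * c - (2 * b + A * x - A ^ 2 * z) * r) := by
    push_cast
    linear_combination (-(2 * (b : R) + A * x - A ^ 2 * z)) * hir + A * hdR + 2 * hgR - A ^ 2 * hcR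
  obtain ⟨m, rfl | rfl⟩ := Int.even_or_odd' b
  · refine hρ.ne_neg_sub_sq_add_of_memSquareNormClass hC hξ (hmod.trans ?_)
      (t := (1 + A) * m + (g + A * d - A ^ 2 * c - (2 * (2 * m : ℤ) + A * x - A ^ 2 * z) * r))
    push_cast
    ring
  · obtain ⟨κ, hκ⟩ := hρ.exists_sq_eq
    refine hρ.ne_neg_one_add_of_memSquareNormClass hC hξ (hmod.trans ?_) (t := (1 + A) * m +
      (g + A * d - A ^ 2 * c - (2 * (2 * m + 1 : ℤ) + A * x - A ^ 2 * z) * r) + 1 - 2 * κ)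
    push_cast
    linear_combination -hκ

-- `Λ / 2 ^ k` is the slope of the chord through the images of `(x : y : z)` and `(0 : 1 : 1)`.
lemma exists_quartic_slope (hρ : IsResidueMapAtTwo A ρ) {k : ℕ} {x' : ℤ}
    (h : IsOnQuartic (2 ^ (k + 1) * x') y z) (hx' : Odd x') (hy : Odd y) (hz : Odd z) :
    ∃ Λ : R, quarticX (A : K) (2 ^ (k + 1) * x') y z ≠ (A ^ 2 - 1) / 3 ∧
      Λ / 2 ^ k * (quarticX (A : K) (2 ^ (k + 1) * x') y z - (A ^ 2 - 1) / 3) =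
        quarticY (A : K) (2 ^ (k + 1) * x') y z - (A + 1) / 3 ∧
      ρ Λ = (ρ A + 1 - 2 ^ k) * ρ A := by
  have hz0 : z ≠ 0 := by rintro rfl; exact absurd hz (by decide)
  have hρx' := hρ.map_intCast_of_odd hx'
  have hρz := hρ.map_intCast_of_odd hz
  obtain ⟨μ, hμ, hρμ⟩ := hρ.exists_eq_add_mul_of_isOnQuartic h ⟨2 ^ k * x', by ring⟩ hy hz
  have hμK : (y : K) = z + (2 ^ (k + 1) * x' : ℤ) * μ := by
    exact_mod_cast congrArg Subtype.val hμ
  obtain ⟨i, hi⟩ := hρ.exists_mul_eq_one z (hρz ▸ one_ne_zero)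
  have hρi : ρ i = 1 := by simpa [hρz] using congrArg ρ hi
  obtain ⟨d, hd, hρd⟩ := hρ.exists_inv_intCast_mul_add hx' hρμ
  have hiK : (z : K) * i = 1 := by exact_mod_cast congrArg Subtype.val hi
  have hdK : ((x' : K) * (A + μ)) * d = 1 := by exact_mod_cast congrArg Subtype.val hd
  have hAμ : (A : K) + μ ≠ 0 := right_ne_zero_of_mul (left_ne_zero_of_mul (hdK ▸ one_ne_zero))
  have hx'K : (x' : K) ≠ 0 := left_ne_zero_of_mul (left_ne_zero_of_mul (hdK ▸ one_ne_zero))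
  have hzK : (z : K) ≠ 0 := Int.cast_ne_zero.2 hz0
  refine ⟨z * (A + 1 - 2 ^ k * x' * (2 * y * i ^ 2 - A * (A + μ) * i)) * d, ?_, ?_, ?_⟩
  · rw [← sub_ne_zero, quarticX_sub_base hz0 hμK]
    push_cast
    exact div_ne_zero (mul_ne_zero (neg_ne_zero.2 (mul_ne_zero (pow_ne_zero _ two_ne_zero) hx'K))
      hAμ) (mul_ne_zero three_ne_zero hzK)
  · rw [quarticX_sub_base hz0 hμK, quarticY_sub_base hz0 hμK]
    push_cast
    rw [eq_div_of_mul_eq hzK ((mul_comm _ _).trans hiK), pow_succ]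
    field_simp
    linear_combination
      (-2 * 2 ^ k * ((A + 1) * z ^ 2 - 2 ^ k * x' * (2 * y - A * (A + μ) * z : K))) * hdK
  · simp only [map_mul, map_add, map_pow, map_sub, map_ofNat, map_one, hρz, hρx', hρi, hρd, hρμ,
      hρ.map_intCast_of_odd hy]
    linear_combination 2 ^ k * ρ A * (hρ.sq_add_add_one - hρ.two_eq_zero)

lemma not_even_odd_odd (hρ : IsResidueMapAtTwo A ρ) (hA : HasTwoDescent (A : K))
    (h : IsOnQuartic x y z) (hC : MemSquareNormClass (A : K) (quarticX (A : K) x y z))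
    (hx0 : x ≠ 0) (hx : Even x) (hy : Odd y) : ¬Odd z := by
  intro hz
  have hz0 : z ≠ 0 := by rintro rfl; exact absurd hz (by decide)
  have hE := descentCurve_quartic hρ.coe_pow_three h hz0
  obtain ⟨i, -, hi, -, hρi⟩ := hρ.exists_inv_three_mul_intCast hz
  have hρξ : ρ (-(y + A * x - A ^ 2 * z) * i) = ρ A := by
    simp only [map_mul, map_add, map_pow, map_sub, map_neg, hρi, hρ.map_intCast_of_even hx,
      hρ.map_intCast_of_odd hy, hρ.map_intCast_of_odd hz]
    linear_combination hρ.sq_add_add_one - (ρ A + 1) * hρ.two_eq_zero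
  obtain ⟨_ | k, x', rfl, hx'⟩ := exists_eq_two_pow_mul_odd hx0
  · exact Int.not_odd_iff_even.2 hx (by simpa using hx')
  obtain ⟨Λ, hne, hΛ, hρΛ⟩ := hρ.exists_quartic_slope h hx' hy hz
  rw [quarticX_eq_coe hi] at hE hC hne hΛ
  rcases k with _ | k
  · rw [pow_zero, div_one] at hΛ
    exact hρ.map_slope_ne_sq hA hE hC hρξ hne hΛ (by rw [hρΛ]; ring)
  · refine hρ.map_slope_ne_one hA hE hC hρξ hne hΛ
      (div_mul_cancel₀ _ (pow_ne_zero _ two_ne_zero)) ?_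
    rw [hρΛ, pow_succ, hρ.two_eq_zero]
    linear_combination hρ.sq_add_add_one - hρ.two_eq_zero

lemma eq_zero_or_eq_zero_or_eq_of_isOnQuartic (hρ : IsResidueMapAtTwo A ρ)
    (hA : HasTwoDescent (A : K)) (h : IsOnQuartic x y z)
    (hC : z ≠ 0 → MemSquareNormClass (A : K) (quarticX (A : K) x y z))
    (hcop : Int.gcd x (Int.gcd y z : ℤ) = 1) :
    (x = 0 ∧ z = 0) ∨ (y = 0 ∧ z = 0) ∨ (x = 0 ∧ y = z) := by
  rcases eq_or_ne z 0 with rfl | hz0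
  · have := h.left_eq_zero_or_of_right_eq_zero
    tauto
  rcases eq_or_ne x 0 with rfl | hx0
  · exact .inr (.inr ⟨rfl, h.eq_of_left_eq_zero hz0⟩)
  exfalso
  have hxy := h.odd_add hcop
  rw [Int.odd_add] at hxy
  rcases Int.even_or_odd x with hx | hx <;> rcases Int.even_or_odd z with hz | hz
  · have hy : Odd y := by grind
    exact hρ.not_even_odd_even hA h (hC hz0) hz0 hx hy hz
  · have hy : Odd y := by grind
    exact hρ.not_even_odd_odd hA h (hC hz0) hx0 hx hy hz
  · exact hρ.not_odd_even_even hA h (hC hz0) hz0 hx (hxy.1 hx) hz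
  · exact hρ.not_odd_even_odd h (hC hz0) hx (hxy.1 hx) hz

end IsResidueMapAtTwo

end QuarticLocal

section DiscreteValuation

open IsDedekindDomain WithZero

lemma le_exp_neg_one_of_lt_one {n : ℤᵐ⁰} (h : n < 1) : n ≤ exp (-1) := by
  rwa [← lt_mul_exp_iff_le exp_ne_zero, ← exp_add, neg_add_cancel, exp_zero]

variable {K : Type*} [Field K]

lemma residue_eq_zero_iff_valuation_lt_one {Γ : Type*} [LinearOrderedCommGroupWithZero Γ]
    {w : Valuation K Γ} (u : w.valuationSubring) :
    IsLocalRing.residue w.valuationSubring u = 0 ↔ w u < 1 := by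
  rw [IsLocalRing.residue_eq_zero_iff, ValuationSubring.valuation_lt_one_iff,
    w.isEquiv_valuation_valuationSubring.lt_one_iff_lt_one]

lemma exists_valuation_eq_one_of_uniformizer {w : Valuation K ℤᵐ⁰} {π x : K}
    (hπ : w π = exp (-1)) (hx : x ≠ 0) :
    ∃ u, w u = 1 ∧ (x = u ∨ ∃ m : ℕ, x = π ^ (m + 1) * u ∨ x * π ^ (m + 1) = u) := by
  have hπ0 : π ≠ 0 := w.ne_zero_iff.1 (hπ ▸ exp_ne_zero)
  have hπpow (m : ℕ) : w (π ^ (m + 1)) = exp (-(m + 1 : ℤ)) := by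
    rw [map_pow, hπ, ← exp_nsmul]
    simp
  obtain ⟨n, hn⟩ : ∃ n : ℤ, w x = exp n := ⟨_, (exp_log (w.ne_zero_iff.2 hx)).symm⟩
  rcases lt_trichotomy n 0 with h | rfl | h
  · obtain ⟨m, rfl⟩ : ∃ m : ℕ, n = -(m + 1) := ⟨(-n - 1).toNat, by omega⟩
    exact ⟨x / π ^ (m + 1), by rw [map_div₀, hn, hπpow, div_self exp_ne_zero],
      .inr ⟨m, .inl (by field_simp)⟩⟩
  · exact ⟨x, hn, .inl rfl⟩
  · obtain ⟨m, rfl⟩ : ∃ m : ℕ, n = m + 1 := ⟨(n - 1).toNat, by omega⟩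
    exact ⟨x * π ^ (m + 1), by rw [map_mul, hn, hπpow, ← exp_add, add_neg_cancel, exp_zero],
      .inr ⟨m, .inr rfl⟩⟩

variable {R : Type*} [CommRing R] [IsDedekindDomain R] (v : HeightOneSpectrum R)

lemma intValuation_eq_exp_neg_one {a : R} (h : a ∈ v.asIdeal) (h' : a ∉ v.asIdeal ^ 2) :
    v.intValuation a = exp (-1) := by
  refine le_antisymm (le_exp_neg_one_of_lt_one ((v.intValuation_lt_one_iff_mem a).2 h)) ?_
  rw [← v.intValuation_le_pow_iff_mem, not_le] at h'
  rwa [← lt_mul_exp_iff_le (v.intValuation_ne_zero a fun h0 ↦ by simp [h0] at h'),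
    ← mul_inv_lt_iff₀ exp_pos, ← exp_neg, ← exp_add]

variable (K) [Algebra R K] [IsFractionRing R K]

/-- The inclusion of a Dedekind domain into the valuation ring of one of its primes. -/
noncomputable def toValuationSubring : R →+* (v.valuation K).valuationSubring :=
  (algebraMap R K).codRestrict _ v.valuation_le_one

lemma residue_toValuationSubring_eq_zero_iff (a : R) :
    IsLocalRing.residue _ (toValuationSubring K v a) = 0 ↔ a ∈ v.asIdeal := by
  rw [residue_eq_zero_iff_valuation_lt_one]
  exact v.valuation_lt_one_iff_mem a

lemma residue_toValuationSubring_surjective :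
    Function.Surjective fun a ↦ IsLocalRing.residue _ (toValuationSubring K v a) := by
  intro x
  obtain ⟨u, rfl⟩ := IsLocalRing.residue_surjective x
  obtain ⟨a, ha⟩ := v.exists_valuation_sub_lt_of_integer (K := K) u.2 1
  refine ⟨a, ?_⟩
  rw [← sub_eq_zero, ← map_sub, residue_eq_zero_iff_valuation_lt_one]
  exact ha

end DiscreteValuation

section LocalRing

open IsDedekindDomain WithZero

variable {K : Type*} [Field K] [NumberField K]

lemma pow_absNorm_sub_self_mem (P : Ideal (𝓞 K)) [hP : P.IsMaximal] (hP0 : P ≠ ⊥) (a : 𝓞 K) :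
    a ^ Ideal.absNorm P - a ∈ P := by
  let _ := Ideal.Quotient.field P
  have : Finite (𝓞 K ⧸ P) := Ideal.finiteQuotientOfFreeOfNeBot P hP0
  let _ := Fintype.ofFinite (𝓞 K ⧸ P)
  rw [← Ideal.Quotient.eq, map_pow, Ideal.absNorm_apply, Submodule.cardQuot_apply,
    Nat.card_eq_fintype_card]
  exact FiniteField.pow_card _

namespace IsPureCubic

variable {α : 𝓞 K}

/-- `primeTwo` as a place of `ℚ(∛7)`. -/
def placeTwo (hα : IsPureCubic 7 α) : HeightOneSpectrum (𝓞 K) where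
  asIdeal := primeTwo α
  isPrime := hα.isMaximal_primeTwo.isPrime
  ne_bot h := by simpa [h] using hα.absNorm_primeTwo

lemma asIdeal_placeTwo (hα : IsPureCubic 7 α) : hα.placeTwo.asIdeal = primeTwo α := rfl

lemma two_notMem_primeTwo_sq (hα : IsPureCubic 7 α) : 2 ∉ primeTwo α ^ 2 := by
  intro h
  have hdvd := Ideal.absNorm_dvd_absNorm_of_le ((Ideal.span_singleton_le_iff_mem _).2 h)
  rw [map_pow, hα.absNorm_primeTwo, hα.absNorm_span 2 0 0 (by simp)] at hdvd
  norm_num at hdvd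

lemma mem_primeTwo_cases (hα : IsPureCubic 7 α) (a : 𝓞 K) :
    a ∈ primeTwo α ∨ a - 1 ∈ primeTwo α ∨ a - α ∈ primeTwo α ∨ a - α ^ 2 ∈ primeTwo α := by
  have := hα.isMaximal_primeTwo
  have hprime : (primeTwo α).IsPrime := hα.placeTwo.isPrime
  have hfrob : a ^ 4 - a ∈ primeTwo α :=
    hα.absNorm_primeTwo ▸ pow_absNorm_sub_self_mem (primeTwo α) hα.placeTwo.ne_bot a
  have hprod : a * ((a - 1) * ((a - α) * (a - α ^ 2))) ∈ primeTwo α := by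
    rw [show a * ((a - 1) * ((a - α) * (a - α ^ 2))) =
        (a ^ 4 - a) + (2 * (a * (a - 1) * 3) - (α ^ 2 + α + 1) * (a * (a - 1) * a)) by
      linear_combination (a * (a - 1)) * hα.pow_three_eq_seven]
    exact add_mem hfrob (sub_mem (Ideal.mul_mem_right _ _ (two_mem_primeTwo α))
      (Ideal.mul_mem_right _ _ (sq_add_add_one_mem_primeTwo α)))
  simpa only [hprime.mul_mem_iff_mem_or_mem] using hprod

lemma valuation_placeTwo_two (hα : IsPureCubic 7 α) : hα.placeTwo.valuation K 2 = exp (-1) := by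
  rw [← map_ofNat (algebraMap (𝓞 K) K), HeightOneSpectrum.valuation_of_algebraMap]
  exact intValuation_eq_exp_neg_one _ (two_mem_primeTwo α) hα.two_notMem_primeTwo_sq

/-- The local ring of `ℚ(∛7)` at `primeTwo`, seen as a subring. -/
noncomputable abbrev localRingTwo (hα : IsPureCubic 7 α) : Subring K :=
  (hα.placeTwo.valuation K).valuationSubring.toSubring

lemma isResidueMapAtTwo (hα : IsPureCubic 7 α) :
    IsResidueMapAtTwo (R := hα.localRingTwo) (toValuationSubring K hα.placeTwo α)
      (IsLocalRing.residue (hα.placeTwo.valuation K).valuationSubring) where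
  pow_three := Subtype.ext hα.coe_pow_three_eq_seven
  exists_eq_two_mul a ha := by
    have hlt := (residue_eq_zero_iff_valuation_lt_one a).1 ha
    refine ⟨⟨(a : K) / 2, ?_⟩, Subtype.ext (mul_div_cancel₀ (a : K) two_ne_zero).symm⟩
    change hα.placeTwo.valuation K (a / 2) ≤ 1
    rw [map_div₀, hα.valuation_placeTwo_two]
    exact div_le_one_of_le₀ (le_exp_neg_one_of_lt_one hlt) zero_le
  two_eq_zero := by
    simpa only [map_ofNat] using
      (residue_toValuationSubring_eq_zero_iff K hα.placeTwo 2).2 (two_mem_primeTwo α)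
  exists_mul_eq_one a ha := (IsLocalRing.residue_ne_zero_iff_isUnit
    (R := (hα.placeTwo.valuation K).valuationSubring) a).1 ha |>.exists_right_inv
  sq_add_add_one := by
    simpa only [map_add, map_pow, map_one] using
      (residue_toValuationSubring_eq_zero_iff K hα.placeTwo _).2 (sq_add_add_one_mem_primeTwo α)
  residue_cases x := by
    obtain ⟨a, rfl⟩ := residue_toValuationSubring_surjective K hα.placeTwo x
    simpa only [← hα.asIdeal_placeTwo,
      ← residue_toValuationSubring_eq_zero_iff K hα.placeTwo, map_sub, map_one, map_pow,
      sub_eq_zero] using hα.mem_primeTwo_cases a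
  exists_unit x hx := by
    obtain ⟨u, hu, hxu⟩ := exists_valuation_eq_one_of_uniformizer hα.valuation_placeTwo_two hx
    exact ⟨⟨u, hu.le⟩, fun h ↦ ((residue_eq_zero_iff_valuation_lt_one _).1 h).ne hu, hxu⟩

end IsPureCubic

end LocalRing

section Global

open Polynomial

lemma quarticX_eq {K : Type*} [Field K] [CharZero K] {a : K} {x y z : ℤ} (hz : z ≠ 0) :
    quarticX a x y z =
      ((-y / (3 * z) : ℚ) : K) + ((-x / (3 * z) : ℚ) : K) * a + ((1 / 3 : ℚ) : K) * a ^ 2 := by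
  have : (z : K) ≠ 0 := Int.cast_ne_zero.2 hz
  rw [quarticX]
  push_cast
  field_simp
  ring

namespace IsPureCubic

variable {K : Type*} [Field K] [NumberField K] {α : 𝓞 K}

lemma not_isSquare_two_sub (hα : IsPureCubic 7 α) : ¬IsSquare (2 - α : K) := by
  rintro ⟨t, ht⟩
  have hρ := hα.isResidueMapAtTwo
  obtain ⟨u, rfl⟩ := hρ.exists_coe_eq_of_sq_eq (a := 2 - toValuationSubring K hα.placeTwo α)
    (by rw [sq, ← ht]; rfl)
  refine hρ.not_isSquareModFour_two_sub ⟨u, 0, Subtype.ext ?_⟩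
  rw [mul_zero, add_zero, sq]
  exact ht

lemma hasTwoDescent (hα : IsPureCubic 7 α) (φ : K →+* ℝ) : HasTwoDescent (α : K) where
  memDescentGroup _ _ := hα.memDescentGroup_of_descentCurve φ hα.not_isSquare_two_sub
  exists_slope _ _ := hα.isResidueMapAtTwo.exists_isHalvingSlope φ
    fun _ _ ↦ hα.memDescentGroup_of_mul_sq_eq φ hα.not_isSquare_two_sub

lemma norm_quarticX (hα : IsPureCubic 7 α) {x y z : ℤ} (h : IsOnQuartic x y z) (hz : z ≠ 0) :
    Algebra.norm ℚ (quarticX (α : K) x y z) = ((x * y - 4 * z ^ 2) / (3 * z ^ 2)) ^ 2 := by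
  have hz' : (z : ℚ) ≠ 0 := Int.cast_ne_zero.2 hz
  have h' : 7 * (x : ℚ) ^ 3 * z + 3 * x ^ 2 * y ^ 2 - 3 * x * y * z ^ 2 + y ^ 3 * z - z ^ 4 = 0 :=
    mod_cast h
  rw [quarticX_eq hz, hα.coe_norm]
  field_simp
  linear_combination -h'

lemma quarticX_ne_zero (hα : IsPureCubic 7 α) {x y z : ℤ} (hz : z ≠ 0) :
    quarticX (α : K) x y z ≠ 0 := by
  intro h0
  let p : ℚ[X] := C (1 / 3) * X ^ 2 + C (-x / (3 * z) : ℚ) * X + C (-y / (3 * z) : ℚ)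
  have hp : p.natDegree = 2 := natDegree_quadratic (by norm_num)
  have hroot : aeval (α : K) p = 0 := by
    rw [← h0, quarticX_eq hz]
    simp only [p, map_add, map_mul, aeval_C, aeval_X, map_pow, eq_ratCast]
    ring
  have := natDegree_le_of_dvd (minpoly.dvd ℚ (α : K) hroot) fun h ↦ by simp [h] at hp
  rw [hα.natDegree_minpoly, hp] at this
  omega

lemma norm_gen (hα : IsPureCubic 7 α) : Algebra.norm ℚ (α : K) = 7 := by
  simpa using hα.coe_norm 0 1 0

lemma norm_two_sub_gen (hα : IsPureCubic 7 α) : Algebra.norm ℚ (2 - α : K) = 1 := by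
  have h := hα.coe_norm 2 (-1) 0
  norm_num [← sub_eq_add_neg] at h
  exact h

lemma memSquareNormClass_of_isSquare_norm (hα : IsPureCubic 7 α) {ξ : K}
    (hξ : MemDescentGroup (α : K) ξ) (hnorm : IsSquare (Algebra.norm ℚ ξ)) :
    MemSquareNormClass (α : K) ξ := by
  obtain ⟨s, hs, hclass⟩ := hξ
  have hs' : Algebra.norm ℚ s ≠ 0 := Algebra.norm_ne_zero_iff.2 hs
  have hseven : ¬IsSquare (7 * Algebra.norm ℚ s ^ 2) := by
    rintro ⟨n, hn⟩
    have : IsSquare (7 : ℚ) := ⟨n / Algebra.norm ℚ s, by field_simp; linear_combination hn⟩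
    norm_num at this
  refine ⟨s, hs, ?_⟩
  rcases hclass with h | h | h | h
  · exact .inl h
  · rw [h, map_mul, map_pow, hα.norm_gen] at hnorm
    exact absurd hnorm hseven
  · exact .inr h
  · rw [h, map_mul, map_mul, map_pow, hα.norm_gen, hα.norm_two_sub_gen, mul_one] at hnorm
    exact absurd hnorm hseven

lemma memSquareNormClass_quarticX (hα : IsPureCubic 7 α) (φ : K →+* ℝ) {x y z : ℤ}
    (h : IsOnQuartic x y z) (hz : z ≠ 0) : MemSquareNormClass (α : K) (quarticX (α : K) x y z) :=
  hα.memSquareNormClass_of_isSquare_norm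
    ((hα.hasTwoDescent φ).memDescentGroup _ _ (hα.quarticX_ne_zero hz)
      (descentCurve_quartic hα.coe_pow_three_eq_seven h hz))
    (hα.norm_quarticX h hz ▸ IsSquare.sq _)

end IsPureCubic

lemma irreducible_X_pow_sub_C_of_prime {p q : ℕ} (hp : p.Prime) (hq : q.Prime) :
    Irreducible (X ^ q - C (p : ℚ)) := by
  have : Fact p.Prime := ⟨hp⟩
  refine X_pow_sub_C_irreducible_of_prime hq fun b hb ↦ ?_
  have hval := congrArg (padicValRat p) hb
  rw [padicValRat.pow, padicValRat.self hp.one_lt] at hval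
  have : q = 1 := by exact_mod_cast Int.eq_one_of_mul_eq_one_right (by positivity) hval
  exact hq.ne_one this

open IntermediateField in
lemma exists_isPureCubic_adjoin {m : ℤ} (hm : Irreducible (X ^ 3 - C (m : ℚ))) {r : ℝ}
    (hr : r ^ 3 = m) : ∃ (_ : NumberField ℚ⟮r⟯) (α : 𝓞 ℚ⟮r⟯), IsPureCubic m α := by
  have hr_int : IsIntegral ℤ r := ⟨X ^ 3 - C m, monic_X_pow_sub_C m three_ne_zero, by
    rw [eval₂_sub, eval₂_X_pow, eval₂_C, hr, eq_intCast, sub_self]⟩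
  have hminpoly : minpoly ℚ r = X ^ 3 - C (m : ℚ) :=
    (minpoly.eq_of_irreducible_of_monic hm (by simp [hr])
      (monic_X_pow_sub_C _ three_ne_zero)).symm
  have : FiniteDimensional ℚ ℚ⟮r⟯ := adjoin.finiteDimensional hr_int.tower_top
  have : NumberField ℚ⟮r⟯ := {}
  refine ⟨this, ⟨AdjoinSimple.gen ℚ r, ?_⟩, ?_, ?_⟩
  · exact (isIntegral_algHom_iff (ℚ⟮r⟯.val.restrictScalars ℤ) Subtype.val_injective).1 hr_int
  · exact (minpoly_gen ℚ r).trans hminpoly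
  · exact (adjoin.powerBasis hr_int.tower_top).adjoin_gen_eq_top

lemma exists_isPureCubic_seven : ∃ (K : Type) (_ : Field K) (_ : NumberField K) (α : 𝓞 K),
    IsPureCubic 7 α ∧ Nonempty (K →+* ℝ) := by
  have hr : ((7 : ℝ) ^ (3⁻¹ : ℝ)) ^ 3 = (7 : ℤ) :=
    mod_cast Real.rpow_inv_natCast_pow (show (0 : ℝ) ≤ 7 by norm_num) three_ne_zero
  obtain ⟨_, α, hα⟩ := exists_isPureCubic_adjoin
    (mod_cast irreducible_X_pow_sub_C_of_prime Nat.prime_seven Nat.prime_three) hr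
  exact ⟨_, _, _, α, hα, ⟨algebraMap _ ℝ⟩⟩

theorem IsOnQuartic.eq_zero_or_eq {x y z : ℤ} (h : IsOnQuartic x y z)
    (hcop : Int.gcd x (Int.gcd y z : ℤ) = 1) :
    (x = 0 ∧ z = 0) ∨ (y = 0 ∧ z = 0) ∨ (x = 0 ∧ y = z) := by
  obtain ⟨K, _, _, α, hα, ⟨φ⟩⟩ := exists_isPureCubic_seven
  exact hα.isResidueMapAtTwo.eq_zero_or_eq_zero_or_eq_of_isOnQuartic (hα.hasTwoDescent φ) h
    (hα.memSquareNormClass_quarticX φ h) hcop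

end Global

/-- The only rational points on `C₄ : 7x³z + 3x²y² - 3xyz² + y³z - z⁴ = 0` are
`(1:0:0)`, `(0:1:0)`, `(0:1:1)`. -/
theorem rational_points_C4 (x y z : ℤ)
    (hcop : Int.gcd x (Int.gcd y z : ℤ) = 1) (hnz : ¬ (x = 0 ∧ y = 0 ∧ z = 0))
    (h : 7 * x ^ 3 * z + 3 * x ^ 2 * y ^ 2 - 3 * x * y * z ^ 2 + y ^ 3 * z - z ^ 4 = 0) :
    (x, y, z) = (1, 0, 0) ∨ (x, y, z) = (-1, 0, 0) ∨
    (x, y, z) = (0, 1, 0) ∨ (x, y, z) = (0, -1, 0) ∨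
    (x, y, z) = (0, 1, 1) ∨ (x, y, z) = (0, -1, -1) := by
  rcases IsOnQuartic.eq_zero_or_eq h hcop with ⟨rfl, rfl⟩ | ⟨rfl, rfl⟩ | ⟨rfl, rfl⟩
  · have hy : y.natAbs = 1 := by simpa [Int.natAbs_abs] using hcop
    rcases Int.natAbs_eq_iff.1 hy with rfl | rfl <;> simp
  · have hx : x.natAbs = 1 := by simpa using hcop
    rcases Int.natAbs_eq_iff.1 hx with rfl | rfl <;> simp
  · have hy : y.natAbs = 1 := by simpa [Int.natAbs_abs] using hcop
    rcases Int.natAbs_eq_iff.1 hy with rfl | rfl <;> simp
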